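/- Let G be a finite group and p a prime. If T(G) ≥ (√3/p)·|G|, then G is p-solvable. -/

import Mathlib

open CategoryTheory

/-- `χ : G → ℂ` is an irreducible complex character of the group `G`, i.e. the character of
an irreducible (simple) finite-dimensional complex representation of `G`. -/
def IsIrrChar (G : Type) [Group G] (χ : G → ℂ) : Prop :=
  ∃ V : FDRep ℂ G, Simple V ∧ χ = FDRep.character V

/-- `charDegSum G` is `T(G)`, the sum of the degrees `χ(1)` of the irreducible complex
characters of `G`. -/
noncomputable def charDegSum (G : Type) [Group G] : ℝ :=
  ∑ᶠ χ ∈ {χ : G → ℂ | IsIrrChar G χ}, (χ 1).re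

/-- A group `G` is `p`-solvable if it has a subnormal series `⊥ = H₀ ⊴ H₁ ⊴ ⋯ ⊴ Hₙ = ⊤`
in which each factor `H_{i+1}/H_i` is either a `p`-group or has order coprime to `p`. -/
def IsPSolvable (p : ℕ) (G : Type*) [Group G] : Prop :=
  ∃ (n : ℕ) (H : Fin (n + 1) → Subgroup G),
    H 0 = ⊥ ∧ H (Fin.last n) = ⊤ ∧
    (∀ i : Fin n, H i.castSucc ≤ H i.succ) ∧
    (∀ i : Fin n, ∃ _ : ((H i.castSucc).subgroupOf (H i.succ)).Normal,
      IsPGroup p (↥(H i.succ) ⧸ (H i.castSucc).subgroupOf (H i.succ)) ∨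
      (Nat.card (↥(H i.succ) ⧸ (H i.castSucc).subgroupOf (H i.succ))).Coprime p)

/-!
Write `k(G)` for the number of irreducible characters. As `T(G)² ≤ k(G) |G|`, the commuting
probability `k(G) / |G|` is at least `3 / p²`, and this bound passes to subgroups and quotients.
In a minimal counterexample `G` is therefore a nonabelian simple group of order divisible by `p`
all of whose proper subgroups are `p`-solvable.

Since `k(G)` is large, some faithful character has degree below `p - 1`. By an argument of Itô, it
makes the Sylow `p`-subgroups of all element centralizers normal, so that distinct Sylow
`p`-subgroups of `G` intersect trivially; comparing `k(G)` with the sum of squares of the degrees,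
they have order `p`. Let `g` generate one of them. Its centralizer is `⟨g⟩ × K` with `K` a
`p'`-group, of index `e ≥ 2` in its normalizer. Brauer's exceptional characters bound the number
of characters of degree below `p - 1`, which yields `(e + 1)² ≤ p`; they also show that a
character `χ ≠ 1` with `χ 1 < p - 1 - e` has sum `0` over `⟨g⟩` and degree divisible by `e`.
Counting characters once more, the least such degree has square at most `p - 1 - e`. Then the
nontrivial constituents of `χ * conj χ` also have sum `0` over `⟨g⟩`, so `|χ|²` has mean value `1`
on `⟨g⟩`. As `⟨g⟩` is abelian, that mean value is at least `χ 1`, a contradiction.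
-/

section CharacterDegrees

open Finset Representation
open scoped ComplexConjugate MonoidAlgebra

attribute [local instance] Fintype.ofFinite

/-- Takes precedence over the subtype instance, so that sums over a subgroup use the same instance
as sums over any other finite group. -/
noncomputable local instance (priority := 2000) fintypeSubgroup {G : Type*} [Group G] [Finite G]
    (H : Subgroup G) : Fintype H := Fintype.ofFinite H

section Characters

/-- `χ : G → ℂ` is the character of some finite-dimensional complex representation of `G`. -/
def IsChar (G : Type) [Group G] (χ : G → ℂ) : Prop :=
  ∃ (V : Type) (_ : AddCommGroup V) (_ : Module ℂ V) (_ : FiniteDimensional ℂ V)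
    (ρ : Representation ℂ G V), χ = ρ.character

variable {G : Type} [Group G] {χ ψ : G → ℂ}

lemma isChar_character {V : Type} [AddCommGroup V] [Module ℂ V]
    [FiniteDimensional ℂ V] (ρ : Representation ℂ G V) : IsChar G ρ.character :=
  ⟨V, _, _, inferInstance, ρ, rfl⟩

lemma IsIrrChar.isChar (h : IsIrrChar G χ) : IsChar G χ := by
  obtain ⟨V, _, rfl⟩ := h
  exact isChar_character V.ρ

namespace IsChar

lemma apply_conj (h : IsChar G χ) (x y : G) : χ (x * y * x⁻¹) = χ y := by
  obtain ⟨V, _, _, _, ρ, rfl⟩ := h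
  exact char_conj ρ y x

protected lemma mul (h : IsChar G χ) (h' : IsChar G ψ) : IsChar G (fun g => χ g * ψ g) := by
  obtain ⟨V, _, _, _, ρ, rfl⟩ := h
  obtain ⟨W, _, _, _, σ, rfl⟩ := h'
  have := isChar_character (tprod ρ σ)
  rwa [char_tensor] at this

lemma comp {H : Type} [Group H] (h : IsChar G χ) (f : H →* G) : IsChar H (fun x => χ (f x)) := by
  obtain ⟨V, _, _, _, ρ, rfl⟩ := h
  exact isChar_character (MonoidHom.comp ρ f)

lemma exists_apply_one_eq_natCast (h : IsChar G χ) : ∃ n : ℕ, χ 1 = n := by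
  obtain ⟨V, _, _, _, ρ, rfl⟩ := h
  exact ⟨_, char_one ρ⟩

end IsChar

lemma isChar_linear (l : G →* ℂˣ) : IsChar G (fun x => (l x : ℂ)) := by
  convert isChar_character
    ((Algebra.lmul ℂ ℂ).toRingHom.toMonoidHom.comp ((Units.coeHom ℂ).comp l)) using 1
  ext g
  have hmul : LinearMap.mulLeft ℂ (l g : ℂ) = (l g : ℂ) • LinearMap.id := by ext; simp
  change _ = LinearMap.trace ℂ ℂ (LinearMap.mulLeft ℂ (l g : ℂ))
  simp [hmul]

section Hermitian

open scoped Matrix ComplexOrder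

-- Averaging the standard hermitian form over `G` makes `M g⁻¹` adjoint to `M g`.
lemma trace_map_inv_eq_conj {n : Type*} [Fintype n] [DecidableEq n] [Finite G]
    (M : G →* Matrix n n ℂ) (g : G) :
    (M g⁻¹).trace = conj (M g).trace := by
  classical
  set H : Matrix n n ℂ := ∑ x, (M x)ᴴ * M x with hH
  have hpos : H.PosDef := by
    rw [hH, ← add_sum_erase _ _ (mem_univ 1)]
    refine Matrix.PosDef.add_posSemidef (by simpa using Matrix.PosDef.one) ?_
    exact Matrix.posSemidef_sum _ fun x _ => Matrix.posSemidef_conjTranspose_mul_self _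
  have hdet : IsUnit H.det := (Matrix.isUnit_iff_isUnit_det _).1 hpos.isUnit
  have hadj : H * M g⁻¹ = (M g)ᴴ * H := by
    simp only [hH, sum_mul, mul_sum]
    refine Fintype.sum_equiv (Equiv.mulRight g⁻¹) _ _ fun x => ?_
    rw [mul_assoc, ← map_mul, ← mul_assoc, ← Matrix.conjTranspose_mul, ← map_mul]
    simp
  calc (M g⁻¹).trace = (H⁻¹ * (H * M g⁻¹)).trace := by
        rw [Matrix.nonsing_inv_mul_cancel_left _ _ hdet]
    _ = ((M g)ᴴ).trace := by
        rw [hadj, Matrix.trace_mul_comm, Matrix.mul_nonsing_inv_cancel_right _ _ hdet]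
    _ = conj (M g).trace := Matrix.trace_conjTranspose _

end Hermitian

lemma IsChar.apply_inv [Finite G] (h : IsChar G χ) (g : G) : χ g⁻¹ = conj (χ g) := by
  obtain ⟨V, _, _, _, ρ, rfl⟩ := h
  let b := Module.finBasis ℂ V
  have htr : ∀ x, ρ.character x = (LinearMap.toMatrixAlgEquiv b (ρ x)).trace := fun x =>
    LinearMap.trace_eq_matrix_trace ℂ b _
  rw [htr, htr]
  exact trace_map_inv_eq_conj ((MonoidHomClass.toMonoidHom (LinearMap.toMatrixAlgEquiv b)).comp ρ) g

protected lemma IsChar.conj [Finite G] (h : IsChar G χ) : IsChar G (fun g => conj (χ g)) := by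
  simp_rw [← h.apply_inv]
  obtain ⟨V, _, _, _, ρ, rfl⟩ := h
  convert isChar_character ρ.dual using 1
  ext g
  rw [char_dual]

/-- Functions that are constant on conjugacy classes. -/
def IsClassFun (f : G → ℂ) : Prop := ∀ x y, f (x * y * x⁻¹) = f y

lemma IsChar.isClassFun (h : IsChar G χ) : IsClassFun χ := h.apply_conj

namespace IsClassFun

variable {f f' : G → ℂ}

protected lemma sub (h : IsClassFun f) (h' : IsClassFun f') : IsClassFun (f - f') :=
  fun x y => by simp [h x y, h' x y]

protected lemma smul (c : ℂ) (h : IsClassFun f) : IsClassFun (c • f) := fun x y => by simp [h x y]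

protected lemma sum {ι : Type*} {s : Finset ι} {F : ι → G → ℂ} (h : ∀ i ∈ s, IsClassFun (F i)) :
    IsClassFun (∑ i ∈ s, F i) := fun x y => by
  simp only [Finset.sum_apply]
  exact sum_congr rfl fun i hi => h i hi x y

end IsClassFun

/-- The normalised hermitian inner product `|X|⁻¹ ∑ f x * conj (f' x)`
of functions on a finite set. -/
noncomputable def charInner {X : Type*} [Finite X] (f f' : X → ℂ) : ℂ :=
  (Nat.card X : ℂ)⁻¹ * ∑ x, f x * conj (f' x)

section CharInner

variable {X : Type*} [Finite X]

lemma natCast_card_ne_zero [Nonempty X] : (Nat.card X : ℂ) ≠ 0 := by simp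

lemma card_mul_charInner [Nonempty X] (f f' : X → ℂ) :
    Nat.card X * charInner f f' = ∑ x, f x * conj (f' x) :=
  mul_inv_cancel_left₀ natCast_card_ne_zero _

lemma charInner_sub_left (f f' h : X → ℂ) :
    charInner (f - f') h = charInner f h - charInner f' h := by
  simp [charInner, sub_mul, sum_sub_distrib, mul_sub]

lemma conj_charInner (f h : X → ℂ) : conj (charInner f h) = charInner h f := by
  simp [charInner, mul_comm]

lemma charInner_sub_right (f f' h : X → ℂ) :
    charInner h (f - f') = charInner h f - charInner h f' := by
  simp [charInner, sum_sub_distrib, mul_sub]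

lemma charInner_smul_left (c : ℂ) (f h : X → ℂ) :
    charInner (c • f) h = c * charInner f h := by
  simp only [charInner, Pi.smul_apply, smul_eq_mul, mul_sum]
  exact sum_congr rfl fun _ _ => by ring

lemma charInner_smul_right (c : ℂ) (f h : X → ℂ) :
    charInner h (c • f) = conj c * charInner h f := by
  rw [← conj_charInner, charInner_smul_left, map_mul, conj_charInner]

lemma charInner_sum_left {ι : Type*} (s : Finset ι) (F : ι → X → ℂ) (h : X → ℂ) :
    charInner (∑ i ∈ s, F i) h = ∑ i ∈ s, charInner (F i) h := by
  simp only [charInner, Finset.sum_apply, sum_mul]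
  rw [sum_comm, mul_sum]

lemma charInner_sum_right {ι : Type*} (s : Finset ι) (F : ι → X → ℂ) (h : X → ℂ) :
    charInner h (∑ i ∈ s, F i) = ∑ i ∈ s, charInner h (F i) := by
  rw [← conj_charInner, charInner_sum_left, map_sum]
  simp only [conj_charInner]

lemma charInner_self (f : X → ℂ) :
    charInner f f = (((Nat.card X : ℝ)⁻¹ * ∑ x, ‖f x‖ ^ 2 : ℝ) : ℂ) := by
  simp [charInner, Complex.mul_conj, Complex.normSq_eq_norm_sq]

end CharInner

section Orthogonality

variable [Finite G]

lemma IsChar.exists_charInner_eq_natCast (h : IsChar G χ) (h' : IsChar G ψ) :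
    ∃ n : ℕ, charInner χ ψ = n := by
  simp_rw [charInner, ← h'.apply_inv]
  obtain ⟨V, _, _, _, ρ, rfl⟩ := h
  obtain ⟨W, _, _, _, σ, rfl⟩ := h'
  let _ := invertibleOfNonzero (natCast_card_ne_zero (X := G))
  exact ⟨_, card_inv_mul_sum_char_mul_char_eq_finrank σ ρ⟩

lemma IsChar.isIrrChar_iff (h : IsChar G χ) : IsIrrChar G χ ↔ charInner χ χ = 1 := by
  rw [charInner, inv_mul_eq_iff_eq_mul₀ natCast_card_ne_zero, mul_one]
  simp_rw [← h.apply_inv]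
  constructor
  · rintro ⟨V, hV, rfl⟩
    exact (FDRep.simple_iff_char_is_norm_one V).1 hV
  · obtain ⟨V, _, _, _, ρ, rfl⟩ := h
    exact fun hn => ⟨FDRep.of ρ, (FDRep.simple_iff_char_is_norm_one (FDRep.of ρ)).2 hn, rfl⟩

lemma IsIrrChar.charInner_self (h : IsIrrChar G χ) : charInner χ χ = 1 :=
  h.isChar.isIrrChar_iff.1 h

lemma IsIrrChar.charInner_eq_zero (h : IsIrrChar G χ) (h' : IsIrrChar G ψ) (hne : χ ≠ ψ) :
    charInner χ ψ = 0 := by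
  simp_rw [charInner, ← h'.isChar.apply_inv]
  obtain ⟨V, hV, rfl⟩ := h
  obtain ⟨W, hW, rfl⟩ := h'
  let _ := invertibleOfNonzero (natCast_card_ne_zero (X := G))
  have := FDRep.char_orthonormal V W
  rw [if_neg (fun ⟨i⟩ => hne (FDRep.char_iso i))] at this
  simpa using this

end Orthogonality

section Completeness

variable [Finite G] {V : Type} [AddCommGroup V] [Module ℂ V]
  {f : G → ℂ}

lemma IsClassFun.sum_smul_map_inv_comm (hf : IsClassFun f) (ρ : Representation ℂ G V) (x : G) :
    (∑ g, f g • ρ g⁻¹) ∘ₗ ρ x = ρ x ∘ₗ ∑ g, f g • ρ g⁻¹ := by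
  rw [← Module.End.mul_eq_comp, ← Module.End.mul_eq_comp, sum_mul, mul_sum]
  refine Fintype.sum_equiv (MulAut.conj x⁻¹).toEquiv _ _ fun g => ?_
  have hg : f ((MulAut.conj x⁻¹).toEquiv g) = f g := hf x⁻¹ g
  rw [hg, smul_mul_assoc, mul_smul_comm, ← map_mul, ← map_mul]
  simp [mul_assoc]

variable [FiniteDimensional ℂ V]

lemma isIrrChar_character (ρ : Representation ℂ G V) [IsIrreducible ρ] :
    IsIrrChar G ρ.character := by
  refine (isChar_character ρ).isIrrChar_iff.2 ?_
  simp_rw [charInner, ← (isChar_character ρ).apply_inv]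
  let _ := invertibleOfNonzero (natCast_card_ne_zero (X := G))
  have := Representation.char_orthonormal ρ ρ
  rw [if_pos ⟨Representation.Equiv.refl ρ⟩] at this
  simpa using this

/-- Schur's lemma, with irreducibility expressed through the character. -/
lemma exists_eq_smul_id_of_commute (ρ : Representation ℂ G V) (hρ : IsIrrChar G ρ.character)
    (T : V →ₗ[ℂ] V) (hT : ∀ g, T ∘ₗ ρ g = ρ g ∘ₗ T) : ∃ c : ℂ, T = c • LinearMap.id := by
  have hfin : Module.finrank ℂ (IntertwiningMap ρ ρ) = 1 := by
    let _ := invertibleOfNonzero (natCast_card_ne_zero (X := G))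
    have h1 := hρ.charInner_self
    simp_rw [charInner, ← hρ.isChar.apply_inv] at h1
    have h2 := card_inv_mul_sum_char_mul_char_eq_finrank ρ ρ
    exact_mod_cast h2.symm.trans h1
  have hid : IntertwiningMap.id ρ ≠ 0 := by
    intro h0
    have hV (v : V) : v = 0 := by simpa using congrArg (fun f => f v) h0
    have : Subsingleton (IntertwiningMap ρ ρ) := ⟨fun a b => by ext v; simp [hV v]⟩
    simp [Module.finrank_zero_of_subsingleton] at hfin
  obtain ⟨c, hc⟩ := (finrank_eq_one_iff_of_nonzero' _ hid).mp hfin ⟨T, hT⟩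
  exact ⟨c, (congrArg (fun f => f.toLinearMap) hc).symm⟩

namespace IsClassFun

lemma sum_smul_map_inv_eq_zero (hf : IsClassFun f) (h : ∀ χ, IsIrrChar G χ → charInner f χ = 0)
    (ρ : Representation ℂ G V) [IsIrreducible ρ] : ∑ g, f g • ρ g⁻¹ = 0 := by
  have hirr := isIrrChar_character ρ
  obtain ⟨c, hc⟩ := exists_eq_smul_id_of_commute ρ hirr _ (hf.sum_smul_map_inv_comm ρ)
  have htrace : c * Module.finrank ℂ V = 0 :=
    calc c * Module.finrank ℂ V = LinearMap.trace ℂ V (∑ g, f g • ρ g⁻¹) := by simp [hc]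
      _ = ∑ g, f g * ρ.character g⁻¹ := by simp [character]
      _ = Nat.card G * charInner f ρ.character := by
        simp_rw [card_mul_charInner, hirr.isChar.apply_inv]
      _ = 0 := by rw [h _ hirr, mul_zero]
  rcases mul_eq_zero.1 htrace with h0 | h0
  · rw [hc, h0, zero_smul]
  · have : Subsingleton V := Module.finrank_zero_iff.1 (by exact_mod_cast h0)
    exact Subsingleton.elim _ _

lemma sum_single_inv_smul_eq_zero (hf : IsClassFun f)
    (h : ∀ χ, IsIrrChar G χ → charInner f χ = 0) {M : Type} [AddCommGroup M] [Module ℂ[G] M]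
    [Module ℂ M] [IsScalarTower ℂ ℂ[G] M] [IsSimpleModule ℂ[G] M] (m : M) :
    (∑ g, MonoidAlgebra.single g⁻¹ (f g) : ℂ[G]) • m = 0 := by
  let σ := ofModule' (k := ℂ) (G := G) M
  have hal : σ.asAlgebraHom = Algebra.lsmul ℂ ℂ M := by simp [σ, asAlgebraHom, ofModule']
  have : IsIrreducible σ := by
    rw [irreducible_iff_isSimpleModule_asModule]
    let e : σ.asModule ≃ₗ[ℂ[G]] M :=
      { σ.asModuleEquiv with
        map_smul' := fun r x => (asModuleEquiv_map_smul σ r x).trans (by rw [hal]; rfl) }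
    exact IsSimpleModule.congr e
  have : FiniteDimensional ℂ M := Module.Finite.trans ℂ[G] _
  calc (∑ g, MonoidAlgebra.single g⁻¹ (f g) : ℂ[G]) • m
      = σ.asAlgebraHom (∑ g, MonoidAlgebra.single g⁻¹ (f g)) m := by rw [hal]; rfl
    _ = (∑ g, f g • σ g⁻¹) m := by simp only [map_sum, asAlgebraHom_single]
    _ = 0 := by rw [hf.sum_smul_map_inv_eq_zero h σ, LinearMap.zero_apply]

-- The element `∑ f(g) g⁻¹` of `ℂ[G]` kills all simple left ideals, hence the whole of `ℂ[G]`.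
theorem eq_zero_of_charInner_eq_zero (hf : IsClassFun f)
    (h : ∀ χ, IsIrrChar G χ → charInner f χ = 0) : f = 0 := by
  classical
  let a : ℂ[G] := ∑ g, MonoidAlgebra.single g⁻¹ (f g)
  have hsimple (S : Submodule ℂ[G] ℂ[G]) (_ : IsSimpleModule ℂ[G] S) (s) (hs : s ∈ S) :
      a * s = 0 :=
    congrArg Subtype.val (hf.sum_single_inv_smul_eq_zero h (⟨s, hs⟩ : S))
  have hall (s : ℂ[G]) : a * s = 0 := by
    have hs : s ∈ sSup {m : Submodule ℂ[G] ℂ[G] | IsSimpleModule ℂ[G] m} := by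
      rw [IsSemisimpleModule.sSup_simples_eq_top]; trivial
    rw [sSup_eq_iSup'] at hs
    induction hs using Submodule.iSup_induction' with
    | mem S x hx => exact hsimple S S.2 x hx
    | zero => exact mul_zero a
    | add x y _ _ hx hy => rw [mul_add, hx, hy, add_zero]
  ext x
  have := congrArg (fun u => u.coeff x⁻¹) ((mul_one a).symm.trans (hall 1))
  simpa [a, Finsupp.finsetSum_apply, Finsupp.single_apply] using this

end IsClassFun

end Completeness

end Characters

section IrreducibleCharacters

/-- The type of irreducible complex characters of `G`. -/
def Irr (G : Type) [Group G] : Type := {χ : G → ℂ // IsIrrChar G χ}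

namespace Irr

variable {G : Type} [Group G]

instance : FunLike (Irr G) G ℂ where
  coe := Subtype.val
  coe_injective := Subtype.val_injective

instance : CanLift (G → ℂ) (Irr G) (⇑) (IsIrrChar G) where
  prf χ hχ := ⟨⟨χ, hχ⟩, rfl⟩

lemma isIrrChar (χ : Irr G) : IsIrrChar G χ := χ.2

lemma isChar (χ : Irr G) : IsChar G χ := χ.2.isChar

lemma apply_conj (χ : Irr G) (x y : G) : χ (x * y * x⁻¹) = χ y := χ.isChar.apply_conj x y

/-- The degree `χ 1` as a natural number. -/
noncomputable def deg (χ : Irr G) : ℕ := χ.isChar.exists_apply_one_eq_natCast.choose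

lemma apply_one (χ : Irr G) : χ 1 = χ.deg := χ.isChar.exists_apply_one_eq_natCast.choose_spec

lemma isClassFun_card_conj_eq (y : G) :
    IsClassFun fun g : G => (Nat.card {h : G // h * g * h⁻¹ = y} : ℂ) := by
  intro u g
  refine congrArg Nat.cast (Nat.card_congr ((Equiv.mulRight u).subtypeEquiv fun h => ?_))
  simp [mul_assoc]

variable [Finite G]

lemma charInner_eq [DecidableEq (Irr G)] (χ ψ : Irr G) :
    charInner χ ψ = if χ = ψ then 1 else 0 := by
  split_ifs with h
  · subst h
    exact χ.2.charInner_self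
  · exact χ.2.charInner_eq_zero ψ.2 fun h' => h (DFunLike.coe_injective h')

lemma linearIndependent : LinearIndependent ℂ (fun χ : Irr G => (χ : G → ℂ)) := by
  rw [linearIndependent_iff']
  intro s c hc χ hχ
  have := congrArg (fun f => charInner f χ) hc
  simp only [charInner_sum_left, charInner_smul_left, charInner_eq] at this
  simpa [hχ, charInner] using this

instance : Finite (Irr G) := linearIndependent.finite

lemma deg_pos (χ : Irr G) : 0 < χ.deg := by
  refine Nat.pos_of_ne_zero fun h0 => ?_
  obtain ⟨V, _, _, _, ρ, hρ⟩ := χ.isChar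
  have hV : (Module.finrank ℂ V : ℂ) = 0 := by
    rw [← char_one ρ, ← hρ, χ.apply_one, h0, Nat.cast_zero]
  have : Subsingleton V := Module.finrank_zero_iff.1 (by exact_mod_cast hV)
  have hzero : (χ : G → ℂ) = 0 := by
    ext g
    rw [hρ, character, Subsingleton.elim (ρ g) 0, map_zero, Pi.zero_apply]
  have := χ.2.charInner_self
  change charInner (χ : G → ℂ) χ = 1 at this
  simp [hzero, charInner] at this

end Irr

variable {G : Type} [Group G] [Finite G]

namespace IsClassFun

variable {f f' : G → ℂ}

lemma eq_sum_charInner_smul (h : IsClassFun f) : f = ∑ χ : Irr G, charInner f χ • ⇑χ := by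
  rw [← sub_eq_zero]
  refine (h.sub (.sum fun χ _ => χ.isChar.isClassFun.smul _)).eq_zero_of_charInner_eq_zero ?_
  intro ψ hψ
  lift ψ to Irr G using hψ
  simp [charInner_sub_left, charInner_sum_left, charInner_smul_left, Irr.charInner_eq]

lemma apply_eq_sum_charInner_mul (h : IsClassFun f) (x : G) :
    f x = ∑ χ : Irr G, charInner f χ * χ x := by
  conv_lhs => rw [h.eq_sum_charInner_smul]
  simp

lemma parseval (h : IsClassFun f) :
    charInner f f' = ∑ χ : Irr G, charInner f χ * conj (charInner f' χ) := by
  conv_lhs => rw [h.eq_sum_charInner_smul]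
  simp only [charInner_sum_left, charInner_smul_left, conj_charInner]

end IsClassFun

namespace Irr

lemma charInner_card_conj_eq (χ : Irr G) (y : G) :
    charInner (fun g : G => (Nat.card {h : G // h * g * h⁻¹ = y} : ℂ)) χ = conj (χ y) := by
  classical
  have hsum (h : G) : ∑ g, (if h * g * h⁻¹ = y then 1 else 0) * conj (χ g) = conj (χ y) := by
    rw [sum_eq_single (h⁻¹ * y * h)]
    · simpa [mul_assoc] using congrArg conj (χ.apply_conj h⁻¹ y)
    · rintro g - hg
      rw [if_neg (by rintro rfl; simp [mul_assoc] at hg), zero_mul]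
    · simp
  rw [charInner, inv_mul_eq_iff_eq_mul₀ natCast_card_ne_zero]
  simp only [Nat.card_eq_fintype_card, Fintype.card_subtype, card_filter, Nat.cast_sum, sum_mul,
    Nat.cast_ite, Nat.cast_one, Nat.cast_zero]
  rw [sum_comm, sum_congr rfl fun h _ => hsum h]
  simp

theorem sum_apply_mul_conj_apply (x y : G) :
    ∑ χ : Irr G, χ x * conj (χ y) = Nat.card {h : G // h * x * h⁻¹ = y} := by
  rw [(isClassFun_card_conj_eq y).apply_eq_sum_charInner_mul x]
  exact sum_congr rfl fun χ _ => by rw [charInner_card_conj_eq, mul_comm]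

theorem sum_deg_sq : ∑ χ : Irr G, χ.deg ^ 2 = Nat.card G := by
  have h : ∑ χ : Irr G, (χ.deg : ℂ) ^ 2 = Nat.card G := by
    simpa [apply_one, ← sq] using sum_apply_mul_conj_apply (1 : G) 1
  exact_mod_cast h

theorem card_eq_card_conjClasses : Nat.card (Irr G) = Nat.card (ConjClasses G) := by
  have hcomm : ∑ x : G, Nat.card {h : G // h * x * h⁻¹ = x} =
      Nat.card {q : G × G // Commute q.1 q.2} := by
    rw [← Nat.card_sigma, Nat.card_congr (Equiv.subtypeProdEquivSigmaSubtype _)]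
    exact Nat.card_congr (.sigmaCongrRight fun x => .subtypeEquivRight fun h => by
      rw [mul_inv_eq_iff_eq_mul, eq_comm]; rfl)
  have hcount : (Nat.card (Irr G) * Nat.card G : ℂ) = Nat.card (ConjClasses G) * Nat.card G :=
    calc (Nat.card (Irr G) * Nat.card G : ℂ) = ∑ χ : Irr G, Nat.card G * charInner χ χ := by
          simp [charInner_eq]
      _ = ∑ x : G, ∑ χ : Irr G, χ x * conj (χ x) := by
          simp_rw [card_mul_charInner]; exact sum_comm
      _ = Nat.card (ConjClasses G) * Nat.card G := by
          simp_rw [sum_apply_mul_conj_apply]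
          exact_mod_cast hcomm.trans (card_comm_eq_card_conjClasses_mul_card G)
  exact_mod_cast mul_right_cancel₀ natCast_card_ne_zero hcount

end Irr

lemma charDegSum_eq_sum_deg : charDegSum G = ∑ χ : Irr G, (χ.deg : ℝ) := by
  rw [charDegSum, ← finsum_set_coe_eq_finsum_mem, ← finsum_eq_sum_of_fintype]
  exact finsum_congr fun χ : Irr G =>
    (congrArg Complex.re χ.apply_one).trans (Complex.natCast_re _)

theorem charDegSum_sq_le : charDegSum G ^ 2 ≤ Nat.card (ConjClasses G) * Nat.card G := by
  have h := sum_mul_sq_le_sq_mul_sq (univ : Finset (Irr G)) (fun _ => (1 : ℝ))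
    (fun χ => (χ.deg : ℝ))
  have hsq : ∑ χ : Irr G, (χ.deg : ℝ) ^ 2 = Nat.card G := by exact_mod_cast Irr.sum_deg_sq
  rw [charDegSum_eq_sum_deg, ← Irr.card_eq_card_conjClasses]
  simpa [hsq, ← Nat.card_eq_fintype_card] using h

/-- The multiplicity of the irreducible character `χ` in `θ`; meaningful for characters `θ`, where
the inner product is a natural number. -/
noncomputable def mult (θ : G → ℂ) (χ : Irr G) : ℕ := ⌊(charInner θ χ).re⌋₊

namespace IsChar

variable {θ η : G → ℂ}

lemma charInner_eq_mult (h : IsChar G θ) (χ : Irr G) : charInner θ χ = mult θ χ := by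
  obtain ⟨n, hn⟩ := h.exists_charInner_eq_natCast χ.isChar
  simp [mult, hn]

lemma apply_eq_sum_mult (h : IsChar G θ) (x : G) : θ x = ∑ χ : Irr G, (mult θ χ : ℂ) * χ x := by
  simp only [← h.charInner_eq_mult]
  exact h.isClassFun.apply_eq_sum_charInner_mul x

lemma charInner_eq_sum_mult (h : IsChar G θ) (h' : IsChar G η) :
    charInner θ η = ((∑ χ : Irr G, mult θ χ * mult η χ : ℕ) : ℂ) := by
  rw [h.isClassFun.parseval]
  simp [h.charInner_eq_mult, h'.charInner_eq_mult]

lemma eq_sum_mult_mul_deg (h : IsChar G θ) {n : ℕ} (hn : θ 1 = n) :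
    n = ∑ χ : Irr G, mult θ χ * χ.deg := by
  have := h.apply_eq_sum_mult 1
  simp only [hn, Irr.apply_one] at this
  exact_mod_cast this

end IsChar

end IrreducibleCharacters

section CentralCharacters

variable {G : Type} [Group G] [Finite G]

section Scalars

variable {V : Type} [AddCommGroup V] [Module ℂ V] (ρ : Representation ℂ G V) {g : G} {c : ℂ}

omit [Finite G] in
lemma character_mul_of_eq_smul_id (hg : ρ g = c • LinearMap.id) (x : G) :
    ρ.character (g * x) = c * ρ.character x := by
  simp [character, hg, Module.End.mul_eq_comp]

omit [Finite G] in
lemma pow_finrank_eq_one_of_mem_commutator (hg : ρ g = c • LinearMap.id) (h : g ∈ commutator G) :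
    c ^ Module.finrank ℂ V = 1 := by
  let d : G →* ℂ := (LinearMap.det : (V →ₗ[ℂ] V) →* ℂ).comp ρ
  have hd : d.toHomUnits g = 1 := Abelianization.commutator_subset_ker _ h
  have hdet : LinearMap.det (ρ g) = 1 := congrArg Units.val hd
  rwa [hg, LinearMap.det_smul, LinearMap.det_id, mul_one] at hdet

end Scalars

/-- The restriction of a function on `G` to the subgroup `B`. -/
def res {G : Type} [Group G] (B : Subgroup G) (f : G → ℂ) : B → ℂ := fun x => f x

omit [Finite G] in
lemma IsChar.restrict {f : G → ℂ} (h : IsChar G f) (B : Subgroup G) : IsChar B (res B f) :=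
  h.comp B.subtype

lemma Irr.apply_one_ne_zero (χ : Irr G) : χ 1 ≠ 0 := by
  rw [χ.apply_one]
  exact_mod_cast χ.deg_pos.ne'

lemma IsChar.apply_mul_of_res_eq {χ : G → ℂ} (h : IsChar G χ) {B : Subgroup G} {ψ : Irr B}
    (hψ : res B χ = ψ) {g : G} (hg : ∀ b ∈ B, g * b = b * g) (x : G) :
    χ (g * x) = χ g / χ 1 * χ x := by
  obtain ⟨V, _, _, _, ρ, rfl⟩ := h
  let σ : Representation ℂ B V := MonoidHom.comp ρ B.subtype
  have hσψ : σ.character = ψ := hψ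
  have hσ : IsIrrChar B σ.character := hσψ ▸ ψ.isIrrChar
  have h1 : ρ.character 1 ≠ 0 := (congrFun hσψ 1).trans_ne ψ.apply_one_ne_zero
  obtain ⟨c, hc⟩ := exists_eq_smul_id_of_commute σ hσ (ρ g) fun b => by
    change ρ g * ρ b = ρ b * ρ g
    rw [← map_mul, ← map_mul, hg _ b.2]
  have hcg : ρ.character g = c * ρ.character 1 := by
    simpa using character_mul_of_eq_smul_id ρ hc 1
  rw [character_mul_of_eq_smul_id ρ hc, hcg, mul_div_cancel_right₀ _ h1]

namespace Irr

/-- The scalar `χ z / χ 1` by which a central element `z` acts in a representation affording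
`χ`. -/
noncomputable def centralChar {G : Type} [Group G] (χ : Irr G) (z : G) : ℂ := χ z / χ 1

variable (χ : Irr G) {z : G}

lemma exists_eq_centralChar_smul_id (hz : z ∈ Subgroup.center G) :
    ∃ (V : Type) (_ : AddCommGroup V) (_ : Module ℂ V) (_ : FiniteDimensional ℂ V)
      (ρ : Representation ℂ G V), χ = ρ.character ∧ ρ z = χ.centralChar z • LinearMap.id := by
  obtain ⟨V, _, _, _, ρ, hρ⟩ := χ.isChar
  obtain ⟨c, hc⟩ := exists_eq_smul_id_of_commute ρ (hρ ▸ χ.2) (ρ z) fun g => by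
    rw [← Module.End.mul_eq_comp, ← Module.End.mul_eq_comp, ← map_mul, ← map_mul,
      Subgroup.mem_center_iff.1 hz]
  have hcz : χ z = c * χ 1 := by
    rw [hρ]
    simpa using character_mul_of_eq_smul_id ρ hc 1
  refine ⟨V, _, _, inferInstance, ρ, hρ, ?_⟩
  rw [hc, centralChar, hcz, mul_div_cancel_right₀ _ χ.apply_one_ne_zero]

lemma apply_mul_of_mem_center (hz : z ∈ Subgroup.center G) (x : G) :
    χ (z * x) = χ.centralChar z * χ x := by
  obtain ⟨V, _, _, _, ρ, hρ, hc⟩ := χ.exists_eq_centralChar_smul_id hz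
  rw [hρ, character_mul_of_eq_smul_id ρ hc]

lemma apply_of_mem_center (hz : z ∈ Subgroup.center G) : χ z = χ.centralChar z * χ.deg := by
  simpa [apply_one] using χ.apply_mul_of_mem_center hz 1

lemma centralChar_pow (hz : z ∈ Subgroup.center G) (n : ℕ) :
    χ.centralChar (z ^ n) = χ.centralChar z ^ n := by
  rw [centralChar, div_eq_iff χ.apply_one_ne_zero]
  induction n with
  | zero => simp
  | succ n ih => rw [pow_succ', χ.apply_mul_of_mem_center hz, ih, pow_succ']; ring

lemma centralChar_pow_eq_one (hz : z ∈ Subgroup.center G) {n : ℕ} (hn : z ^ n = 1) :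
    χ.centralChar z ^ n = 1 := by
  rw [← χ.centralChar_pow hz, hn, centralChar, div_self χ.apply_one_ne_zero]

lemma centralChar_ne_zero (hz : z ∈ Subgroup.center G) : χ.centralChar z ≠ 0 := by
  intro h
  have := χ.centralChar_pow_eq_one hz (pow_card_eq_one' (x := z))
  rw [h, zero_pow Nat.card_pos.ne'] at this
  exact zero_ne_one this

lemma centralChar_pow_deg_eq_one (hz : z ∈ Subgroup.center G) (hc : z ∈ commutator G) :
    χ.centralChar z ^ χ.deg = 1 := by
  obtain ⟨V, _, _, _, ρ, hρ, hzc⟩ := χ.exists_eq_centralChar_smul_id hz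
  have hdeg : χ.deg = Module.finrank ℂ V := by
    have := χ.apply_one
    rw [hρ, char_one] at this
    exact_mod_cast this.symm
  rw [hdeg, pow_finrank_eq_one_of_mem_commutator ρ hzc hc]

end Irr

lemma isIrrChar_one : IsIrrChar G (fun _ => 1) := by
  have h : IsChar G fun _ => 1 := by simpa using isChar_linear (1 : G →* ℂˣ)
  exact h.isIrrChar_iff.2 (by simp [charInner])

noncomputable instance : One (Irr G) := ⟨⟨fun _ => 1, isIrrChar_one⟩⟩

namespace Irr

@[simp] lemma one_apply (x : G) : (1 : Irr G) x = 1 := rfl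

lemma deg_one : (1 : Irr G).deg = 1 := by
  have := (1 : Irr G).apply_one
  rw [one_apply] at this
  exact_mod_cast this.symm

lemma eq_one_of_forall_apply_eq (χ : Irr G) (h : ∀ x, χ x = χ 1) : χ = 1 := by
  have hnorm : (χ.deg : ℂ) * χ.deg = 1 := by
    have hχ : charInner (χ : G → ℂ) χ = 1 := χ.2.charInner_self
    rw [charInner, inv_mul_eq_iff_eq_mul₀ natCast_card_ne_zero] at hχ
    simpa [h, apply_one] using hχ
  have hdeg : χ.deg = 1 := Nat.eq_one_of_mul_eq_one_left (by exact_mod_cast hnorm)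
  refine DFunLike.ext _ _ fun x => ?_
  rw [h, χ.apply_one, hdeg, Nat.cast_one, one_apply]

/-- The kernel of (a representation affording) `χ`. -/
def ker {G : Type} [Group G] (χ : Irr G) : Subgroup G where
  carrier := {z | ∀ x, χ (z * x) = χ x}
  mul_mem' {a b} ha hb x := by rw [mul_assoc, ha, hb]
  one_mem' := by simp
  inv_mem' {a} ha x := by rw [← ha (a⁻¹ * x), mul_inv_cancel_left]

instance (χ : Irr G) : χ.ker.Normal := ⟨fun n hn g x => by
  rw [← χ.apply_conj g⁻¹ (g * n * g⁻¹ * x), ← χ.apply_conj g⁻¹ x, ← hn (g⁻¹ * x * g⁻¹⁻¹)]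
  congr 1
  group⟩

-- All of `V` is invariant under `H`: the average of the character over `H` is `dim V`.
lemma le_ker_of_forall_apply_eq (χ : Irr G) (H : Subgroup G) (hH : ∀ x ∈ H, χ x = χ 1) :
    H ≤ χ.ker := by
  obtain ⟨V, _, _, _, ρ, hρ⟩ := χ.isChar
  let σ : Representation ℂ H V := MonoidHom.comp ρ H.subtype
  have hinv : invariants σ = ⊤ := by
    refine Submodule.eq_top_of_finrank_eq ?_
    let _ := invertibleOfNonzero (natCast_card_ne_zero (X := H))
    have hσ (x : H) : σ.character x = Module.finrank ℂ V := by
      rw [← char_one ρ, ← hρ, ← hH x x.2, hρ]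
      rfl
    have := card_inv_mul_sum_char_eq_finrank σ
    simp only [hσ, sum_const, card_univ, ← Nat.card_eq_fintype_card, nsmul_eq_mul,
      inv_mul_cancel_left₀ natCast_card_ne_zero] at this
    exact_mod_cast this.symm
  intro z hz x
  have hρz : ρ z = 1 := by
    ext v
    have hv : v ∈ invariants σ := hinv ▸ Submodule.mem_top
    exact hv ⟨z, hz⟩
  simp only [hρ, character, map_mul, hρz, one_mul]

/-- A character is faithful if its kernel is trivial. -/
def IsFaithful {G : Type} [Group G] (χ : Irr G) : Prop := χ.ker = ⊥

lemma isFaithful_of_ne_one [IsSimpleGroup G] {χ : Irr G} (hχ : χ ≠ 1) : χ.IsFaithful := by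
  refine (inferInstance : χ.ker.Normal).eq_bot_or_eq_top.resolve_right fun h => hχ ?_
  refine χ.eq_one_of_forall_apply_eq fun x => ?_
  simpa using (h ▸ Subgroup.mem_top x : x ∈ χ.ker) 1

lemma IsFaithful.eq_one_of_forall_pow {χ : Irr G} (hχ : χ.IsFaithful) {z : G}
    (hz : ∀ n : ℕ, χ (z ^ n) = χ 1) : z = 1 := by
  have hker : Subgroup.zpowers z ≤ χ.ker := χ.le_ker_of_forall_apply_eq _ fun x hx => by
    obtain ⟨n, rfl⟩ := mem_powers_iff_mem_zpowers.2 hx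
    exact hz n
  rwa [hχ, le_bot_iff, Subgroup.zpowers_eq_bot] at hker

lemma card_eq_of_isMulCommutative [IsMulCommutative G] : Nat.card (Irr G) = Nat.card G := by
  let _ : CommGroup G := { mul_comm := mul_comm' }
  rw [card_eq_card_conjClasses]
  exact Nat.card_congr ConjClasses.mkEquiv.symm

lemma deg_eq_one [IsMulCommutative G] (χ : Irr G) : χ.deg = 1 := by
  have hsum : ∑ χ : Irr G, 1 = ∑ χ : Irr G, χ.deg ^ 2 := by
    rw [sum_deg_sq, ← card_eq_of_isMulCommutative]
    simp
  have := (sum_eq_sum_iff_of_le fun ψ _ => Nat.one_le_pow _ _ ψ.deg_pos).1 hsum χ (mem_univ _)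
  exact (Nat.pow_eq_one.1 this.symm).resolve_right two_ne_zero

omit [Finite G] in
lemma apply_mul_of_deg_eq_one {χ : Irr G} (h : χ.deg = 1) (x y : G) : χ (x * y) = χ x * χ y := by
  obtain ⟨V, _, _, _, ρ, hρ⟩ := χ.isChar
  have hV : Module.finrank ℂ V = 1 := by
    have := χ.apply_one
    rw [hρ, char_one, h] at this
    exact_mod_cast this
  obtain ⟨c, hc, -⟩ := (ρ x).existsUnique_eq_smul_id_of_finrank_eq_one hV
  have hx : χ x = c := by
    simpa [hρ, hV] using character_mul_of_eq_smul_id ρ hc 1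
  rw [hx, hρ, character_mul_of_eq_smul_id ρ hc]

lemma IsFaithful.two_le_deg {χ : Irr G} (hχ : χ.IsFaithful) (hG : ¬ IsMulCommutative G) :
    2 ≤ χ.deg := by
  by_contra hlt
  have hdeg : χ.deg = 1 := by have := χ.deg_pos; omega
  let f : G →* ℂ :=
    { toFun := χ
      map_one' := by rw [χ.apply_one, hdeg, Nat.cast_one]
      map_mul' := apply_mul_of_deg_eq_one hdeg }
  refine hG ⟨⟨fun x y => ?_⟩⟩
  have hcomm : x * y * (y * x)⁻¹ = 1 := hχ.eq_one_of_forall_pow fun n => by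
    have hf : f (x * y) = f (y * x) := by rw [map_mul, map_mul, mul_comm]
    change f _ = f 1
    rw [map_pow, map_mul, hf, ← map_mul, mul_inv_cancel, map_one, one_pow]
  exact mul_inv_eq_one.1 hcomm

end Irr

end CentralCharacters

section Normalizer

variable {G H : Type} [Group G] [Group H] [Finite G] [Finite H]

/-- The irreducible character of `H` obtained from one of `G` along an isomorphism. -/
def Irr.comap (χ : Irr G) (e : H ≃* G) : Irr H where
  val x := χ (e x)
  property := by
    refine (χ.isChar.comp e.toMonoidHom).isIrrChar_iff.2 ?_
    rw [← χ.isIrrChar.charInner_self, charInner, charInner, Nat.card_congr e.toEquiv]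
    exact congrArg _ (e.toEquiv.sum_comp fun g => χ g * conj (χ g))

/-- The normalizer of `B` acts by conjugation on the irreducible characters of `B`. -/
instance (B : Subgroup G) : MulAction (Subgroup.normalizer (B : Set G)) (Irr B) where
  smul n ψ := ψ.comap (MulDistribMulAction.toMulAut _ B n⁻¹)
  one_smul ψ := DFunLike.ext _ _ fun x => by
    change ψ ((1 : Subgroup.normalizer (B : Set G))⁻¹ • x) = ψ x
    rw [inv_one, one_smul]
  mul_smul m n ψ := DFunLike.ext _ _ fun x => by
    change ψ ((m * n)⁻¹ • x) = ψ (n⁻¹ • m⁻¹ • x)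
    rw [mul_inv_rev, mul_smul]

variable {B : Subgroup G}

namespace Irr

lemma smul_apply (n : Subgroup.normalizer (B : Set G)) (ψ : Irr B) (x : B) :
    (n • ψ) x = ψ (n⁻¹ • x) := rfl

lemma deg_smul (n : Subgroup.normalizer (B : Set G)) (ψ : Irr B) : (n • ψ).deg = ψ.deg := by
  have := (n • ψ).apply_one
  rw [smul_apply, smul_one, ψ.apply_one] at this
  exact_mod_cast this.symm

lemma mult_res_smul (n : Subgroup.normalizer (B : Set G)) (ψ : Irr B) (χ : Irr G) :
    mult (res B χ) (n • ψ) = mult (res B χ) ψ := by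
  have hχ : IsChar B (res B χ) := χ.isChar.restrict B
  have hn (x : B) : res B χ (n • x) = res B χ x := χ.apply_conj n x
  have : charInner (res B χ) ⇑(n • ψ) = charInner (res B χ) ψ := by
    rw [charInner, charInner, ← Equiv.sum_comp (MulAction.toPerm n)]
    simp only [MulAction.toPerm_apply, hn, smul_apply, inv_smul_smul]
  rw [hχ.charInner_eq_mult, hχ.charInner_eq_mult] at this
  exact_mod_cast this

lemma charInner_smul_left [DecidableEq (Irr B)] (n : Subgroup.normalizer (B : Set G))
    (ψ φ : Irr B) : charInner ψ (fun x => φ (n • x)) = if n • ψ = φ then 1 else 0 := by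
  have : (fun x => φ (n • x)) = ⇑(n⁻¹ • φ) := funext fun x => by rw [smul_apply, inv_inv]
  rw [this, charInner_eq]
  simp only [eq_inv_smul_iff]

/-- The number of elements of the normalizer of `B` that move `ψ` to `φ`. -/
noncomputable def transporterCard (ψ φ : Irr B) : ℕ :=
  Nat.card {n : Subgroup.normalizer (B : Set G) // n • ψ = φ}

lemma transporterCard_eq_zero {ψ φ : Irr B}
    (h : φ ∉ MulAction.orbit (Subgroup.normalizer (B : Set G)) ψ) : ψ.transporterCard φ = 0 :=
  Nat.card_eq_zero.2 (.inl ⟨fun n => h ⟨n, n.2⟩⟩)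

lemma smul_eq_self_of_mem {ψ : Irr B} {n : Subgroup.normalizer (B : Set G)} (hn : (n : G) ∈ B) :
    n • ψ = ψ :=
  DFunLike.ext _ _ fun x => ψ.apply_conj (⟨n, hn⟩⁻¹ : B) x

lemma transporterCard_self_eq_card {ψ : Irr B}
    (h : ∀ n : Subgroup.normalizer (B : Set G), n • ψ = ψ → (n : G) ∈ B) :
    ψ.transporterCard ψ = Nat.card B := by
  rw [transporterCard, ← Nat.card_congr (Subgroup.subgroupOfEquivOfLe
    (Subgroup.le_normalizer (H := B))).toEquiv]
  exact Nat.card_congr (Equiv.subtypeEquivRight fun n => ⟨h n, smul_eq_self_of_mem⟩)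

lemma card_orbit_mul_transporterCard_self (ψ : Irr B) :
    Nat.card (MulAction.orbit (Subgroup.normalizer (B : Set G)) ψ) * ψ.transporterCard ψ =
      Nat.card (Subgroup.normalizer (B : Set G)) := by
  rw [transporterCard, ← Nat.card_prod]
  exact Nat.card_congr (MulAction.orbitProdStabilizerEquivGroup _ ψ)

end Irr

end Normalizer

section TISupport

variable {G : Type} [Group G] {B : Subgroup G}

/-- The support of `f` is a trivial intersection set relative to `B`: only the normalizer of `B`
conjugates a point of the support into `B`. -/
def HasTISupport (f : B → ℂ) : Prop :=
  ∀ x, f x ≠ 0 → ∀ h : G, h * x * h⁻¹ ∈ B → h ∈ Subgroup.normalizer (B : Set G)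

lemma HasTISupport.card_conj_eq {f : B → ℂ} (hf : HasTISupport f) {x : B} (hx : f x ≠ 0)
    (y : B) :
    Nat.card {h : G // h * x * h⁻¹ = y} =
      Nat.card {h : Subgroup.normalizer (B : Set G) // h • x = y} :=
  Nat.card_congr
    { toFun h := ⟨⟨h, hf x hx h (by rw [h.2]; exact y.2)⟩, Subtype.ext h.2⟩
      invFun h := ⟨h, congrArg Subtype.val h.2⟩
      left_inv _ := rfl
      right_inv _ := rfl }

variable [Finite G]

lemma sum_charInner_res_mul_conj (f f' : B → ℂ) :
    ∑ χ : Irr G, charInner f (res B χ) * conj (charInner f' (res B χ)) =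
      (Nat.card B : ℂ)⁻¹ * ((Nat.card B : ℂ)⁻¹ *
        ∑ x, ∑ y, f x * conj (f' y) * Nat.card {h : G // h * x * h⁻¹ = y}) := by
  have hterm (χ : Irr G) : charInner f (res B χ) * conj (charInner f' (res B χ)) =
      (Nat.card B : ℂ)⁻¹ * ((Nat.card B : ℂ)⁻¹ *
        ∑ x : B, ∑ y : B, f x * conj (f' y) * conj (χ x * conj (χ y))) := by
    simp only [charInner, res, map_mul, map_sum, map_inv₀, map_natCast, Complex.conj_conj]
    rw [mul_mul_mul_comm, sum_mul_sum, mul_assoc]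
    simp only [mul_mul_mul_comm]
  simp only [hterm, ← mul_sum]
  rw [sum_comm]
  congr! 3 with x
  rw [sum_comm]
  refine sum_congr rfl fun y _ => ?_
  rw [← mul_sum, ← map_sum, Irr.sum_apply_mul_conj_apply, map_natCast]

lemma HasTISupport.sum_charInner_res_mul_conj {f : B → ℂ} (hf : HasTISupport f) (f' : B → ℂ) :
    ∑ χ : Irr G, charInner f (res B χ) * conj (charInner f' (res B χ)) =
      (Nat.card B : ℂ)⁻¹ *
        ∑ h : Subgroup.normalizer (B : Set G), charInner f (fun x => f' (h • x)) := by
  classical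
  rw [_root_.sum_charInner_res_mul_conj]
  simp only [charInner, ← mul_sum]
  rw [sum_comm (s := univ (α := Subgroup.normalizer (B : Set G)))]
  congr! 3 with x
  by_cases hx : f x = 0
  · simp [hx]
  simp only [hf.card_conj_eq hx, Nat.card_eq_fintype_card, Fintype.card_subtype,
    natCast_card_filter, mul_sum]
  rw [sum_comm]
  simp

lemma sum_charInner_res_mul_deg {f : B → ℂ} (hf : f 1 = 0) :
    ∑ χ : Irr G, charInner f (res B χ) * χ.deg = 0 := by
  have hsum (x : B) : ∑ χ : Irr G, f x * conj (χ x) * χ 1 = 0 := by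
    by_cases hx : x = 1
    · simp [hx, hf]
    have : IsEmpty {h : G // h * 1 * h⁻¹ = x} :=
      ⟨fun h => hx (Subtype.ext (by rw [← h.2]; simp))⟩
    have horth := Irr.sum_apply_mul_conj_apply (1 : G) x
    rw [Nat.card_of_isEmpty, Nat.cast_zero] at horth
    simp only [mul_assoc, ← mul_sum, mul_comm (conj _), horth, mul_zero]
  simp only [charInner, res, ← Irr.apply_one, mul_assoc, ← mul_sum, sum_mul]
  rw [sum_comm]
  simp only [← mul_assoc, hsum, sum_const_zero, mul_zero]

end TISupport

section SumSqEqTwo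

variable {I : Type*} [Fintype I] {a b : I → ℤ} {d : I → ℕ}

lemma eq_one_and_exists_eq_neg_one (hd : ∀ i, 0 < d i) (ha2 : ∑ i, a i ^ 2 = 2)
    (had : ∑ i, a i * d i = 0) {i : I} (hi : 0 < a i) :
    a i = 1 ∧ ∃ j, j ≠ i ∧ a j = -1 ∧ ∀ k, k ≠ i → k ≠ j → a k = 0 := by
  classical
  obtain ⟨j, hj⟩ : ∃ j, a j < 0 := by
    by_contra! hnonneg
    have : 0 < ∑ i, a i * d i := sum_pos' (fun k _ => mul_nonneg (hnonneg k) (Nat.cast_nonneg _))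
      ⟨i, mem_univ _, mul_pos hi (by exact_mod_cast hd i)⟩
    exact this.ne' had
  have hji : j ≠ i := fun h => (h ▸ hj).not_gt hi
  have hsplit : ∑ k ∈ univ \ {i, j}, a k ^ 2 + (a i ^ 2 + a j ^ 2) = 2 := by
    rw [← ha2, ← sum_sdiff (subset_univ ({i, j} : Finset I)), sum_pair hji.symm]
  have hrest : 0 ≤ ∑ k ∈ univ \ {i, j}, a k ^ 2 := sum_nonneg fun k _ => sq_nonneg _
  have hai : a i = 1 := by nlinarith
  have haj : a j = -1 := by nlinarith
  refine ⟨hai, j, hji, haj, fun k hki hkj => ?_⟩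
  have hzero : ∑ k ∈ univ \ {i, j}, a k ^ 2 = 0 := by rw [hai, haj] at hsplit; linarith
  rw [sum_eq_zero_iff_of_nonneg fun k _ => sq_nonneg _] at hzero
  exact pow_eq_zero_iff two_ne_zero |>.1 (hzero k (by simp [hki, hkj]))

lemma sum_mul_ne_zero_of_sum_sq_eq_two (hd : ∀ i, 0 < d i) (ha2 : ∑ i, a i ^ 2 = 2)
    (had : ∑ i, a i * d i = 0) (hb2 : ∑ i, b i ^ 2 = 2) (hbd : ∑ i, b i * d i = 0) {i : I}
    (hai : 0 < a i) (hbi : 0 < b i) : ∑ i, a i * b i ≠ 0 := by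
  classical
  obtain ⟨hai, j, hji, haj, ha⟩ := eq_one_and_exists_eq_neg_one hd ha2 had hai
  obtain ⟨hbi, j', -, hbj', hb⟩ := eq_one_and_exists_eq_neg_one hd hb2 hbd hbi
  have : ∑ i, a i * b i = a i * b i + a j * b j := by
    rw [← sum_pair (f := fun i => a i * b i) hji.symm]
    refine (sum_subset (subset_univ _) fun k _ hk => ?_).symm
    simp only [mem_insert, mem_singleton, not_or] at hk
    rw [ha k hk.1 hk.2, zero_mul]
  rw [this, hai, hbi, haj]
  by_cases hjj : j = j'
  · simp [hjj, hbj']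
  · simp [hb j hji hjj]

end SumSqEqTwo

section Exceptional

variable {G : Type} [Group G] [Finite G] {B : Subgroup G}

/-- The difference of the multiplicities of `ψ` and `ψ'` in the restriction of `χ` to `B`. -/
noncomputable def diffMult (ψ ψ' : Irr B) (χ : Irr G) : ℤ :=
  (mult (res B χ) ψ : ℤ) - mult (res B χ) ψ'

lemma charInner_sub_res (ψ ψ' : Irr B) (χ : Irr G) :
    charInner (⇑ψ - ⇑ψ') (res B χ) = diffMult ψ ψ' χ := by
  have hχ : IsChar B (res B χ) := χ.isChar.restrict B
  rw [charInner_sub_left, ← conj_charInner _ ⇑ψ, ← conj_charInner _ ⇑ψ', hχ.charInner_eq_mult,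
    hχ.charInner_eq_mult]
  simp [diffMult]

lemma sum_diffMult_mul_deg {ψ ψ' : Irr B} (hdeg : ψ.deg = ψ'.deg) :
    ∑ χ : Irr G, diffMult ψ ψ' χ * χ.deg = 0 := by
  have := sum_charInner_res_mul_deg (G := G) (f := ⇑ψ - ⇑ψ') (by simp [Irr.apply_one, hdeg])
  simp only [charInner_sub_res] at this
  exact_mod_cast this

lemma card_mul_sum_diffMult_mul {ψ ψ' : Irr B} (hTI : HasTISupport (⇑ψ - ⇑ψ'))
    (φ φ' : Irr B) :
    Nat.card B * ∑ χ : Irr G, diffMult ψ ψ' χ * diffMult φ φ' χ =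
      (ψ.transporterCard φ : ℤ) - ψ.transporterCard φ' - ψ'.transporterCard φ +
        ψ'.transporterCard φ' := by
  have hinner (n : Subgroup.normalizer (B : Set G)) :
      charInner (⇑ψ - ⇑ψ') (fun x => (⇑φ - ⇑φ') (n • x)) =
        ((if n • ψ = φ then 1 else 0) - (if n • ψ = φ' then 1 else 0) -
          (if n • ψ' = φ then 1 else 0) + (if n • ψ' = φ' then 1 else 0) : ℂ) := by
    change charInner _ ((fun x => φ (n • x)) - fun x => φ' (n • x)) = _
    simp only [charInner_sub_left, charInner_sub_right, Irr.charInner_smul_left]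
    ring
  have h := hTI.sum_charInner_res_mul_conj (⇑φ - ⇑φ')
  simp only [charInner_sub_res, map_intCast, hinner] at h
  have h' : (Nat.card B : ℂ) * ∑ χ : Irr G, (diffMult ψ ψ' χ : ℂ) * diffMult φ φ' χ =
      ψ.transporterCard φ - ψ.transporterCard φ' - ψ'.transporterCard φ +
        ψ'.transporterCard φ' := by
    rw [h, mul_inv_cancel_left₀ natCast_card_ne_zero]
    simp [Irr.transporterCard, Nat.card_eq_fintype_card, Fintype.card_subtype,
      sum_add_distrib, sum_sub_distrib]
  exact_mod_cast h'

/-- The pairs `ψ, ψ'` of characters of `B` to which the theory of exceptional characters applies: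
`ψ - ψ'` vanishes at `1` and has TI support, and the stabilizers of `ψ` and `ψ'` in the normalizer
of `B` are equal to `B`. -/
structure IsLinked (ψ ψ' : Irr B) : Prop where
  deg_eq : ψ.deg = ψ'.deg
  hasTISupport : HasTISupport (⇑ψ - ⇑ψ')
  transporterCard_left : ψ.transporterCard ψ = Nat.card B
  transporterCard_right : ψ'.transporterCard ψ' = Nat.card B

lemma Irr.notMem_orbit_of_mult_pos {χ : Irr G} {ψ ψ' : Irr B} (hψ : 0 < mult (res B χ) ψ)
    (hψ' : mult (res B χ) ψ' = 0) :
    ψ' ∉ MulAction.orbit (Subgroup.normalizer (B : Set G)) ψ := by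
  rintro ⟨n, rfl⟩
  rw [mult_res_smul] at hψ'
  exact hψ.ne' hψ'

namespace IsLinked

variable {ψ ψ' φ φ' : Irr B}

lemma sum_diffMult_sq (h : IsLinked ψ ψ')
    (hψ : ψ' ∉ MulAction.orbit (Subgroup.normalizer (B : Set G)) ψ) :
    ∑ χ : Irr G, diffMult ψ ψ' χ ^ 2 = 2 := by
  have hB : (Nat.card B : ℤ) ≠ 0 := by exact_mod_cast Nat.card_pos.ne'
  refine mul_left_cancel₀ hB ?_
  simp only [pow_two]
  rw [card_mul_sum_diffMult_mul h.hasTISupport, Irr.transporterCard_eq_zero hψ,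
    Irr.transporterCard_eq_zero (mt MulAction.mem_orbit_symm.1 hψ),
    h.transporterCard_left, h.transporterCard_right]
  ring

lemma card_orbit_right (h : IsLinked ψ ψ') :
    Nat.card (MulAction.orbit (Subgroup.normalizer (B : Set G)) ψ') * Nat.card B =
      Nat.card (Subgroup.normalizer (B : Set G)) := by
  rw [← ψ'.card_orbit_mul_transporterCard_self, h.transporterCard_right]

variable {χ χ' : Irr G}

lemma mult_eq_one (h : IsLinked ψ ψ') (hψ : 0 < mult (res B χ) ψ)
    (hψ' : mult (res B χ) ψ' = 0) : mult (res B χ) ψ = 1 := by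
  have := eq_one_and_exists_eq_neg_one Irr.deg_pos
    (h.sum_diffMult_sq (Irr.notMem_orbit_of_mult_pos hψ hψ')) (sum_diffMult_mul_deg h.deg_eq)
    (i := χ) (by simpa [diffMult, hψ'] using hψ)
  simpa [diffMult, hψ'] using this.1

lemma eq_of_mult_pos (h : IsLinked ψ ψ') (hχ : 0 < mult (res B χ) ψ)
    (hχ' : 0 < mult (res B χ') ψ) (hzero : mult (res B χ) ψ' = 0)
    (hzero' : mult (res B χ') ψ' = 0) : χ = χ' := by
  have hpos {η : Irr G} (hη : 0 < mult (res B η) ψ) (hη' : mult (res B η) ψ' = 0) :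
      0 < diffMult ψ ψ' η := by simpa [diffMult, hη'] using hη
  obtain ⟨-, j, -, hj, hrest⟩ := eq_one_and_exists_eq_neg_one Irr.deg_pos
    (h.sum_diffMult_sq (Irr.notMem_orbit_of_mult_pos hχ hzero)) (sum_diffMult_mul_deg h.deg_eq)
    (hpos hχ hzero)
  by_contra hne
  have hχ'_pos := hpos hχ' hzero'
  by_cases hχj : χ' = j
  · rw [hχj, hj] at hχ'_pos
    exact absurd hχ'_pos (by decide)
  · exact hχ'_pos.ne' (hrest χ' (Ne.symm hne) hχj)

lemma mem_orbit_of_mult_pos (h : IsLinked ψ ψ') (h' : IsLinked φ φ')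
    (hψ : 0 < mult (res B χ) ψ) (hφ : 0 < mult (res B χ) φ) (hψ' : mult (res B χ) ψ' = 0)
    (hφ' : mult (res B χ) φ' = 0)
    (hdisj : φ' ∉ MulAction.orbit (Subgroup.normalizer (B : Set G)) ψ') :
    φ ∈ MulAction.orbit (Subgroup.normalizer (B : Set G)) ψ := by
  by_contra hne
  have := card_mul_sum_diffMult_mul h.hasTISupport φ φ'
  rw [Irr.transporterCard_eq_zero hne, Irr.transporterCard_eq_zero hdisj,
    Irr.transporterCard_eq_zero (Irr.notMem_orbit_of_mult_pos hψ hφ'),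
    Irr.transporterCard_eq_zero (mt MulAction.mem_orbit_symm.1
      (Irr.notMem_orbit_of_mult_pos hφ hψ'))] at this
  refine sum_mul_ne_zero_of_sum_sq_eq_two Irr.deg_pos
    (h.sum_diffMult_sq (Irr.notMem_orbit_of_mult_pos hψ hψ')) (sum_diffMult_mul_deg h.deg_eq)
    (h'.sum_diffMult_sq (Irr.notMem_orbit_of_mult_pos hφ hφ')) (sum_diffMult_mul_deg h'.deg_eq)
    (i := χ) (by simpa [diffMult, hψ'] using hψ) (by simpa [diffMult, hφ'] using hφ) ?_
  simpa using this

end IsLinked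

end Exceptional

section Restrict

variable {G : Type} [Group G] [Finite G]

lemma IsChar.exists_mult_pos {θ : G → ℂ} (hθ : IsChar G θ) (h : θ 1 ≠ 0) :
    ∃ ψ : Irr G, 0 < mult θ ψ := by
  by_contra! hmult
  exact h (by simp [hθ.apply_eq_sum_mult 1, Nat.le_zero.1 (hmult _)])

lemma IsChar.eq_of_mult {θ : G → ℂ} (hθ : IsChar G θ) {ψ : Irr G} (hψ : mult θ ψ = 1)
    (h : ∀ φ : Irr G, 0 < mult θ φ → φ = ψ) : θ = ψ := by
  funext x
  rw [hθ.apply_eq_sum_mult, sum_eq_single ψ, hψ, Nat.cast_one, one_mul]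
  · intro φ _ hφ
    rw [Nat.eq_zero_of_not_pos (mt (h φ) hφ), Nat.cast_zero, zero_mul]
  · simp

lemma Irr.sum_mult_mul_deg_le (χ : Irr G) (B : Subgroup G) (T : Finset (Irr B)) :
    ∑ ψ ∈ T, mult (res B χ) ψ * ψ.deg ≤ χ.deg := by
  rw [(χ.isChar.restrict B).eq_sum_mult_mul_deg (n := χ.deg) χ.apply_one]
  exact sum_le_sum_of_subset (subset_univ _)

end Restrict

section SmallDegree

variable {G : Type} [Group G] [Finite G] {B : Subgroup G} {χ χ' : Irr G} {ψ φ : Irr B}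
  {T T' : Finset (Irr B)} {e : ℕ}

lemma Irr.card_le_deg_add_card_mult_eq_zero (χ : Irr G) (T : Finset (Irr B)) :
    #T ≤ χ.deg + #{ψ ∈ T | mult (res B χ) ψ = 0} := by
  have hle : #{ψ ∈ T | ¬ mult (res B χ) ψ = 0} ≤ χ.deg := by
    refine le_trans ?_ (χ.sum_mult_mul_deg_le B T)
    rw [card_filter]
    refine sum_le_sum fun ψ _ => ?_
    split_ifs with h
    · exact Nat.zero_le _
    · exact Nat.mul_pos (Nat.pos_of_ne_zero h) ψ.deg_pos
  have := card_filter_add_card_filter_not (s := T) fun ψ => mult (res B χ) ψ = 0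
  lia

namespace IsLinked

lemma exists_mult_eq_zero_notMem_orbit
    (hN : Nat.card (Subgroup.normalizer (B : Set G)) = e * Nat.card B)
    (hT : ∀ α ∈ T, IsLinked ψ α) (hd : χ.deg + e < #T) (φ : Irr B) :
    ∃ α ∈ T, mult (res B χ) α = 0 ∧
      α ∉ MulAction.orbit (Subgroup.normalizer (B : Set G)) φ := by
  by_contra! hall
  set Z : Finset (Irr B) := {α ∈ T | mult (res B χ) α = 0} with hZ
  have hZcard : e < #Z := by have := χ.card_le_deg_add_card_mult_eq_zero T; lia
  obtain ⟨α, hα⟩ := card_pos.1 (Nat.zero_lt_of_lt hZcard)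
  rw [hZ, mem_filter] at hα
  have horbit : Nat.card (MulAction.orbit (Subgroup.normalizer (B : Set G)) φ) = e := by
    rw [← MulAction.orbit_eq_iff.2 (hall α hα.1 hα.2)]
    exact Nat.eq_of_mul_eq_mul_right Nat.card_pos ((hT α hα.1).card_orbit_right.trans hN)
  refine hZcard.not_ge ?_
  rw [← horbit, Nat.card_coe_set_eq, ← Set.ncard_coe_finset]
  refine Set.ncard_le_ncard (fun β hβ => ?_) (Set.toFinite _)
  have := mem_filter.1 hβ
  exact hall β this.1 this.2

lemma mem_orbit_of_deg_lt (hN : Nat.card (Subgroup.normalizer (B : Set G)) = e * Nat.card B)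
    (hT : ∀ α ∈ T, IsLinked ψ α) (hT' : ∀ α ∈ T', IsLinked φ α) (hd : χ.deg + e < #T)
    (hd' : χ.deg + e < #T') (hψ : 0 < mult (res B χ) ψ) (hφ : 0 < mult (res B χ) φ) :
    φ ∈ MulAction.orbit (Subgroup.normalizer (B : Set G)) ψ := by
  obtain ⟨α, hα, hzα, -⟩ := exists_mult_eq_zero_notMem_orbit hN hT hd ψ
  obtain ⟨β, hβ, hzβ, hβα⟩ := exists_mult_eq_zero_notMem_orbit hN hT' hd' α
  exact (hT α hα).mem_orbit_of_mult_pos (hT' β hβ) hψ hφ hzα hzβ hβα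

lemma mult_eq_one_of_deg_lt (hN : Nat.card (Subgroup.normalizer (B : Set G)) = e * Nat.card B)
    (hT : ∀ α ∈ T, IsLinked ψ α) (hd : χ.deg + e < #T) (hψ : 0 < mult (res B χ) ψ) :
    mult (res B χ) ψ = 1 := by
  obtain ⟨α, hα, hzα, -⟩ := exists_mult_eq_zero_notMem_orbit hN hT hd ψ
  exact (hT α hα).mult_eq_one hψ hzα

end IsLinked

end SmallDegree

section Twist

variable {G : Type} [Group G] [Finite G]

namespace Irr

/-- The product of `ψ` with the linear character `l`. -/
noncomputable def twist (ψ : Irr G) (l : G →* ℂˣ) : Irr G where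
  val x := ψ x * l x
  property := by
    refine (ψ.isChar.mul (isChar_linear l)).isIrrChar_iff.2 ?_
    rw [← ψ.isIrrChar.charInner_self, charInner, charInner]
    congr! 2 with x
    have hl : (l x : ℂ) * conj (l x : ℂ) = 1 := by
      rw [← (isChar_linear l).apply_inv, map_inv, Units.mul_inv]
    rw [map_mul, mul_mul_mul_comm, hl, mul_one]

lemma twist_apply (ψ : Irr G) (l : G →* ℂˣ) (x : G) : ψ.twist l x = ψ x * l x := rfl

lemma deg_twist (ψ : Irr G) (l : G →* ℂˣ) : (ψ.twist l).deg = ψ.deg := by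
  have := (ψ.twist l).apply_one
  rw [twist_apply, map_one l, ψ.apply_one] at this
  simpa using this.symm

lemma centralChar_twist (ψ : Irr G) (l : G →* ℂˣ) (z : G) :
    (ψ.twist l).centralChar z = ψ.centralChar z * l z := by
  simp [centralChar, twist_apply, mul_div_right_comm]

/-- The products of `ψ` with the first `p` powers of the linear character `l`. -/
noncomputable def twists (ψ : Irr G) (l : G →* ℂˣ) (p : ℕ) : Finset (Irr G) :=
  (range p).image fun j => ψ.twist (l ^ j)

variable {ψ : Irr G} {l : G →* ℂˣ} {p : ℕ} {z : G}

lemma injOn_centralChar_twist (hz : z ∈ Subgroup.center G) (hp : orderOf (l z) = p) :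
    Set.InjOn (fun j : ℕ => (ψ.twist (l ^ j)).centralChar z) (range p) := by
  intro i hi j hj hij
  simp only [centralChar_twist, MonoidHom.pow_apply] at hij
  rw [coe_range, ← hp] at hi hj
  exact pow_injOn_Iio_orderOf hi hj (Units.ext (mul_left_cancel₀ (ψ.centralChar_ne_zero hz) hij))

lemma card_twists (hz : z ∈ Subgroup.center G) (hp : orderOf (l z) = p) : #(ψ.twists l p) = p := by
  rw [twists, card_image_of_injOn, card_range]
  exact fun i hi j hj hij =>
    injOn_centralChar_twist hz hp hi hj (congrArg (fun φ : Irr G => φ.centralChar z) hij)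

lemma card_filter_twists_le_one (hz : z ∈ Subgroup.center G) (hp : orderOf (l z) = p) (ω : ℂ) :
    #{φ ∈ ψ.twists l p | φ.centralChar z = ω} ≤ 1 := by
  simp only [card_le_one, twists, mem_filter, mem_image]
  rintro _ ⟨⟨i, hi, rfl⟩, hωi⟩ _ ⟨⟨j, hj, rfl⟩, hωj⟩
  rw [injOn_centralChar_twist hz hp hi hj (hωi.trans hωj.symm)]

end Irr

lemma IsLinked.of_mem_twists {B : Subgroup G} {ψ φ : Irr B} {l : B →* ℂˣ} {p : ℕ}
    (hφ : φ ∈ ψ.twists l p)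
    (hTI : ∀ x, l x ≠ 1 → ∀ h : G, h * x * h⁻¹ ∈ B → h ∈ Subgroup.normalizer (B : Set G))
    (hψ_card : ψ.transporterCard ψ = Nat.card B) (hφ_card : φ.transporterCard φ = Nat.card B) :
    IsLinked ψ φ := by
  obtain ⟨j, -, rfl⟩ := mem_image.1 hφ
  refine ⟨(ψ.deg_twist _).symm, fun x hx => hTI x fun hlx => hx ?_, hψ_card, hφ_card⟩
  simp [Irr.twist_apply, hlx]

end Twist

section CoprimeOrders

variable {G : Type*} [Group G]

lemma pow_card_eq_one_of_mem {K : Subgroup G} {x : G} (hx : x ∈ K) : x ^ Nat.card K = 1 :=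
  orderOf_dvd_iff_pow_eq_one.1 (K.orderOf_dvd_natCard hx)

variable {p : ℕ} {K : Subgroup G} {g κ : G}

lemma eq_one_of_mem_of_pow_eq_one {n : ℕ} (hK : (Nat.card K).Coprime n) (hκ : κ ∈ K)
    (hn : κ ^ n = 1) : κ = 1 :=
  (pow_eq_one_iff_of_coprime hK).1 ⟨pow_card_eq_one_of_mem hκ, hn⟩

lemma exists_mul_pow_pow_eq_of_commute {k j : ℕ} (h : Commute κ g) (hκ : κ ∈ K) (hp : p.Prime)
    (hK : (Nat.card K).Coprime p) (hg : orderOf g = p ^ k) (hj : ¬ p ∣ j) :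
    ∃ m : ℕ, (κ * g ^ j) ^ m = g := by
  have hcop : (j * Nat.card K).Coprime (orderOf g) :=
    hg ▸ (((hp.coprime_iff_not_dvd.2 hj).symm).mul_left hK).pow_right k
  obtain ⟨t, ht⟩ := exists_pow_eq_self_of_coprime hcop
  refine ⟨Nat.card K * t, ?_⟩
  rw [pow_mul, (h.pow_right j).mul_pow, pow_card_eq_one_of_mem hκ, one_mul, ← pow_mul g, ht]

end CoprimeOrders

/-- The centralizer of an element. -/
abbrev centralizerOf {G : Type*} [Group G] (g : G) : Subgroup G := Subgroup.centralizer {g}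

section CyclicByCoprime

variable {G : Type} [Group G] {K : Subgroup G} [K.Normal] {p : ℕ} {g : G}

lemma isCyclic_quotient (hgen : ∀ h : G, ∃ κ ∈ K, ∃ j : ℕ, h = κ * g ^ j) : IsCyclic (G ⧸ K) := by
  refine ⟨(g : G ⧸ K), fun q => ?_⟩
  obtain ⟨h, rfl⟩ := QuotientGroup.mk_surjective q
  obtain ⟨κ, hκ, j, rfl⟩ := hgen h
  refine ⟨j, ?_⟩
  simp [(QuotientGroup.eq_one_iff κ).2 hκ]

lemma exists_le_ker_orderOf_eq [Finite G] {k : ℕ} (hp : p.Prime) (hg : orderOf g = p ^ (k + 1))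
    (hK : (Nat.card K).Coprime p) (hgen : ∀ h : G, ∃ κ ∈ K, ∃ j : ℕ, h = κ * g ^ j) :
    ∃ l : G →* ℂˣ, K ≤ l.ker ∧ orderOf (l g) = p := by
  have := isCyclic_quotient hgen
  let _ : CommGroup (G ⧸ K) := IsCyclic.commGroup
  have hgp : (g ^ p ^ k) ^ p = 1 := by rw [← pow_mul, ← pow_succ, ← hg, pow_orderOf_eq_one]
  have hne : (g : G ⧸ K) ^ p ^ k ≠ 1 := by
    rw [← QuotientGroup.mk_pow, Ne, QuotientGroup.eq_one_iff]
    intro hmem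
    have hdvd := orderOf_dvd_of_pow_eq_one (eq_one_of_mem_of_pow_eq_one hK hmem hgp)
    rw [hg] at hdvd
    exact absurd ((Nat.pow_dvd_pow_iff_le_right hp.one_lt).1 hdvd) (Nat.not_succ_le_self k)
  obtain ⟨φ, hφ⟩ := CommGroup.exists_apply_ne_one_of_hasEnoughRootsOfUnity (G ⧸ K) ℂ hne
  have : Fact p.Prime := ⟨hp⟩
  refine ⟨φ.comp (QuotientGroup.mk' K) ^ p ^ k, fun κ hκ => ?_, orderOf_eq_prime ?_ ?_⟩
  · simp [MonoidHom.mem_ker, (QuotientGroup.eq_one_iff κ).2 hκ]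
  · rw [← map_pow, MonoidHom.pow_apply, ← map_pow]
    rw [pow_right_comm, hgp, map_one]
  · simpa using hφ

lemma commute_of_commute_conj {k : ℕ} (hg : orderOf g = p ^ k) (hK : (Nat.card K).Coprime p)
    (hgen : ∀ h : G, ∃ κ ∈ K, ∃ j : ℕ, h = κ * g ^ j) {h : G} (hh : Commute (h * g * h⁻¹) g) :
    Commute h g := by
  obtain ⟨κ, hκ, i, rfl⟩ := hgen h
  set c := κ * (g * κ⁻¹ * g⁻¹) with hc
  have hconj : κ * g ^ i * g * (κ * g ^ i)⁻¹ = c * g := by rw [hc]; group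
  rw [hconj] at hh
  have hcg : Commute c g := by simpa using hh.mul_left (Commute.refl g).inv_left
  have hcK : c ∈ K := K.mul_mem hκ (Subgroup.Normal.conj_mem ‹_› _ (K.inv_mem hκ) g)
  have hpow : c ^ p ^ k = 1 := by
    have hcg_pow : (c * g) ^ p ^ k = 1 := by
      rw [← hconj, conj_pow, ← hg, pow_orderOf_eq_one, mul_one, mul_inv_cancel]
    rwa [hcg.mul_pow, ← hg, pow_orderOf_eq_one, mul_one, hg] at hcg_pow
  rw [eq_one_of_mem_of_pow_eq_one (hK.pow_right k) hcK hpow, one_mul] at hconj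
  exact mul_inv_eq_iff_eq_mul.1 hconj

lemma mem_centralizerOf_of_conj_mem {k : ℕ} (hp : p.Prime) (hg : orderOf g = p ^ k)
    (hK : (Nat.card K).Coprime p) (hgen : ∀ h : G, ∃ κ ∈ K, ∃ j : ℕ, h = κ * g ^ j)
    {l : G →* ℂˣ} (hl : K ≤ l.ker) (hlg : orderOf (l g) = p) {y h : G}
    (hy : y ∈ centralizerOf g) (hly : l y ≠ 1) (hh : h * y * h⁻¹ ∈ centralizerOf g) :
    h ∈ centralizerOf g := by
  obtain ⟨κ, hκ, j, rfl⟩ := hgen y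
  have hj : ¬ p ∣ j := by
    rintro ⟨t, rfl⟩
    refine hly ?_
    rw [map_mul, hl hκ, map_pow, pow_mul, ← hlg, pow_orderOf_eq_one, one_pow, one_mul]
  have hgC : g ∈ centralizerOf g := Subgroup.mem_centralizer_singleton_iff.2 rfl
  have hκC : κ ∈ centralizerOf g :=
    (Subgroup.mul_mem_cancel_right _ (Subgroup.pow_mem _ hgC j)).1 hy
  obtain ⟨m, hm⟩ := exists_mul_pow_pow_eq_of_commute (Subgroup.mem_centralizer_singleton_iff.1 hκC)
    hκ hp hK hg hj
  have hconj : h * g * h⁻¹ ∈ centralizerOf g := by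
    have := Subgroup.pow_mem _ hh m
    rwa [conj_pow, hm] at this
  rw [Subgroup.mem_centralizer_singleton_iff] at hconj ⊢
  exact commute_of_commute_conj hg hK hgen hconj

/-- The element `g` regarded as an element of its centralizer. -/
def selfCentral {G : Type*} [Group G] (g : G) : centralizerOf g :=
  ⟨g, Subgroup.mem_centralizer_singleton_iff.2 rfl⟩

omit [K.Normal] in
lemma selfCentral_mem_center (g : G) : selfCentral g ∈ Subgroup.center (centralizerOf g) :=
  Subgroup.mem_center_iff.2 fun b =>
    Subtype.ext (Subgroup.mem_centralizer_singleton_iff.1 b.2)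

lemma Irr.mul_apply_of_deg_lt [Finite G] {k : ℕ} (hp : p.Prime) (hg : orderOf g = p ^ k)
    (hK : (Nat.card K).Coprime p) (hgen : ∀ h : G, ∃ κ ∈ K, ∃ j : ℕ, h = κ * g ^ j) (χ : Irr G)
    (hd : χ.deg < p - 1) (x : G) : χ (g * x) = χ g / χ 1 * χ x := by
  rcases k with _ | k
  · obtain rfl : g = 1 := by simpa using hg
    simp [χ.apply_one_ne_zero]
  obtain ⟨l, hl, hlg⟩ := exists_le_ker_orderOf_eq hp hg hK hgen
  have hTI {y h : G} := mem_centralizerOf_of_conj_mem (y := y) (h := h) hp hg hK hgen hl hlg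
  have hlg1 : l g ≠ 1 := fun h => hp.one_lt.ne (by rw [← hlg, h, orderOf_one])
  have hnormalizer : Subgroup.normalizer (centralizerOf g : Set G) = centralizerOf g :=
    le_antisymm (fun h hh => hTI (selfCentral g).2 hlg1
      ((Subgroup.mem_normalizer_iff.1 hh g).1 (selfCentral g).2)) Subgroup.le_normalizer
  have hstab (ψ : Irr (centralizerOf g)) : ψ.transporterCard ψ = Nat.card (centralizerOf g) :=
    transporterCard_self_eq_card fun n _ => hnormalizer.le n.2
  let lC : centralizerOf g →* ℂˣ := l.comp (centralizerOf g).subtype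
  have hlink (ψ : Irr (centralizerOf g)) : ∀ α ∈ ψ.twists lC p, IsLinked ψ α := fun α hα =>
    .of_mem_twists hα (fun x hx h hh => hnormalizer.ge (hTI x.2 hx hh)) (hstab ψ) (hstab α)
  have hcard (ψ : Irr (centralizerOf g)) : χ.deg + 1 < #(ψ.twists lC p) := by
    rw [card_twists (l := lC) (selfCentral_mem_center g) hlg]
    lia
  have hN : Nat.card (Subgroup.normalizer (centralizerOf g : Set G)) =
      1 * Nat.card (centralizerOf g) := by rw [hnormalizer, one_mul]
  have hres : IsChar (centralizerOf g) (res (centralizerOf g) χ) := χ.isChar.restrict _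
  obtain ⟨ψ, hψ⟩ := hres.exists_mult_pos χ.apply_one_ne_zero
  have hunique (φ : Irr (centralizerOf g)) (hφ : 0 < mult (res _ χ) φ) : φ = ψ := by
    obtain ⟨n, rfl⟩ := IsLinked.mem_orbit_of_deg_lt hN (hlink ψ) (hlink φ) (hcard ψ) (hcard φ)
      hψ hφ
    exact smul_eq_self_of_mem (hnormalizer.le n.2)
  exact χ.isChar.apply_mul_of_res_eq
    (hres.eq_of_mult (IsLinked.mult_eq_one_of_deg_lt hN (hlink ψ) (hcard ψ) hψ) hunique)
    (fun b hb => (Subgroup.mem_centralizer_singleton_iff.1 hb).symm) x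

end CyclicByCoprime

section Faithful

variable {G : Type} [Group G]

lemma IsChar.apply_commutator_mul {χ : G → ℂ} (h : IsChar G χ) {g : G} {ω : ℂ}
    (hg : ∀ x, χ (g * x) = ω * χ x) (κ x : G) : χ (g * κ * g⁻¹ * κ⁻¹ * x) = χ x := by
  have hconj (y : G) : χ (κ⁻¹ * y * κ) = χ y := by simpa using h.apply_conj κ⁻¹ y
  calc χ (g * κ * g⁻¹ * κ⁻¹ * x) = ω * χ (κ * g⁻¹ * κ⁻¹ * x) := by rw [← hg]; group
    _ = ω * χ (g⁻¹ * (κ⁻¹ * x * κ)) := by rw [← hconj (κ * g⁻¹ * κ⁻¹ * x)]; group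
    _ = χ x := by rw [← hg, mul_inv_cancel_left, hconj]

variable [Finite G] {χ : Irr G}

lemma Irr.deg_le_of_mult_pos {B : Subgroup G} {ψ : Irr B} (h : 0 < mult (res B χ) ψ) :
    ψ.deg ≤ χ.deg := by
  have := χ.sum_mult_mul_deg_le B {ψ}
  rw [sum_singleton] at this
  exact (Nat.le_mul_of_pos_left _ h).trans this

namespace Irr.IsFaithful

lemma eq_one_of_forall_mult_pos (hχ : χ.IsFaithful) {B : Subgroup G} {z : B}
    (hz : ∀ ψ : Irr B, 0 < mult (res B χ) ψ → ∀ x, ψ (z * x) = ψ x) : z = 1 := by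
  refine Subtype.ext (hχ.eq_one_of_forall_pow fun n => ?_)
  have hres : IsChar B (res B χ) := χ.isChar.restrict B
  change res B χ (z ^ n) = res B χ 1
  rw [hres.apply_eq_sum_mult, hres.apply_eq_sum_mult]
  refine sum_congr rfl fun ψ _ => ?_
  rcases Nat.eq_zero_or_pos (mult (res B χ) ψ) with h | h
  · simp [h]
  have hpow : ψ (z ^ n) = ψ 1 := by
    induction n with
    | zero => rw [pow_zero]
    | succ n ih => rw [pow_succ', hz ψ h, ih]
  rw [hpow]

end Irr.IsFaithful

omit [Finite G] in
lemma commutator_inf_center_ne_bot [Group.IsNilpotent G] (hG : ¬ IsMulCommutative G) :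
    commutator G ⊓ Subgroup.center G ≠ ⊥ := by
  have : Nontrivial (G ⧸ Subgroup.center G) := by
    refine QuotientGroup.nontrivial_iff.2 fun h => hG ⟨⟨fun x y => ?_⟩⟩
    exact Subgroup.mem_center_iff.1 (h ▸ Subgroup.mem_top y) x
  obtain ⟨⟨q, hq⟩, hq1⟩ :=
    Subgroup.ne_bot_iff_exists_ne_one.1 (Group.IsNilpotent.center_ne_bot (G ⧸ Subgroup.center G))
  obtain ⟨x, rfl⟩ := QuotientGroup.mk_surjective q
  have hx : x ∉ Subgroup.center G := fun h => hq1 (Subtype.ext ((QuotientGroup.eq_one_iff x).2 h))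
  rw [Subgroup.mem_center_iff] at hx
  push Not at hx
  obtain ⟨y, hy⟩ := hx
  rw [Subgroup.ne_bot_iff_exists_ne_one]
  refine ⟨⟨y * x * y⁻¹ * x⁻¹, ?_, ?_⟩, fun h => hy ?_⟩
  · exact Subgroup.commutator_mem_commutator (Subgroup.mem_top y) (Subgroup.mem_top x)
  · have := Subgroup.mem_center_iff.1 hq y
    change y * x * y⁻¹ * x⁻¹ ∈ Subgroup.center G
    rw [← QuotientGroup.eq_one_iff]
    simp only [QuotientGroup.mk_mul, QuotientGroup.mk_inv, this]
    group
  · have h' : y * x * y⁻¹ * x⁻¹ = 1 := congrArg Subtype.val h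
    rwa [mul_assoc, ← mul_inv_rev, mul_inv_eq_one] at h'

variable {p : ℕ}

lemma Irr.IsFaithful.isMulCommutative_of_isPGroup (hχ : χ.IsFaithful) (hp : p.Prime)
    (hd : χ.deg < p) {P : Subgroup G} (hP : IsPGroup p P) : IsMulCommutative P := by
  by_contra hcomm
  have : Fact p.Prime := ⟨hp⟩
  have := hP.isNilpotent
  obtain ⟨⟨z, hz, hzc⟩, hz1⟩ :=
    Subgroup.ne_bot_iff_exists_ne_one.1 (commutator_inf_center_ne_bot hcomm)
  refine hz1 (Subtype.ext (hχ.eq_one_of_forall_mult_pos fun ψ hψ x => ?_))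
  obtain ⟨k, hk⟩ := hP z
  have hcop : ψ.deg.Coprime (p ^ k) := (Nat.coprime_of_lt_prime ψ.deg_pos.ne'
    ((deg_le_of_mult_pos hψ).trans_lt hd) hp).symm.pow_right k
  rw [ψ.apply_mul_of_mem_center hzc, (pow_eq_one_iff_of_coprime hcop).1
    ⟨ψ.centralChar_pow_deg_eq_one hzc hz, ψ.centralChar_pow_eq_one hzc hk⟩, one_mul]

lemma exists_eq_mul_pow_of_mem_sup_zpowers {K : Subgroup G} {g : G}
    (hg : g ∈ Subgroup.normalizer (K : Set G)) {h : G} (hh : h ∈ K ⊔ Subgroup.zpowers g) :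
    ∃ κ ∈ K, ∃ j : ℕ, h = κ * g ^ j := by
  rw [← SetLike.mem_coe, Subgroup.coe_mul_of_right_le_normalizer_left _ _
    (Subgroup.zpowers_le.2 hg)] at hh
  obtain ⟨κ, hκ, b, hb, rfl⟩ := hh
  obtain ⟨j, rfl⟩ := mem_powers_iff_mem_zpowers.2 hb
  exact ⟨κ, hκ, j, rfl⟩

lemma Irr.IsFaithful.commute_of_mem_normalizer (hχ : χ.IsFaithful) (hp : p.Prime)
    (hd : χ.deg < p - 1) {K : Subgroup G} (hK : (Nat.card K).Coprime p) {g : G} {k : ℕ}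
    (hg : g ^ p ^ k = 1) (hgK : g ∈ Subgroup.normalizer (K : Set G)) {κ : G} (hκ : κ ∈ K) :
    Commute g κ := by
  obtain ⟨k', -, hk'⟩ := (Nat.dvd_prime_pow hp).1 (orderOf_dvd_of_pow_eq_one hg)
  set H := K ⊔ Subgroup.zpowers g
  have hKH : K ≤ H := le_sup_left
  let g' : H := ⟨g, Subgroup.mem_sup_right (Subgroup.mem_zpowers g)⟩
  let κ' : H := ⟨κ, hKH hκ⟩
  have : (K.subgroupOf H).Normal := (Subgroup.normal_subgroupOf_iff_le_normalizer hKH).2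
    (sup_le Subgroup.le_normalizer (Subgroup.zpowers_le.2 hgK))
  have hgen (h : H) : ∃ κ ∈ K.subgroupOf H, ∃ j : ℕ, h = κ * g' ^ j := by
    obtain ⟨a, ha, j, hj⟩ := exists_eq_mul_pow_of_mem_sup_zpowers hgK h.2
    exact ⟨⟨a, hKH ha⟩, ha, j, Subtype.ext hj⟩
  have hcard : (Nat.card (K.subgroupOf H)).Coprime p := by
    rwa [Nat.card_congr (Subgroup.subgroupOfEquivOfLe hKH).toEquiv]
  have hcommutator : g' * κ' * g'⁻¹ * κ'⁻¹ = 1 := hχ.eq_one_of_forall_mult_pos fun ψ hψ =>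
    ψ.isChar.apply_commutator_mul (ψ.mul_apply_of_deg_lt hp ((Subgroup.orderOf_coe g').symm.trans
      hk') hcard hgen ((deg_le_of_mult_pos hψ).trans_lt hd)) κ'
  rw [mul_assoc, ← mul_inv_rev, mul_inv_eq_one] at hcommutator
  exact congrArg Subtype.val hcommutator

end Faithful

section NormalSylow

/-- `p`-solvability of a subgroup, by induction along a subnormal series that starts at `⊥`; the
index condition is the order condition on the factor. -/
inductive IsPSolvableSubgroup (p : ℕ) {G : Type*} [Group G] : Subgroup G → Prop
  | bot : IsPSolvableSubgroup p ⊥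
  | step (K H : Subgroup G) (le : K ≤ H) (le_normalizer : H ≤ Subgroup.normalizer (K : Set G))
      (index : (∃ m, K.relIndex H = p ^ m) ∨ (K.relIndex H).Coprime p)
      (sub : IsPSolvableSubgroup p K) : IsPSolvableSubgroup p H

/-- `O` is a normal Sylow `p`-subgroup of `H`, both being subgroups of an ambient group. -/
structure IsNormalSylow (p : ℕ) {G : Type*} [Group G] (O H : Subgroup G) : Prop where
  le : O ≤ H
  isPGroup : IsPGroup p O
  le_normalizer : H ≤ Subgroup.normalizer (O : Set G)
  coprime : (O.relIndex H).Coprime p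

variable {G : Type*} [Group G] {p : ℕ} {O P M H Z : Subgroup G}

lemma exists_pow_pow_eq_one_of_mem (hP : IsPGroup p P) {x : G} (hx : x ∈ P) :
    ∃ k, x ^ p ^ k = 1 := by
  obtain ⟨k, hk⟩ := hP ⟨x, hx⟩
  exact ⟨k, congrArg Subtype.val hk⟩

namespace IsNormalSylow

lemma normal_subgroupOf (hO : IsNormalSylow p O H) : (O.subgroupOf H).Normal :=
  (Subgroup.normal_subgroupOf_iff_le_normalizer hO.le).2 hO.le_normalizer

lemma mono_right (hO : IsNormalSylow p O H) (hOZ : O ≤ Z) (hZH : Z ≤ H) : IsNormalSylow p O Z where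
  le := hOZ
  isPGroup := hO.isPGroup
  le_normalizer := hZH.trans hO.le_normalizer
  coprime := hO.coprime.coprime_dvd_left
    (Dvd.intro _ (Subgroup.relIndex_mul_relIndex O Z H hOZ hZH))

lemma mem_of_pow_eq_one (hO : IsNormalSylow p O H) {x : G} (hx : x ∈ H) {k : ℕ}
    (hxk : x ^ p ^ k = 1) : x ∈ O := by
  have := hO.normal_subgroupOf
  have hmem : x ^ O.relIndex H ∈ O := (O.subgroupOf H).pow_index_mem ⟨x, hx⟩
  obtain ⟨t, ht⟩ := exists_pow_eq_self_of_coprime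
    ((hO.coprime.pow_right k).coprime_dvd_right (orderOf_dvd_of_pow_eq_one hxk))
  exact ht ▸ O.pow_mem hmem t

lemma le_normalizer_of_le_normalizer (hO : IsNormalSylow p O M)
    (hHM : H ≤ Subgroup.normalizer (M : Set G)) : H ≤ Subgroup.normalizer (O : Set G) := by
  refine Subgroup.le_normalizer_iff.2 fun x hx o ho => ?_
  obtain ⟨k, hk⟩ := exists_pow_pow_eq_one_of_mem hO.isPGroup ho
  refine hO.mem_of_pow_eq_one ((Subgroup.mem_normalizer_iff.1 (hHM hx) o).1 (hO.le ho)) (k := k) ?_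
  rw [conj_pow, hk, mul_one, mul_inv_cancel]

variable [Finite G]

/-- The description of `K` by an equation makes it characteristic in `Z`. -/
lemma exists_complement (hp : p.Prime) (hO : IsNormalSylow p O Z)
    (hc : ∀ o ∈ O, ∀ z ∈ Z, Commute o z) : ∃ K : Subgroup G, (Nat.card K).Coprime p ∧
      (∀ x, x ∈ K ↔ x ∈ Z ∧ x ^ Nat.card K = 1) ∧ ∀ z ∈ Z, ∃ o ∈ O, ∃ κ ∈ K, z = o * κ := by
  have : Fact p.Prime := ⟨hp⟩
  have := hO.normal_subgroupOf
  obtain ⟨n, hn⟩ := IsPGroup.iff_card.1 hO.isPGroup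
  have hcardO : Nat.card (O.subgroupOf Z) = p ^ n := by
    rw [Nat.card_congr (Subgroup.subgroupOfEquivOfLe hO.le).toEquiv, hn]
  obtain ⟨K, hK⟩ := Subgroup.exists_right_complement'_of_coprime (N := O.subgroupOf Z)
    (hcardO ▸ (hO.coprime.pow_right n).symm)
  have hcardK : Nat.card (K.map Z.subtype) = O.relIndex Z := by
    rw [Subgroup.card_map_of_injective Z.subtype_injective]
    exact hK.symm.index_eq_card.symm
  have hmul (z) (hz : z ∈ Z) : ∃ o ∈ O, ∃ κ ∈ K.map Z.subtype, z = o * κ := by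
    obtain ⟨⟨o, κ⟩, h⟩ := (hK.existsUnique ⟨z, hz⟩).exists
    exact ⟨o.1, o.2, κ.1, ⟨κ, κ.2, rfl⟩, (congrArg Subtype.val h).symm⟩
  refine ⟨K.map Z.subtype, hcardK ▸ hO.coprime, fun x => ⟨fun hx => ⟨Subgroup.map_subtype_le K hx,
    pow_card_eq_one_of_mem hx⟩, fun ⟨hx, hxu⟩ => ?_⟩, hmul⟩
  obtain ⟨o, ho, κ, hκ, rfl⟩ := hmul x hx
  obtain ⟨k, hk⟩ := exists_pow_pow_eq_one_of_mem hO.isPGroup ho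
  rw [(hc o ho κ (Subgroup.map_subtype_le K hκ)).mul_pow, pow_card_eq_one_of_mem hκ, mul_one,
    hcardK] at hxu
  rwa [(pow_eq_one_iff_of_coprime (hO.coprime.pow_right k)).1 ⟨hxu, hk⟩, one_mul]

end IsNormalSylow

lemma le_sup_of_relIndex_coprime (h : (M.relIndex H).Coprime (P.relIndex H)) :
    H ≤ M ⊔ P := by
  rw [← Subgroup.relIndex_eq_one]
  exact Nat.eq_one_of_dvd_coprimes h (Subgroup.relIndex_dvd_of_le_left H le_sup_left)
    (Subgroup.relIndex_dvd_of_le_left H le_sup_right)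

lemma le_normalizer_inf_centralizer (hHM : H ≤ Subgroup.normalizer (M : Set G))
    (hHO : H ≤ Subgroup.normalizer (O : Set G)) :
    H ≤ Subgroup.normalizer ((M ⊓ Subgroup.centralizer (O : Set G) : Subgroup G) : Set G) := by
  refine Subgroup.le_normalizer_iff.2 fun h hh y hy =>
    ⟨Subgroup.le_normalizer_iff.1 hHM h hh y hy.1, Subgroup.mem_centralizer_iff.2 fun o ho => ?_⟩
  have hcomm := Subgroup.mem_centralizer_iff.1 hy.2 (h⁻¹ * o * h⁻¹⁻¹)
    (Subgroup.le_normalizer_iff.1 hHO _ (H.inv_mem hh) o ho)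
  calc o * (h * y * h⁻¹) = h * (h⁻¹ * o * h⁻¹⁻¹ * y) * h⁻¹ := by group
    _ = h * y * h⁻¹ * o := by rw [hcomm]; group

lemma exists_le_isPGroup_relIndex_coprime [Finite G] (hp : p.Prime) (hO : IsPGroup p O)
    (hOH : O ≤ H) :
    ∃ P, O ≤ P ∧ P ≤ H ∧ IsPGroup p P ∧ (P.relIndex H).Coprime p := by
  have : Fact p.Prime := ⟨hp⟩
  obtain ⟨Q, hQ⟩ := IsPGroup.exists_le_sylow (P := O.subgroupOf H)
    (hO.comap_of_injective H.subtype H.subtype_injective)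
  refine ⟨(Q : Subgroup H).map H.subtype, fun o ho => ⟨⟨o, hOH ho⟩, hQ ho, rfl⟩,
    Subgroup.map_subtype_le _, Q.2.map H.subtype, ?_⟩
  rw [Subgroup.relIndex, Subgroup.subgroupOf,
    Subgroup.comap_map_eq_self_of_injective H.subtype_injective, Nat.coprime_comm,
    hp.coprime_iff_not_dvd]
  exact Q.not_dvd_index

end NormalSylow

section Ito

variable {G : Type} [Group G] [Finite G] {χ : Irr G} {p : ℕ} {O P M H : Subgroup G}

namespace Irr.IsFaithful

lemma commute_of_mem_inf_centralizer (hχ : χ.IsFaithful) (hp : p.Prime) (hd : χ.deg < p - 1)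
    (hO : IsNormalSylow p O M) (hP : IsPGroup p P) (hOP : O ≤ P)
    (hPM : P ≤ Subgroup.normalizer (M : Set G)) {x a : G} (hx : x ∈ P)
    (ha : a ∈ M ⊓ Subgroup.centralizer (O : Set G)) : Commute x a := by
  have hPab := hχ.isMulCommutative_of_isPGroup hp (by lia) hP
  have hOZ : O ≤ M ⊓ Subgroup.centralizer (O : Set G) := fun o ho => ⟨hO.le ho,
    Subgroup.mem_centralizer_iff.2 fun o' ho' => setLike_mul_comm (hOP ho') (hOP ho)⟩
  obtain ⟨K, hKp, hK, hmul⟩ := (hO.mono_right hOZ inf_le_left).exists_complement hp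
    fun o ho z hz => Subgroup.mem_centralizer_iff.1 hz.2 o ho
  have hPK : P ≤ Subgroup.normalizer (K : Set G) := by
    refine Subgroup.le_normalizer_iff.2 fun y hy κ hκ => ?_
    rw [hK] at hκ ⊢
    refine ⟨Subgroup.le_normalizer_iff.1
      (le_normalizer_inf_centralizer hPM (hO.le_normalizer_of_le_normalizer hPM)) y hy κ hκ.1, ?_⟩
    rw [conj_pow, hκ.2, mul_one, mul_inv_cancel]
  obtain ⟨o, ho, κ, hκ, rfl⟩ := hmul a ha
  obtain ⟨k, hk⟩ := exists_pow_pow_eq_one_of_mem hP hx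
  exact Commute.mul_right (setLike_mul_comm hx (hOP ho))
    (hχ.commute_of_mem_normalizer hp hd hKp hk (hPK hx) hκ)

lemma exists_isNormalSylow_of_relIndex_eq_pow (hχ : χ.IsFaithful) (hp : p.Prime)
    (hd : χ.deg < p - 1) (hO : IsNormalSylow p O M) (hMH : M ≤ H)
    (hHM : H ≤ Subgroup.normalizer (M : Set G)) {m : ℕ} (hm : M.relIndex H = p ^ m) :
    ∃ P, IsNormalSylow p P H := by
  obtain ⟨P, hOP, hPH, hP, hPi⟩ :=
    exists_le_isPGroup_relIndex_coprime hp hO.isPGroup (hO.le.trans hMH)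
  have hPab := hχ.isMulCommutative_of_isPGroup hp (by lia) hP
  set Y := H ⊓ Subgroup.centralizer (O : Set G)
  have hPY : P ≤ Y := fun x hx => ⟨hPH hx,
    Subgroup.mem_centralizer_iff.2 fun o ho => setLike_mul_comm (hOP ho) hx⟩
  have hHP : H ≤ M ⊔ P := le_sup_of_relIndex_coprime (hm ▸ (hPi.pow_right m).symm)
  have hcomm (y) (hy : y ∈ Y) (x) (hx : x ∈ P) : Commute x y := by
    have hy' := hHP hy.1
    rw [← SetLike.mem_coe, Subgroup.coe_mul_of_right_le_normalizer_left _ _ (hPH.trans hHM)] at hy'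
    obtain ⟨a, ha, b, hb, rfl⟩ := hy'
    have haO : a ∈ Subgroup.centralizer (O : Set G) :=
      (Subgroup.mul_mem_cancel_right _ (hPY hb).2).1 hy.2
    exact (hχ.commute_of_mem_inf_centralizer hp hd hO hP hOP (hPH.trans hHM) hx
      ⟨ha, haO⟩).mul_right (setLike_mul_comm hx hb)
  have hPY' : IsNormalSylow p P Y :=
    { le := hPY
      isPGroup := hP
      le_normalizer := Subgroup.le_normalizer_iff.2 fun y hy x hx => by
        rwa [← (hcomm y hy x hx).eq, mul_inv_cancel_right]
      coprime := hPi.coprime_dvd_left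
        (Dvd.intro _ (Subgroup.relIndex_mul_relIndex P Y H hPY inf_le_left)) }
  exact ⟨P, hPH, hP, hPY'.le_normalizer_of_le_normalizer (le_normalizer_inf_centralizer
    Subgroup.le_normalizer (hO.le_normalizer_of_le_normalizer hHM)), hPi⟩

lemma exists_isNormalSylow (hχ : χ.IsFaithful) (hp : p.Prime) (hd : χ.deg < p - 1)
    (hH : IsPSolvableSubgroup p H) : ∃ O, IsNormalSylow p O H := by
  induction hH with
  | bot => exact ⟨⊥, le_rfl, IsPGroup.of_bot, Subgroup.le_normalizer, by simp⟩
  | step M H hMH hHM hindex _ ih =>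
    obtain ⟨O, hO⟩ := ih
    rcases hindex with ⟨m, hm⟩ | hcop
    · exact hχ.exists_isNormalSylow_of_relIndex_eq_pow hp hd hO hMH hHM hm
    · refine ⟨O, hO.le.trans hMH, hO.isPGroup, hO.le_normalizer_of_le_normalizer hHM, ?_⟩
      rw [← Subgroup.relIndex_mul_relIndex O M H hO.le hMH]
      exact hO.coprime.mul_left hcop

end Irr.IsFaithful

end Ito

section Counting

variable {G : Type} [Group G] [Finite G]

namespace Irr

lemma sum_norm_apply_sq (x : G) :
    ∑ χ : Irr G, ‖χ x‖ ^ 2 = (Nat.card (centralizerOf x) : ℝ) := by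
  have hcard : Nat.card {h : G // h * x * h⁻¹ = x} = Nat.card (centralizerOf x) :=
    Nat.card_congr <| .subtypeEquivRight fun h => by
      rw [Subgroup.mem_centralizer_singleton_iff, mul_inv_eq_iff_eq_mul]
  have hsum := sum_apply_mul_conj_apply x x
  simp only [Complex.mul_conj, Complex.normSq_eq_norm_sq, hcard] at hsum
  exact_mod_cast hsum

lemma card_mul_deg_le_sum_norm_sq (χ : Irr G) (B : Subgroup G) [IsMulCommutative B] :
    (Nat.card B * χ.deg : ℝ) ≤ ∑ b : B, ‖χ b‖ ^ 2 := by
  have hres : IsChar B (res B χ) := χ.isChar.restrict B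
  have hdeg : χ.deg ≤ ∑ ψ : Irr B, mult (res B χ) ψ * mult (res B χ) ψ := by
    rw [hres.eq_sum_mult_mul_deg (n := χ.deg) χ.apply_one]
    exact sum_le_sum fun ψ _ => by
      rw [ψ.deg_eq_one, mul_one]
      exact Nat.le_mul_self _
  have hnorm := (charInner_self (res B χ)).symm.trans (hres.charInner_eq_sum_mult hres)
  have hnorm' : (Nat.card B : ℝ)⁻¹ * ∑ b : B, ‖χ b‖ ^ 2 =
      ((∑ ψ : Irr B, mult (res B χ) ψ * mult (res B χ) ψ : ℕ) : ℝ) := by exact_mod_cast hnorm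
  have hB : (0 : ℝ) < Nat.card B := by exact_mod_cast Nat.card_pos
  rw [← le_inv_mul_iff₀ hB, hnorm']
  exact_mod_cast hdeg

lemma sq_mul_card_add_sum_deg_sq_le {m : ℕ} {F : Finset (Irr G)} (h : ∀ χ ∉ F, m ≤ χ.deg) :
    m ^ 2 * Nat.card (Irr G) + ∑ χ ∈ F, χ.deg ^ 2 ≤ Nat.card G + m ^ 2 * #F := by
  have hcard : Nat.card (Irr G) = #Fᶜ + #F := by rw [card_compl_add_card, Nat.card_eq_fintype_card]
  have hsum := sum_compl_add_sum F fun χ => χ.deg ^ 2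
  have hle : #Fᶜ • m ^ 2 ≤ ∑ χ ∈ Fᶜ, χ.deg ^ 2 :=
    card_nsmul_le_sum _ _ _ fun χ hχ => Nat.pow_le_pow_left (h χ (mem_compl.1 hχ)) 2
  rw [sum_deg_sq] at hsum
  rw [smul_eq_mul] at hle
  rw [hcard]
  lia

end Irr

section PrimeOrder

omit [Finite G] in
lemma centralizerOf_eq_of_mem_zpowers {g x : G} (hg : (orderOf g).Prime)
    (hx : x ∈ Subgroup.zpowers g) (hx1 : x ≠ 1) : centralizerOf x = centralizerOf g := by
  have : Finite (Subgroup.zpowers g) := Nat.finite_of_card_ne_zero (by simp [hg.ne_zero])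
  have hle : Subgroup.zpowers x ≤ Subgroup.zpowers g := Subgroup.zpowers_le.2 hx
  have hzpowers : Subgroup.zpowers x = Subgroup.zpowers g := by
    refine Subgroup.eq_of_le_of_card_ge hle ?_
    rw [Nat.card_zpowers, Nat.card_zpowers, ((Nat.dvd_prime hg).1
      (orderOf_dvd_of_mem_zpowers hx)).resolve_left (orderOf_eq_one_iff.not.2 hx1)]
  rw [centralizerOf, ← Subgroup.centralizer_closure, ← Subgroup.zpowers_eq_closure, hzpowers,
    Subgroup.zpowers_eq_closure, Subgroup.centralizer_closure]

open scoped Classical in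
lemma Irr.card_filter_deg_lt_le {p : ℕ} (hp : p.Prime) {g : G} (hg : orderOf g = p) :
    #{χ : Irr G | χ.deg < p} ≤ Nat.card (centralizerOf g) := by
  set B := Subgroup.zpowers g
  have hB : Nat.card B = p := (Nat.card_zpowers g).trans hg
  have hp1 : (0 : ℝ) < p - 1 := sub_pos.2 (by exact_mod_cast hp.one_lt)
  have hrow (χ : Irr G) (hχ : χ.deg < p) :
      (p - 1 : ℝ) ≤ ∑ x ∈ (univ : Finset B).erase 1, ‖χ x‖ ^ 2 := by
    have h := χ.card_mul_deg_le_sum_norm_sq B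
    rw [← add_sum_erase _ _ (mem_univ 1), OneMemClass.coe_one, χ.apply_one, Complex.norm_natCast,
      hB] at h
    have hpos : (1 : ℝ) ≤ χ.deg := by exact_mod_cast χ.deg_pos
    have hlt : (χ.deg + 1 : ℝ) ≤ p := by exact_mod_cast hχ
    nlinarith
  have hcol (x : B) (hx : x ∈ univ.erase 1) :
      ∑ χ : Irr G, ‖χ x‖ ^ 2 = (Nat.card (centralizerOf g) : ℝ) := by
    rw [sum_norm_apply_sq, centralizerOf_eq_of_mem_zpowers (hg ▸ hp) x.2]
    exact_mod_cast ne_of_mem_erase hx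
  suffices h : (p - 1 : ℝ) * #{χ : Irr G | χ.deg < p} ≤ (p - 1) * Nat.card (centralizerOf g) by
    exact_mod_cast le_of_mul_le_mul_left h hp1
  calc (p - 1 : ℝ) * #{χ : Irr G | χ.deg < p}
      = ∑ χ : Irr G with χ.deg < p, (p - 1 : ℝ) := by rw [sum_const, nsmul_eq_mul, mul_comm]
    _ ≤ ∑ χ : Irr G with χ.deg < p, ∑ x ∈ (univ : Finset B).erase 1, ‖χ x‖ ^ 2 :=
        sum_le_sum fun χ hχ => hrow χ (mem_filter.1 hχ).2
    _ ≤ ∑ χ : Irr G, ∑ x ∈ (univ : Finset B).erase 1, ‖χ x‖ ^ 2 :=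
        sum_le_sum_of_subset_of_nonneg (subset_univ _) fun _ _ _ => by positivity
    _ = ∑ x ∈ (univ : Finset B).erase 1, ∑ χ : Irr G, ‖χ x‖ ^ 2 := sum_comm
    _ = (p - 1) * Nat.card (centralizerOf g) := by
        rw [sum_congr rfl hcol, sum_const, card_erase_of_mem (mem_univ _), card_univ,
          ← Nat.card_eq_fintype_card, hB, nsmul_eq_mul, Nat.cast_sub hp.one_lt.le, Nat.cast_one]

end PrimeOrder

section Simple

variable {p : ℕ}

omit [Finite G] in
lemma center_eq_bot [IsSimpleGroup G] (hG : ¬ IsMulCommutative G) : Subgroup.center G = ⊥ :=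
  (inferInstance : (Subgroup.center G).Normal).eq_bot_or_eq_top.resolve_right fun h =>
    hG (Subgroup.center_eq_top_iff.1 h)

lemma not_normal_sylow [IsSimpleGroup G] (hG : ¬ IsMulCommutative G) [Fact p.Prime]
    (hd : p ∣ Nat.card G) (P : Sylow p G) : ¬ (P : Subgroup G).Normal := by
  intro hn
  rcases hn.eq_bot_or_eq_top with h | h
  · apply P.not_dvd_index
    rwa [h, Subgroup.index_bot]
  · have hpG : IsPGroup p G := (h ▸ P.2 : IsPGroup p (⊤ : Subgroup G)).of_equiv Subgroup.topEquiv
    exact hpG.bot_lt_center.ne' (center_eq_bot hG)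

lemma lt_card_sylow [Fact p.Prime] {P : Sylow p G} (hP : ¬ (P : Subgroup G).Normal) :
    p < Nat.card (Sylow p G) := by
  have hne : Nat.card (Sylow p G) ≠ 1 := fun h => hP <| by
    rw [P.card_eq_index_normalizer, Subgroup.index_eq_one] at h
    exact Subgroup.normalizer_eq_top_iff.1 h
  have hpos : 0 < Nat.card (Sylow p G) := Nat.card_pos
  have hdvd := (Nat.modEq_iff_dvd' hpos).1 (card_sylow_modEq_one p G).symm
  have := Nat.le_of_dvd (by lia) hdvd
  lia

lemma mul_succ_le_card [Fact p.Prime] (hd : p ∣ Nat.card G) {P : Sylow p G}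
    (hP : ¬ (P : Subgroup G).Normal) : p * (p + 1) ≤ Nat.card G := by
  have hdvd : p ∣ Nat.card (Subgroup.normalizer ((P : Subgroup G) : Set G)) :=
    (P.dvd_card_of_dvd_card hd).trans (Subgroup.card_dvd_of_le Subgroup.le_normalizer)
  rw [← (Subgroup.normalizer ((P : Subgroup G) : Set G)).card_mul_index]
  exact Nat.mul_le_mul (Nat.le_of_dvd Nat.card_pos hdvd)
    ((lt_card_sylow hP).trans_eq P.card_eq_index_normalizer)

lemma sq_mul_lt_three_mul_of_le {p n k : ℕ} (hp : 2 ≤ p) (hn : p * (p + 1) ≤ n)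
    (h : (p - 1) ^ 2 * k + 1 ≤ n + (p - 1) ^ 2) (h4 : 4 * k + 1 ≤ n + 4) : p ^ 2 * k < 3 * n := by
  by_contra! hk
  obtain ⟨q, rfl⟩ : ∃ q, p = q + 1 := ⟨p - 1, by lia⟩
  rw [Nat.add_sub_cancel] at h
  rcases Nat.lt_or_ge q 3 with hq | hq
  · interval_cases q <;> lia
  have hq3 : (q + 1) ^ 2 + q ^ 2 ≤ 3 * q ^ 2 := by nlinarith
  have hnq : n ≤ (q + 1) ^ 2 := by
    refine Nat.le_of_mul_le_mul_left (c := q ^ 2) ?_ (by positivity)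
    nlinarith
  nlinarith

lemma Irr.exists_isFaithful_deg_lt [IsSimpleGroup G] (hG : ¬ IsMulCommutative G) (hp : p.Prime)
    (hd : p ∣ Nat.card G) (hk : 3 * Nat.card G ≤ p ^ 2 * Nat.card (Irr G)) :
    ∃ χ : Irr G, χ.IsFaithful ∧ χ.deg < p - 1 := by
  by_contra! hcon
  have : Fact p.Prime := ⟨hp⟩
  obtain ⟨P⟩ : Nonempty (Sylow p G) := inferInstance
  have hcount (m : ℕ) (hm : ∀ χ : Irr G, χ.IsFaithful → m ≤ χ.deg) :
      m ^ 2 * Nat.card (Irr G) + 1 ≤ Nat.card G + m ^ 2 := by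
    simpa [Irr.deg_one] using sq_mul_card_add_sum_deg_sq_le (F := {1}) fun χ hχ =>
      hm χ (isFaithful_of_ne_one (by simpa using hχ))
  exact hk.not_gt (sq_mul_lt_three_mul_of_le hp.two_le
    (mul_succ_le_card hd (not_normal_sylow hG hd P)) (hcount _ hcon)
    (hcount 2 fun χ hχ => hχ.two_le_deg hG))

end Simple

section TISylow

variable {p : ℕ}

namespace Irr.IsFaithful

variable {χ : Irr G} (hχ : χ.IsFaithful) (hp : p.Prime) (hd : χ.deg < p - 1)
include hχ hp hd

lemma mem_sylow_of_pow_eq_one (P : Sylow p G) {h : G} (hh : h ∈ P)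
    (hC : IsPSolvableSubgroup p (centralizerOf h)) {x : G} (hx : x ∈ centralizerOf h) {k : ℕ}
    (hxk : x ^ p ^ k = 1) : x ∈ P := by
  have := hχ.isMulCommutative_of_isPGroup hp (by lia) P.2
  obtain ⟨O, hO⟩ := hχ.exists_isNormalSylow hp hd hC
  have hPO : (P : Subgroup G) ≤ O := fun y hy => by
    obtain ⟨k, hk⟩ := exists_pow_pow_eq_one_of_mem P.2 hy
    exact hO.mem_of_pow_eq_one (Subgroup.mem_centralizer_singleton_iff.2
      (setLike_mul_comm (s := (P : Subgroup G)) hy hh)) hk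
  have hxO : x ∈ O := hO.mem_of_pow_eq_one hx hxk
  rwa [P.is_maximal' hO.isPGroup hPO] at hxO

lemma sylow_eq_of_mem (P Q : Sylow p G) {h : G} (hP : h ∈ P) (hQ : h ∈ Q)
    (hC : IsPSolvableSubgroup p (centralizerOf h)) : P = Q := by
  have := hχ.isMulCommutative_of_isPGroup hp (by lia) Q.2
  refine Sylow.ext (Q.is_maximal' P.2 fun y hy => ?_)
  obtain ⟨k, hk⟩ := exists_pow_pow_eq_one_of_mem Q.2 hy
  exact hχ.mem_sylow_of_pow_eq_one hp hd P hP hC (Subgroup.mem_centralizer_singleton_iff.2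
    (setLike_mul_comm (s := (Q : Subgroup G)) hy hQ)) hk

end Irr.IsFaithful

omit [Finite G] in
open scoped Pointwise in
lemma centralizerOf_le_normalizer_sylow {P : Sylow p G} {g : G} (hg : g ∈ P)
    (hTI : ∀ Q : Sylow p G, g ∈ Q → Q = P) :
    centralizerOf g ≤ Subgroup.normalizer ((P : Subgroup G) : Set G) := by
  intro x hx
  refine Sylow.smul_eq_iff_mem_normalizer.1 (hTI _ ?_)
  rw [Subgroup.mem_centralizer_singleton_iff] at hx
  exact ⟨g, hg, by simp [MulAut.smul_def, hx]⟩

open scoped Pointwise in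
lemma card_lt_card_sylow_of_inf_eq_bot {P Q : Sylow p G}
    (hPQ : (P : Subgroup G) ⊓ Q = ⊥) (hne : Q ≠ P) : Nat.card P < Nat.card (Sylow p G) := by
  have hP (x : P) : (x : G) • P = P :=
    Sylow.smul_eq_iff_mem_normalizer.2 (Subgroup.le_normalizer x.2)
  rw [Nat.card_eq_fintype_card, Nat.card_eq_fintype_card]
  refine Fintype.card_lt_of_injective_of_notMem (fun x : P => (x : G) • Q) (b := P) ?_ ?_
  · intro x y hxy
    have hstab : ((y : G)⁻¹ * x) • Q = Q := by rw [mul_smul, inv_smul_eq_iff]; exact hxy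
    rw [Sylow.smul_eq_iff_mem_normalizer] at hstab
    have hmem : (y : G)⁻¹ * x ∈ (P : Subgroup G) ⊓ Q := by
      rw [← IsPGroup.inf_normalizer_sylow P.2 Q]
      exact ⟨P.mul_mem (P.inv_mem y.2) x.2, hstab⟩
    rw [hPQ, Subgroup.mem_bot, inv_mul_eq_one] at hmem
    exact Subtype.ext hmem.symm
  · rintro ⟨x, hx⟩
    exact hne (smul_left_cancel (x : G) (hx.trans (hP x).symm))

lemma exists_sylow_ne [Fact p.Prime] {P : Sylow p G} (hP : ¬ (P : Subgroup G).Normal) :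
    ∃ Q : Sylow p G, Q ≠ P := by
  have : Nontrivial (Sylow p G) := Finite.one_lt_card_iff_nontrivial.1
    ((Fact.out : p.Prime).one_lt.trans (lt_card_sylow hP))
  exact exists_ne P

end TISylow

section SylowOrder

variable {p : ℕ}

lemma card_sylow_eq_prime_of_not_sq_le (hp : p.Prime) (hd : p ∣ Nat.card G) (P : Sylow p G)
    (h : ¬ p ^ 2 ≤ Nat.card P) : Nat.card P = p := by
  have : Fact p.Prime := ⟨hp⟩
  obtain ⟨a, ha⟩ := IsPGroup.iff_card.1 P.2
  have hdP : p ∣ p ^ a := ha ▸ P.dvd_card_of_dvd_card hd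
  rw [ha, Nat.pow_le_pow_iff_right hp.one_lt] at h
  obtain rfl | rfl : a = 0 ∨ a = 1 := by lia
  · exact absurd (Nat.dvd_one.1 hdP) hp.one_lt.ne'
  · rw [ha, pow_one]

lemma Irr.IsFaithful.card_sylow_eq_prime {χ : Irr G} (hχ : χ.IsFaithful) (hp : p.Prime)
    (hdeg : χ.deg < p - 1) (hd : p ∣ Nat.card G)
    (hk : 3 * Nat.card G ≤ p ^ 2 * Nat.card (Irr G))
    (hC : ∀ h : G, h ≠ 1 → IsPSolvableSubgroup p (centralizerOf h)) {P : Sylow p G}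
    (hP : ¬ (P : Subgroup G).Normal) : Nat.card P = p := by
  have : Fact p.Prime := ⟨hp⟩
  have hTI (Q R : Sylow p G) {h : G} (hh : h ≠ 1) (hQ : h ∈ Q) (hR : h ∈ R) : Q = R :=
    hχ.sylow_eq_of_mem hp hdeg Q R hQ hR (hC h hh)
  refine card_sylow_eq_prime_of_not_sq_le hp hd P fun hP2 => ?_
  obtain ⟨Q, hQ⟩ := exists_sylow_ne hP
  have hPQ : (P : Subgroup G) ⊓ Q = ⊥ := (Subgroup.eq_bot_iff_forall _).2 fun x hx => by
    by_contra hx1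
    exact hQ (hTI Q P hx1 hx.2 hx.1)
  obtain ⟨g, hg⟩ := exists_prime_orderOf_dvd_card' p (P.dvd_card_of_dvd_card hd)
  have hg' : orderOf (g : G) = p := (Subgroup.orderOf_coe g).trans hg
  have hg1 : (g : G) ≠ 1 := orderOf_eq_one_iff.not.1 (by rw [hg']; exact hp.one_lt.ne')
  have hcard : Nat.card (centralizerOf (g : G)) * (p ^ 2 + 1) ≤ Nat.card G := by
    rw [← (Subgroup.normalizer ((P : Subgroup G) : Set G)).card_mul_index]
    refine Nat.mul_le_mul (Subgroup.card_le_of_le (centralizerOf_le_normalizer_sylow g.2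
      fun Q hQ => hTI Q P hg1 hQ g.2)) ?_
    exact (hP2.trans_lt (card_lt_card_sylow_of_inf_eq_bot hPQ hQ)).trans_eq
      P.card_eq_index_normalizer
  have hcount := sq_mul_card_add_sum_deg_sq_le (m := p) (F := {χ : Irr G | χ.deg < p}) (by simp)
  have hsmall := Nat.mul_le_mul_left (p ^ 2) (card_filter_deg_lt_le hp hg')
  have hpos : 0 < Nat.card (centralizerOf (g : G)) := Nat.card_pos
  lia

end SylowOrder

end Counting

section SplitCentralizer

variable {G : Type} [Group G]

/-- The element `g` has prime order `p`, its centralizer is the product of `⟨g⟩` with the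
`p'`-group `K`, and `e` is the index of this centralizer in its normalizer. -/
structure IsSplitCentralizer (p e : ℕ) (g : G) (K : Subgroup G) : Prop where
  prime : p.Prime
  orderOf_eq : orderOf g = p
  le_centralizer : K ≤ centralizerOf g
  coprime : (Nat.card K).Coprime p
  exists_eq_mul_pow : ∀ c ∈ centralizerOf g, ∃ κ ∈ K, ∃ j : ℕ, c = κ * g ^ j
  card_normalizer : Nat.card (Subgroup.normalizer (centralizerOf g : Set G)) =
    e * Nat.card (centralizerOf g)

namespace IsSplitCentralizer

variable {p e : ℕ} {g : G} {K : Subgroup G}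

lemma pow_eq_one (hg : IsSplitCentralizer p e g K) : g ^ p = 1 := by
  rw [← hg.orderOf_eq, pow_orderOf_eq_one]

lemma ne_one (hg : IsSplitCentralizer p e g K) : g ≠ 1 := by
  rintro rfl
  exact hg.prime.one_lt.ne (by rw [← hg.orderOf_eq, orderOf_one])

lemma orderOf_selfCentral (hg : IsSplitCentralizer p e g K) : orderOf (selfCentral g) = p :=
  (Subgroup.orderOf_coe (selfCentral g)).symm.trans hg.orderOf_eq

lemma commute (hg : IsSplitCentralizer p e g K) {κ : G} (hκ : κ ∈ K) : Commute κ g :=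
  Subgroup.mem_centralizer_singleton_iff.1 (hg.le_centralizer hκ)

lemma exists_eq_pow (hg : IsSplitCentralizer p e g K) {x : G} (hx : x ∈ centralizerOf g)
    (hxp : x ^ p = 1) : ∃ j : ℕ, x = g ^ j := by
  obtain ⟨κ, hκ, j, rfl⟩ := hg.exists_eq_mul_pow x hx
  rw [((hg.commute hκ).pow_right j).mul_pow, pow_right_comm, hg.pow_eq_one, one_pow,
    mul_one] at hxp
  exact ⟨j, by rw [eq_one_of_mem_of_pow_eq_one hg.coprime hκ hxp, one_mul]⟩

lemma exists_conj_eq_pow_of_conj_mem (hg : IsSplitCentralizer p e g K) {h : G}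
    (hh : h * g * h⁻¹ ∈ centralizerOf g) : ∃ j : ℕ, h * g * h⁻¹ = g ^ j :=
  hg.exists_eq_pow hh (by rw [conj_pow, hg.pow_eq_one, mul_one, mul_inv_cancel])

lemma exists_conj_eq_pow (hg : IsSplitCentralizer p e g K) {h : G}
    (hh : h ∈ Subgroup.normalizer (centralizerOf g : Set G)) : ∃ j : ℕ, h * g * h⁻¹ = g ^ j :=
  hg.exists_conj_eq_pow_of_conj_mem
    ((Subgroup.mem_normalizer_iff.1 hh g).1 (selfCentral g).2)

lemma mem_normalizer_of_self_conj_mem (hg : IsSplitCentralizer p e g K) {h : G}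
    (hh : h * g * h⁻¹ ∈ centralizerOf g) :
    h ∈ Subgroup.normalizer (centralizerOf g : Set G) := by
  obtain ⟨j, hj⟩ := hg.exists_conj_eq_pow_of_conj_mem hh
  have hcentralizer : centralizerOf (h * g * h⁻¹) = centralizerOf g :=
    centralizerOf_eq_of_mem_zpowers (hg.orderOf_eq ▸ hg.prime)
      (hj ▸ Subgroup.npow_mem_zpowers g j) (by simpa using hg.ne_one)
  refine Subgroup.mem_normalizer_iff.2 fun c => ?_
  have hconj : h * c * h⁻¹ ∈ centralizerOf (h * g * h⁻¹) ↔ c ∈ centralizerOf g := by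
    rw [Subgroup.mem_centralizer_singleton_iff, Subgroup.mem_centralizer_singleton_iff]
    rw [conj_mul, conj_mul, mul_left_inj, mul_right_inj]
  rw [← hconj, hcentralizer]

lemma mem_normalizer_of_conj_mem (hg : IsSplitCentralizer p e g K) {y h : G}
    (hy : y ∈ centralizerOf g) (hyK : y ∉ K) (hh : h * y * h⁻¹ ∈ centralizerOf g) :
    h ∈ Subgroup.normalizer (centralizerOf g : Set G) := by
  obtain ⟨κ, hκ, j, rfl⟩ := hg.exists_eq_mul_pow y hy
  have hj : ¬ p ∣ j := by
    rintro ⟨t, rfl⟩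
    exact hyK (by rwa [pow_mul, hg.pow_eq_one, one_pow, mul_one])
  obtain ⟨m, hm⟩ := exists_mul_pow_pow_eq_of_commute (k := 1) (hg.commute hκ) hκ hg.prime
    hg.coprime (by rw [hg.orderOf_eq, pow_one]) hj
  refine hg.mem_normalizer_of_self_conj_mem ?_
  have := Subgroup.pow_mem _ hh m
  rwa [conj_pow, hm] at this

lemma normal_subgroupOf (hg : IsSplitCentralizer p e g K) :
    (K.subgroupOf (centralizerOf g)).Normal := by
  refine ⟨fun k hk c => ?_⟩
  obtain ⟨κ, hκ, j, hc⟩ := hg.exists_eq_mul_pow c c.2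
  have hkg : Commute (g ^ j) k := ((hg.commute hk).pow_right j).symm
  have : ((c * k * c⁻¹ : centralizerOf g) : G) = κ * k * κ⁻¹ := by
    push_cast
    rw [hc, mul_inv_rev, mul_assoc κ, hkg.eq]
    group
  rw [Subgroup.mem_subgroupOf, this]
  exact K.mul_mem (K.mul_mem hκ hk) (K.inv_mem hκ)

lemma exists_linear [Finite G] (hg : IsSplitCentralizer p e g K) :
    ∃ l : centralizerOf g →* ℂˣ, (∀ c : centralizerOf g, (c : G) ∈ K → l c = 1) ∧
      orderOf (l (selfCentral g)) = p := by
  have := hg.normal_subgroupOf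
  obtain ⟨l, hl, hlg⟩ := exists_le_ker_orderOf_eq (K := K.subgroupOf (centralizerOf g)) (k := 0)
    hg.prime (by rw [hg.orderOf_selfCentral, zero_add, pow_one])
    (by rw [Nat.card_congr (Subgroup.subgroupOfEquivOfLe hg.le_centralizer).toEquiv]
        exact hg.coprime)
    (fun c => by
      obtain ⟨κ, hκ, j, hc⟩ := hg.exists_eq_mul_pow c c.2
      exact ⟨⟨κ, hg.le_centralizer hκ⟩, hκ, j, Subtype.ext hc⟩)
  exact ⟨l, fun c hc => hl (Subgroup.mem_subgroupOf.2 hc), hlg⟩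

end IsSplitCentralizer

variable [Finite G]

lemma Irr.centralChar_smul {B : Subgroup G} (n : Subgroup.normalizer (B : Set G)) (ψ : Irr B)
    (x : B) : (n • ψ).centralChar x = ψ.centralChar (n⁻¹ • x) := by
  simp only [centralChar, smul_apply, smul_one]

lemma Irr.mem_centralizerOf_of_smul_eq_self {B : Subgroup G} {z : B}
    (hz : z ∈ Subgroup.center B) (hp : (orderOf z).Prime) {ψ : Irr B} (hψ : ψ.centralChar z ≠ 1)
    {n : Subgroup.normalizer (B : Set G)} {j : ℕ} (hj : n⁻¹ • z = z ^ j) (hn : n • ψ = ψ) :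
    (n : G) ∈ centralizerOf (z : G) := by
  have hω : ψ.centralChar z ^ j = ψ.centralChar z := by
    rw [← ψ.centralChar_pow hz, ← hj, ← centralChar_smul, hn]
  rcases j with _ | i
  · exact absurd (by simpa using hω.symm) hψ
  have : Fact (orderOf z).Prime := ⟨hp⟩
  have hi : ψ.centralChar z ^ i = 1 :=
    (mul_eq_right₀ (ψ.centralChar_ne_zero hz)).1 (by rwa [← pow_succ])
  have horder : orderOf (ψ.centralChar z) = orderOf z :=
    orderOf_eq_prime (ψ.centralChar_pow_eq_one hz (pow_orderOf_eq_one z)) hψ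
  rw [pow_succ, orderOf_dvd_iff_pow_eq_one.1 (horder ▸ orderOf_dvd_of_pow_eq_one hi), one_mul,
    inv_smul_eq_iff] at hj
  have hconj : (z : G) = n * z * (n : G)⁻¹ := congrArg Subtype.val hj
  exact Subgroup.mem_centralizer_singleton_iff.2 (eq_mul_inv_iff_mul_eq.1 hconj).symm

namespace IsSplitCentralizer

variable {p e : ℕ} {g : G} {K : Subgroup G} {ψ φ : Irr (centralizerOf g)}

lemma transporterCard_self (hg : IsSplitCentralizer p e g K)
    (hψ : ψ.centralChar (selfCentral g) ≠ 1) :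
    ψ.transporterCard ψ = Nat.card (centralizerOf g) :=
  Irr.transporterCard_self_eq_card fun n hn => by
    obtain ⟨j, hj⟩ := hg.exists_conj_eq_pow n⁻¹.2
    exact Irr.mem_centralizerOf_of_smul_eq_self (selfCentral_mem_center g)
      (hg.orderOf_selfCentral ▸ hg.prime) hψ (Subtype.ext hj) hn

lemma card_orbit (hg : IsSplitCentralizer p e g K) (hψ : ψ.centralChar (selfCentral g) ≠ 1) :
    Nat.card (MulAction.orbit (Subgroup.normalizer (centralizerOf g : Set G)) ψ) = e := by
  refine Nat.eq_of_mul_eq_mul_right (Nat.card_pos (α := centralizerOf g)) ?_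
  rw [← hg.card_normalizer, ← ψ.card_orbit_mul_transporterCard_self, hg.transporterCard_self hψ]

lemma centralChar_ne_one_of_mem_orbit (hg : IsSplitCentralizer p e g K)
    (hψ : ψ.centralChar (selfCentral g) ≠ 1)
    (hφ : φ ∈ MulAction.orbit (Subgroup.normalizer (centralizerOf g : Set G)) ψ) :
    φ.centralChar (selfCentral g) ≠ 1 := by
  obtain ⟨n, rfl⟩ := hφ
  intro h
  obtain ⟨i, hi⟩ := hg.exists_conj_eq_pow n.2
  have hn : n⁻¹ • selfCentral g ^ i = selfCentral g :=
    inv_smul_eq_iff.2 (Subtype.ext hi.symm)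
  have := (n • ψ).centralChar_pow (selfCentral_mem_center g) i
  rw [Irr.centralChar_smul, hn] at this
  exact hψ (by rw [this, h, one_pow])

lemma exists_finset_isLinked (hg : IsSplitCentralizer p e g K)
    (hψ : ψ.centralChar (selfCentral g) ≠ 1) :
    ∃ T : Finset (Irr (centralizerOf g)), p - 1 ≤ #T ∧
      ∀ α ∈ T, IsLinked ψ α ∧ α.centralChar (selfCentral g) ≠ 1 := by
  obtain ⟨l, hlK, hlg⟩ := hg.exists_linear
  refine ⟨{α ∈ ψ.twists l p | ¬ α.centralChar (selfCentral g) = 1}, ?_, fun α hα => ?_⟩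
  · have hone := Irr.card_filter_twists_le_one (ψ := ψ) (selfCentral_mem_center g) hlg 1
    have hsplit := card_filter_add_card_filter_not (s := ψ.twists l p)
      fun α => α.centralChar (selfCentral g) = 1
    rw [Irr.card_twists (selfCentral_mem_center g) hlg] at hsplit
    lia
  · rw [mem_filter] at hα
    exact ⟨.of_mem_twists hα.1 (fun x hx h hh =>
      hg.mem_normalizer_of_conj_mem x.2 (mt (hlK x) hx) hh) (hg.transporterCard_self hψ)
      (hg.transporterCard_self hα.2), hα.2⟩

variable {χ χ' : Irr G}

lemma mem_orbit_of_deg_lt (hg : IsSplitCentralizer p e g K) (hd : χ.deg + e < p - 1)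
    (hψ : ψ.centralChar (selfCentral g) ≠ 1) (hφ : φ.centralChar (selfCentral g) ≠ 1)
    (hχψ : 0 < mult (res _ χ) ψ) (hχφ : 0 < mult (res _ χ) φ) :
    φ ∈ MulAction.orbit (Subgroup.normalizer (centralizerOf g : Set G)) ψ := by
  obtain ⟨T, hT, hlink⟩ := hg.exists_finset_isLinked hψ
  obtain ⟨T', hT', hlink'⟩ := hg.exists_finset_isLinked hφ
  exact IsLinked.mem_orbit_of_deg_lt hg.card_normalizer (fun α hα => (hlink α hα).1)
    (fun α hα => (hlink' α hα).1) (hd.trans_le hT) (hd.trans_le hT') hχψ hχφ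

lemma mult_eq_one (hg : IsSplitCentralizer p e g K) (hd : χ.deg + e < p - 1)
    (hψ : ψ.centralChar (selfCentral g) ≠ 1) (hχψ : 0 < mult (res _ χ) ψ) :
    mult (res _ χ) ψ = 1 := by
  obtain ⟨T, hT, hlink⟩ := hg.exists_finset_isLinked hψ
  exact IsLinked.mult_eq_one_of_deg_lt hg.card_normalizer (fun α hα => (hlink α hα).1)
    (hd.trans_le hT) hχψ

lemma eq_of_mult_pos (hg : IsSplitCentralizer p e g K) (hd : χ.deg + e < p - 1)
    (hd' : χ'.deg + e < p - 1) (hψ : ψ.centralChar (selfCentral g) ≠ 1)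
    (hχψ : 0 < mult (res _ χ) ψ) (hχψ' : 0 < mult (res _ χ') ψ) : χ = χ' := by
  obtain ⟨T, hT, hlink⟩ := hg.exists_finset_isLinked hψ
  obtain ⟨α, hα, hzero, hαψ⟩ := IsLinked.exists_mult_eq_zero_notMem_orbit hg.card_normalizer
    (fun α hα => (hlink α hα).1) (hd.trans_le hT) ψ
  refine (hlink α hα).1.eq_of_mult_pos hχψ hχψ' hzero (Nat.eq_zero_of_not_pos fun hpos => hαψ ?_)
  exact hg.mem_orbit_of_deg_lt hd' hψ (hlink α hα).2 hχψ' hpos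

lemma exists_centralChar_ne_one (hg : IsSplitCentralizer p e g K) (hχ : χ.IsFaithful) :
    ∃ ψ : Irr (centralizerOf g), ψ.centralChar (selfCentral g) ≠ 1 ∧
      0 < mult (res _ χ) ψ := by
  by_contra! hall
  refine hg.ne_one (congrArg Subtype.val (hχ.eq_one_of_forall_mult_pos (z := selfCentral g)
    fun ψ hψ x => ?_))
  have hone : ψ.centralChar (selfCentral g) = 1 := by
    by_contra h
    exact hψ.not_ge (hall ψ h)
  rw [ψ.apply_mul_of_mem_center (selfCentral_mem_center g), hone, one_mul]

end IsSplitCentralizer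

end SplitCentralizer

section PrimeCyclic

lemma two_mul_card_mul_card_le {I : Type*} (s : Finset I) (m : I → ℕ) :
    (2 * (#{i ∈ s | m i = 0} * #{i ∈ s | m i ≠ 0}) : ℤ) ≤
      ∑ i ∈ s, ∑ j ∈ s, ((m i : ℤ) - m j) ^ 2 := by
  have hle (i j : I) : (if m i = 0 ∧ m j ≠ 0 then 1 else 0) +
      (if m j = 0 ∧ m i ≠ 0 then 1 else 0) ≤ ((m i : ℤ) - m j) ^ 2 := by
    rcases eq_or_ne ((m i : ℤ) - m j) 0 with h | h
    · rw [if_neg (by lia), if_neg (by lia), add_zero]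
      positivity
    · have : 0 < ((m i : ℤ) - m j) ^ 2 := by positivity
      split_ifs <;> lia
  refine le_trans (le_of_eq ?_) (sum_le_sum fun i _ => sum_le_sum fun j _ => hle i j)
  have hprod : ∑ i ∈ s, ∑ j ∈ s, (if m i = 0 ∧ m j ≠ 0 then 1 else 0 : ℤ) =
      #{i ∈ s | m i = 0} * #{i ∈ s | m i ≠ 0} := by
    rw [natCast_card_filter, natCast_card_filter, sum_mul_sum]
    simp only [ite_and, ite_mul, one_mul, zero_mul]
  simp only [sum_add_distrib]
  rw [sum_comm (f := fun i j => if m j = 0 ∧ m i ≠ 0 then (1 : ℤ) else 0), hprod]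
  ring

variable {G : Type} [Group G]

lemma centralizerOf_le_normalizer_zpowers (g : G) :
    centralizerOf g ≤ Subgroup.normalizer (Subgroup.zpowers g : Set G) := by
  refine Subgroup.le_normalizer_iff.2 fun c hc x hx => ?_
  obtain ⟨i, rfl⟩ := Subgroup.mem_zpowers_iff.1 hx
  have hcg : Commute c g := Subgroup.mem_centralizer_singleton_iff.1 hc
  rwa [(hcg.zpow_right i).eq, mul_inv_cancel_right]

lemma Irr.smul_ne_one [Finite G] {B : Subgroup G} (n : Subgroup.normalizer (B : Set G))
    {ψ : Irr B} (hψ : ψ ≠ 1) : n • ψ ≠ 1 := by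
  rw [Ne, smul_eq_iff_eq_inv_smul]
  exact fun h => hψ (h.trans (DFunLike.ext _ _ fun _ => rfl))

lemma zpowers_le_centralizerOf (g : G) : Subgroup.zpowers g ≤ centralizerOf g :=
  Subgroup.zpowers_le.2 (selfCentral g).2

namespace IsSplitCentralizer

variable {p e : ℕ} {g : G} {K : Subgroup G}

lemma normalizer_zpowers (hg : IsSplitCentralizer p e g K) :
    Subgroup.normalizer (Subgroup.zpowers g : Set G) =
      Subgroup.normalizer (centralizerOf g : Set G) := by
  refine le_antisymm (fun h hh => hg.mem_normalizer_of_self_conj_mem ?_) ?_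
  · exact zpowers_le_centralizerOf g
      ((Subgroup.mem_normalizer_iff.1 hh g).1 (Subgroup.mem_zpowers g))
  · refine Subgroup.le_normalizer_iff.2 fun h hh x hx => ?_
    obtain ⟨i, rfl⟩ := Subgroup.mem_zpowers_iff.1 hx
    obtain ⟨j, hj⟩ := hg.exists_conj_eq_pow hh
    rw [← conj_zpow, hj]
    exact Subgroup.zpow_mem _ (Subgroup.npow_mem_zpowers g j) i

lemma mem_normalizer_zpowers_of_conj_mem (hg : IsSplitCentralizer p e g K) {x h : G}
    (hx : x ∈ Subgroup.zpowers g) (hx1 : x ≠ 1) (hh : h * x * h⁻¹ ∈ Subgroup.zpowers g) :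
    h ∈ Subgroup.normalizer (Subgroup.zpowers g : Set G) := by
  rw [hg.normalizer_zpowers]
  refine hg.mem_normalizer_of_conj_mem (zpowers_le_centralizerOf g hx) (fun hxK => hx1 ?_)
    (zpowers_le_centralizerOf g hh)
  exact eq_one_of_mem_of_pow_eq_one hg.coprime hxK
    (orderOf_dvd_iff_pow_eq_one.1 (hg.orderOf_eq ▸ orderOf_dvd_of_mem_zpowers hx))

variable [Finite G] {μ ν : Irr (Subgroup.zpowers g)}

lemma centralChar_zpowers_ne_one (hμ : μ ≠ 1) :
    μ.centralChar ⟨g, Subgroup.mem_zpowers g⟩ ≠ 1 := by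
  refine fun hone => hμ (μ.eq_one_of_forall_apply_eq fun ⟨x, hx⟩ => ?_)
  obtain ⟨j, rfl⟩ := mem_powers_iff_mem_zpowers.2 hx
  have hz : ⟨g, Subgroup.mem_zpowers g⟩ ∈ Subgroup.center (Subgroup.zpowers g) :=
    Subgroup.mem_center_iff.2 fun y => setLike_mul_comm y.2 (Subgroup.mem_zpowers g) |> Subtype.ext
  have := μ.apply_of_mem_center (Subgroup.pow_mem _ hz j)
  rw [μ.centralChar_pow hz, hone, one_pow, one_mul, ← μ.apply_one] at this
  exact this

lemma hasTISupport_zpowers (hg : IsSplitCentralizer p e g K) : HasTISupport (⇑μ - ⇑ν) := by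
  intro x hx h hh
  refine hg.mem_normalizer_zpowers_of_conj_mem x.2 (fun hx1 => hx ?_) hh
  rw [show x = 1 from Subtype.ext hx1, Pi.sub_apply, μ.apply_one, ν.apply_one, μ.deg_eq_one,
    ν.deg_eq_one, sub_self]

lemma transporterCard_zpowers (hg : IsSplitCentralizer p e g K) (hμ : μ ≠ 1) :
    μ.transporterCard μ = Nat.card (centralizerOf g) := by
  rw [Irr.transporterCard, ← Nat.card_congr (Subgroup.subgroupOfEquivOfLe
    (centralizerOf_le_normalizer_zpowers g)).toEquiv]
  refine Nat.card_congr (Equiv.subtypeEquivRight fun n => ⟨fun hn => ?_, fun hn => ?_⟩)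
  · obtain ⟨j, hj⟩ := hg.exists_conj_eq_pow (h := (n⁻¹ : G))
      (inv_mem (hg.normalizer_zpowers ▸ n.2))
    refine Irr.mem_centralizerOf_of_smul_eq_self (z := ⟨g, Subgroup.mem_zpowers g⟩)
      (Subgroup.mem_center_iff.2 fun y => Subtype.ext (setLike_mul_comm y.2 ?_)) ?_
      (centralChar_zpowers_ne_one hμ) (Subtype.ext hj) hn
    · exact Subgroup.mem_zpowers g
    · rw [← Subgroup.orderOf_coe, hg.orderOf_eq]
      exact hg.prime
  · refine DFunLike.ext _ _ fun ⟨x, hx⟩ => ?_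
    obtain ⟨j, rfl⟩ := mem_powers_iff_mem_zpowers.2 hx
    have hng : Commute (n : G) g := Subgroup.mem_centralizer_singleton_iff.1 hn
    rw [Irr.smul_apply, inv_smul_eq_iff.2]
    exact Subtype.ext (eq_mul_inv_iff_mul_eq.2 (hng.pow_right j).eq.symm)

lemma card_orbit_zpowers (hg : IsSplitCentralizer p e g K) (hμ : μ ≠ 1) :
    Nat.card (MulAction.orbit (Subgroup.normalizer (Subgroup.zpowers g : Set G)) μ) = e := by
  refine Nat.eq_of_mul_eq_mul_right (Nat.card_pos (α := centralizerOf g)) ?_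
  rw [← hg.card_normalizer, ← hg.normalizer_zpowers, ← μ.card_orbit_mul_transporterCard_self,
    hg.transporterCard_zpowers hμ]

lemma card_irr_zpowers_erase_one (hg : IsSplitCentralizer p e g K) :
    #((univ : Finset (Irr (Subgroup.zpowers g))).erase 1) = p - 1 := by
  rw [card_erase_of_mem (mem_univ _), card_univ, ← Nat.card_eq_fintype_card,
    Irr.card_eq_of_isMulCommutative, Nat.card_zpowers, hg.orderOf_eq]

open scoped Classical in
lemma card_filter_mem_orbit_zpowers (hg : IsSplitCentralizer p e g K) (hμ : μ ≠ 1) :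
    #{ν | ν ∈ MulAction.orbit (Subgroup.normalizer (Subgroup.zpowers g : Set G)) μ} = e := by
  rw [← hg.card_orbit_zpowers hμ]
  exact (Nat.subtype_card _ fun _ => mem_filter_univ _).symm

open scoped Classical in
lemma filter_mem_orbit_zpowers_subset (hμ : μ ≠ 1) :
    ({ν | ν ∈ MulAction.orbit (Subgroup.normalizer (Subgroup.zpowers g : Set G)) μ} :
      Finset (Irr (Subgroup.zpowers g))) ⊆ univ.erase 1 := by
  intro ν hν
  obtain ⟨n, rfl⟩ := (mem_filter_univ _).1 hν
  exact mem_erase.2 ⟨Irr.smul_ne_one n hμ, mem_univ _⟩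

lemma le_card_filter_mult_zpowers (hg : IsSplitCentralizer p e g K) (χ : Irr G) {P : ℕ → Prop}
    [DecidablePred P] (h : ∃ μ : Irr (Subgroup.zpowers g), μ ≠ 1 ∧ P (mult (res _ χ) μ)) :
    e ≤ #{μ ∈ (univ : Finset (Irr (Subgroup.zpowers g))).erase 1 | P (mult (res _ χ) μ)} := by
  classical
  obtain ⟨μ, hμ, hPμ⟩ := h
  rw [← hg.card_filter_mem_orbit_zpowers hμ]
  refine card_le_card fun ν hν => mem_filter.2 ⟨filter_mem_orbit_zpowers_subset hμ hν, ?_⟩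
  obtain ⟨n, rfl⟩ := (mem_filter_univ _).1 hν
  rwa [Irr.mult_res_smul]

lemma le_card_filter_mult_eq_zero (hg : IsSplitCentralizer p e g K) {χ : Irr G}
    (hd : χ.deg < p - 1) :
    e ≤ #{μ ∈ (univ : Finset (Irr (Subgroup.zpowers g))).erase 1 | mult (res _ χ) μ = 0} := by
  refine hg.le_card_filter_mult_zpowers χ (P := fun n => n = 0) ?_
  have hcard := χ.card_le_deg_add_card_mult_eq_zero
    ((univ : Finset (Irr (Subgroup.zpowers g))).erase 1)
  rw [hg.card_irr_zpowers_erase_one] at hcard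
  obtain ⟨μ, hμ⟩ := card_pos.1 (show
    0 < #{μ ∈ (univ : Finset (Irr (Subgroup.zpowers g))).erase 1 | mult (res _ χ) μ = 0} by lia)
  rw [mem_filter, mem_erase] at hμ
  exact ⟨μ, hμ.1.1, hμ.2⟩

lemma le_card_filter_mult_ne_zero (hg : IsSplitCentralizer p e g K) {χ : Irr G}
    (hχ : χ.IsFaithful) :
    e ≤ #{μ ∈ (univ : Finset (Irr (Subgroup.zpowers g))).erase 1 | mult (res _ χ) μ ≠ 0} := by
  refine hg.le_card_filter_mult_zpowers χ (P := fun n => n ≠ 0) ?_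
  by_contra! hall
  refine hg.ne_one (congrArg Subtype.val (hχ.eq_one_of_forall_mult_pos
    (z := (⟨g, Subgroup.mem_zpowers g⟩ : Subgroup.zpowers g)) fun ψ hψ x => ?_))
  by_cases h : ψ = 1
  · rw [h, Irr.one_apply, Irr.one_apply]
  · exact absurd (hall ψ h) hψ.ne'

lemma card_filter_mult_add (hg : IsSplitCentralizer p e g K) (χ : Irr G) :
    #{μ ∈ (univ : Finset (Irr (Subgroup.zpowers g))).erase 1 | mult (res _ χ) μ = 0} +
      #{μ ∈ (univ : Finset (Irr (Subgroup.zpowers g))).erase 1 | mult (res _ χ) μ ≠ 0} =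
        p - 1 := by
  rw [← hg.card_irr_zpowers_erase_one]
  exact card_filter_add_card_filter_not _

lemma two_mul_le (hg : IsSplitCentralizer p e g K) {χ : Irr G} (hχ : χ.IsFaithful)
    (hd : χ.deg < p - 1) : 2 * e ≤ p - 1 := by
  have h0 := hg.le_card_filter_mult_eq_zero hd
  have h1 := hg.le_card_filter_mult_ne_zero hχ
  have hadd := hg.card_filter_mult_add χ
  lia

lemma le_sum_diffMult_sq (hg : IsSplitCentralizer p e g K) {χ : Irr G} (hχ : χ.IsFaithful)
    (hd : χ.deg < p - 1) :
    (2 * (e * (p - 1 - e) : ℕ) : ℤ) ≤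
      ∑ μ ∈ (univ : Finset (Irr (Subgroup.zpowers g))).erase 1,
        ∑ ν ∈ (univ : Finset (Irr (Subgroup.zpowers g))).erase 1, diffMult μ ν χ ^ 2 := by
  refine le_trans ?_ (two_mul_card_mul_card_le _ fun μ => mult (res _ χ) μ)
  obtain ⟨z, hz⟩ := Nat.exists_eq_add_of_le (hg.le_card_filter_mult_eq_zero hd)
  obtain ⟨w, hw⟩ := Nat.exists_eq_add_of_le (hg.le_card_filter_mult_ne_zero hχ)
  have hadd := hg.card_filter_mult_add χ
  rw [hz, hw] at hadd ⊢
  rw [show p - 1 - e = e + z + w by lia]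
  exact_mod_cast Nat.mul_le_mul_left 2 (by nlinarith [Nat.zero_le (z * w)])

open scoped Classical in
lemma mul_sum_diffMult_sq (hg : IsSplitCentralizer p e g K) (hμ : μ ≠ 1) (hν : ν ≠ 1) :
    (p * ∑ χ : Irr G, diffMult μ ν χ ^ 2 : ℤ) =
      if ν ∈ MulAction.orbit (Subgroup.normalizer (Subgroup.zpowers g : Set G)) μ then (0 : ℤ)
      else 2 * Nat.card (centralizerOf g) := by
  split_ifs with h
  · obtain ⟨n, rfl⟩ := h
    simp only [diffMult, Irr.mult_res_smul, sub_self, sq, mul_zero, sum_const_zero]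
  · have hsum := card_mul_sum_diffMult_mul (hg.hasTISupport_zpowers (μ := μ) (ν := ν)) μ ν
    rw [Nat.card_zpowers, hg.orderOf_eq, hg.transporterCard_zpowers hμ,
      hg.transporterCard_zpowers hν, Irr.transporterCard_eq_zero h,
      Irr.transporterCard_eq_zero (mt MulAction.mem_orbit_symm.1 h)] at hsum
    simp only [sq, hsum]
    ring

open scoped Classical in
lemma mul_sum_sum_diffMult_sq (hg : IsSplitCentralizer p e g K) :
    (p * ∑ χ : Irr G, ∑ μ ∈ (univ : Finset (Irr (Subgroup.zpowers g))).erase 1,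
      ∑ ν ∈ (univ : Finset (Irr (Subgroup.zpowers g))).erase 1, diffMult μ ν χ ^ 2 : ℤ) =
        (p - 1 : ℕ) * ((p - 1 - e : ℕ) * (2 * Nat.card (centralizerOf g))) := by
  rw [sum_comm, mul_sum, ← hg.card_irr_zpowers_erase_one, ← nsmul_eq_mul, ← sum_const]
  refine sum_congr rfl fun μ hμ => ?_
  rw [sum_comm, mul_sum, sum_congr rfl fun ν hν =>
    hg.mul_sum_diffMult_sq (ne_of_mem_erase hμ) (ne_of_mem_erase hν)]
  rw [sum_ite, sum_const_zero, zero_add, sum_const, nsmul_eq_mul,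
    ← hg.card_filter_mem_orbit_zpowers (ne_of_mem_erase hμ),
    ← card_sdiff_of_subset (filter_mem_orbit_zpowers_subset (ne_of_mem_erase hμ)), sdiff_eq_filter]
  simp only [mem_filter_univ]

lemma card_mul_le (hg : IsSplitCentralizer p e g K) {T : Finset (Irr G)}
    (hT : ∀ χ ∈ T, χ.IsFaithful ∧ χ.deg < p - 1) :
    #T * e * p ≤ (p - 1) * Nat.card (centralizerOf g) := by
  rcases T.eq_empty_or_nonempty with rfl | ⟨χ, hχ⟩
  · simp
  have hpos : 0 < 2 * (p - 1 - e) := by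
    have h2e := hg.two_mul_le (hT χ hχ).1 (hT χ hχ).2
    have := hg.prime.two_le
    lia
  refine Nat.le_of_mul_le_mul_left ?_ hpos
  have hsum := (card_nsmul_le_sum T _ _ fun χ hχ =>
    hg.le_sum_diffMult_sq (hT χ hχ).1 (hT χ hχ).2).trans
    (sum_le_univ_sum_of_nonneg fun χ => by positivity)
  have := (mul_le_mul_of_nonneg_left hsum (Int.natCast_nonneg p)).trans_eq
    hg.mul_sum_sum_diffMult_sq
  rw [nsmul_eq_mul] at this
  zify at this ⊢
  linear_combination this

end IsSplitCentralizer

end PrimeCyclic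

section NormBounds

lemma norm_sum_add_sq_le {ι : Type*} (s : Finset ι) (a : ι → ℂ) (t : ℂ) :
    ‖∑ i ∈ s, a i + t‖ ^ 2 ≤ (#s + 1) * (∑ i ∈ s, ‖a i‖ ^ 2 + ‖t‖ ^ 2) := by
  have hcs := sq_sum_le_card_mul_sum_sq (s := insertNone s) (f := fun o => ‖o.elim t a‖)
  rw [sum_insertNone, sum_insertNone, card_insertNone] at hcs
  calc ‖∑ i ∈ s, a i + t‖ ^ 2 ≤ (‖t‖ + ∑ i ∈ s, ‖a i‖) ^ 2 := by
        rw [add_comm]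
        gcongr
        exact (norm_add_le _ _).trans (by gcongr; exact norm_sum_le _ _)
    _ ≤ _ := by rwa [add_comm (∑ i ∈ s, ‖a i‖ ^ 2), ← Nat.cast_add_one]

variable {G : Type} [Group G] [Finite G]

lemma Irr.sum_norm_sum_sq (T : Finset (Irr G)) (m : Irr G → ℕ) :
    ∑ x : G, ‖∑ φ ∈ T, (m φ : ℂ) * φ x‖ ^ 2 = Nat.card G * ∑ φ ∈ T, (m φ : ℝ) ^ 2 := by
  have hself := charInner_self (∑ φ ∈ T, (m φ : ℂ) • ⇑φ)
  have hleft : charInner (∑ φ ∈ T, (m φ : ℂ) • ⇑φ) (∑ φ ∈ T, (m φ : ℂ) • ⇑φ) =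
      ((∑ φ ∈ T, (m φ : ℝ) ^ 2 : ℝ) : ℂ) := by
    rw [charInner_sum_left, Complex.ofReal_sum]
    refine sum_congr rfl fun φ hφ => ?_
    rw [_root_.charInner_smul_left, charInner_sum_right]
    simp only [charInner_smul_right, charInner_eq, mul_ite, mul_one, mul_zero, sum_ite_eq,
      if_pos hφ]
    simp [sq]
  rw [hleft, Complex.ofReal_inj, eq_inv_mul_iff_mul_eq₀ (by simp)] at hself
  simpa only [Finset.sum_apply, Pi.smul_apply, smul_eq_mul] using hself.symm

lemma Irr.sum_norm_sq (χ : Irr G) : ∑ x : G, ‖χ x‖ ^ 2 = Nat.card G := by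
  simpa using sum_norm_sum_sq {χ} fun _ => 1

open scoped Classical in
lemma card_filter_conj_mem_le {A : Finset G} {N : Subgroup G}
    (hA : ∀ y ∈ A, ∀ h : G, h * y * h⁻¹ ∈ A → h ∈ N) (z : G) :
    #{h : G | h * z * h⁻¹ ∈ A} ≤ Nat.card N := by
  rcases eq_empty_or_nonempty ({h | h * z * h⁻¹ ∈ A} : Finset G) with h | ⟨h₀, hh₀⟩
  · rw [h, card_empty]
    exact Nat.zero_le _
  rw [show Nat.card N = #{x | x ∈ N} from Nat.subtype_card _ fun _ => mem_filter_univ _]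
  refine card_le_card_of_injOn (· * h₀⁻¹) (fun h hh => ?_) (mul_left_injective _).injOn
  rw [mem_coe, mem_filter_univ] at hh ⊢
  refine hA _ ((mem_filter.1 hh₀).2) _ ?_
  convert hh using 1
  group

lemma Irr.sum_norm_sq_lt_card {A : Finset G} {N : Subgroup G} (hA1 : 1 ∉ A)
    (hA : ∀ y ∈ A, ∀ h : G, h * y * h⁻¹ ∈ A → h ∈ N) (χ : Irr G) :
    ∑ y ∈ A, ‖χ y‖ ^ 2 < Nat.card N := by
  classical
  have hconj (h : G) : ∑ y ∈ A, ‖χ y‖ ^ 2 =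
      ∑ z, if h * z * h⁻¹ ∈ A then ‖χ z‖ ^ 2 else 0 := by
    rw [← Fintype.sum_ite_mem, ← (MulAut.conj h).toEquiv.sum_comp]
    simp only [MulEquiv.toEquiv_eq_coe, MulEquiv.coe_toEquiv, MulAut.conj_apply, χ.apply_conj]
  have hle (z : G) : (∑ h, if h * z * h⁻¹ ∈ A then ‖χ z‖ ^ 2 else 0) ≤
      Nat.card N * ‖χ z‖ ^ 2 := by
    rw [← sum_filter, sum_const, nsmul_eq_mul]
    gcongr
    exact card_filter_conj_mem_le hA z
  have hlt : ∑ _h : G, ∑ y ∈ A, ‖χ y‖ ^ 2 < ∑ z : G, Nat.card N * ‖χ z‖ ^ 2 := by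
    rw [sum_congr rfl fun h _ => hconj h, sum_comm]
    refine sum_lt_sum (fun z _ => hle z) ⟨1, mem_univ _, ?_⟩
    simp only [mul_one, mul_inv_cancel, hA1, if_false, sum_const_zero, χ.apply_one,
      Complex.norm_natCast]
    have hN : (0 : ℝ) < Nat.card N := by exact_mod_cast Nat.card_pos
    have hχ : (0 : ℝ) < χ.deg := by exact_mod_cast χ.deg_pos
    positivity
  rw [sum_const, nsmul_eq_mul, card_univ, ← Nat.card_eq_fintype_card, ← mul_sum, χ.sum_norm_sq,
    mul_comm] at hlt
  exact lt_of_mul_lt_mul_right hlt (Nat.cast_nonneg _)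

open scoped Classical in
lemma orderOf_mul_sum_mem_le {z : G} {K : Subgroup G} (hzK : Disjoint (Subgroup.zpowers z) K)
    {R : G → ℝ} (hR0 : ∀ y, 0 ≤ R y) (hR : ∀ y, R (z * y) = R y) :
    orderOf z * ∑ y with y ∈ K, R y ≤ ∑ y, R y := by
  have hpow (j : ℕ) (y : G) : R (z ^ j * y) = R y := by
    induction j with
    | zero => rw [pow_zero, one_mul]
    | succ j ih => rw [pow_succ', mul_assoc, hR, ih]
  have hsum : ∑ q : Subgroup.zpowers z × K, R (q.1 * q.2) =
      orderOf z * ∑ y with y ∈ K, R y := by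
    rw [Fintype.sum_prod_type, sum_subtype _ (fun _ => mem_filter_univ _), ← Nat.card_zpowers,
      Nat.card_eq_fintype_card, ← card_univ, ← nsmul_eq_mul, ← sum_const]
    refine sum_congr rfl fun ⟨x, hx⟩ _ => sum_congr rfl fun y _ => ?_
    obtain ⟨j, rfl⟩ := mem_powers_iff_mem_zpowers.2 hx
    exact hpow j y
  rw [← hsum, ← sum_image (f := R) (Subgroup.mul_injective_of_disjoint hzK).injOn]
  exact sum_le_univ_sum_of_nonneg hR0

end NormBounds

section TrivialCentralChar

variable {G : Type} [Group G] [Finite G] {p e : ℕ} {g : G} {K : Subgroup G} {χ : Irr G}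
  {ψ : Irr (centralizerOf g)}

namespace IsSplitCentralizer

open scoped Classical in
lemma sum_norm_sq_notMem_lt (hg : IsSplitCentralizer p e g K) (χ : Irr G) :
    ∑ y with y ∉ K.subgroupOf (centralizerOf g), ‖χ y‖ ^ 2 < e * Nat.card (centralizerOf g) := by
  set A : Finset G := ({y | y ∉ K.subgroupOf (centralizerOf g)} : Finset (centralizerOf g)).map
    ⟨(↑), Subtype.val_injective⟩ with hA
  have hmem {y : G} : y ∈ A ↔ y ∈ centralizerOf g ∧ y ∉ K := by
    simp [hA, Subgroup.mem_subgroupOf, and_comm]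
  have hlt := χ.sum_norm_sq_lt_card (A := A)
    (N := Subgroup.normalizer (centralizerOf g : Set G)) (fun h1 => (hmem.1 h1).2 K.one_mem)
    fun y hy h hh => hg.mem_normalizer_of_conj_mem (hmem.1 hy).1 (hmem.1 hy).2 (hmem.1 hh).1
  rw [hA, sum_map, hg.card_normalizer] at hlt
  exact_mod_cast hlt

omit [Finite G] in
lemma disjoint_zpowers_subgroupOf (hg : IsSplitCentralizer p e g K) :
    Disjoint (Subgroup.zpowers (selfCentral g)) (K.subgroupOf (centralizerOf g)) := by
  refine Subgroup.disjoint_def.2 fun {x} hx hxK => Subtype.ext ?_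
  refine eq_one_of_mem_of_pow_eq_one hg.coprime hxK ?_
  have := orderOf_dvd_iff_pow_eq_one.1 (hg.orderOf_selfCentral ▸ orderOf_dvd_of_mem_zpowers hx)
  exact congrArg Subtype.val this

lemma norm_centralChar (hg : IsSplitCentralizer p e g K) (θ : Irr (centralizerOf g)) :
    ‖θ.centralChar (selfCentral g)‖ = 1 := by
  refine Complex.norm_eq_one_of_pow_eq_one (n := p) ?_ hg.prime.ne_zero
  exact θ.centralChar_pow_eq_one (selfCentral_mem_center g)
    (Subtype.ext hg.pow_eq_one)

open scoped Classical in
lemma sum_eq_sum_orbit_add_sum (hg : IsSplitCentralizer p e g K) (hd : χ.deg + e < p - 1)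
    (hψ : ψ.centralChar (selfCentral g) ≠ 1) (hχψ : 0 < mult (res _ χ) ψ) {M : Type*}
    [AddCommMonoid M] (f : Irr (centralizerOf g) → ℕ → M) (hf : ∀ θ, f θ 0 = 0) :
    ∑ θ, f θ (mult (res _ χ) θ) =
      ∑ θ with θ ∈ MulAction.orbit (Subgroup.normalizer (centralizerOf g : Set G)) ψ, f θ 1 +
        ∑ θ with θ.centralChar (selfCentral g) = 1, f θ (mult (res _ χ) θ) := by
  rw [add_comm, ← sum_filter_add_sum_filter_not univ fun θ : Irr (centralizerOf g) =>
    θ.centralChar (selfCentral g) = 1]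
  congr 1
  rw [← sum_subset (s₁ := univ.filter fun θ => θ ∈ MulAction.orbit
    (Subgroup.normalizer (centralizerOf g : Set G)) ψ)]
  · refine sum_congr rfl fun θ hθ => ?_
    obtain ⟨n, rfl⟩ := (mem_filter_univ _).1 hθ
    dsimp only
    rw [Irr.mult_res_smul, hg.mult_eq_one hd hψ hχψ]
  · exact monotone_filter_right _ fun θ _ => hg.centralChar_ne_one_of_mem_orbit hψ
  · intro θ hθ hnot
    rw [mem_filter_univ] at hθ hnot
    have : mult (res _ χ) θ = 0 := by
      by_contra h
      exact hnot (hg.mem_orbit_of_deg_lt hd hψ hθ hχψ (Nat.pos_of_ne_zero h))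
    rw [this, hf]

open scoped Classical in
lemma card_filter_mem_orbit (hg : IsSplitCentralizer p e g K)
    (hψ : ψ.centralChar (selfCentral g) ≠ 1) :
    #{θ | θ ∈ MulAction.orbit (Subgroup.normalizer (centralizerOf g : Set G)) ψ} = e := by
  rw [← hg.card_orbit hψ]
  exact (Nat.subtype_card _ fun _ => mem_filter_univ _).symm

lemma sum_norm_sq_res (hg : IsSplitCentralizer p e g K) (hd : χ.deg + e < p - 1)
    (hψ : ψ.centralChar (selfCentral g) ≠ 1) (hχψ : 0 < mult (res _ χ) ψ) :
    ∑ y : centralizerOf g, ‖χ y‖ ^ 2 = Nat.card (centralizerOf g) *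
      (e + ∑ θ with θ.centralChar (selfCentral g) = 1, (mult (res _ χ) θ : ℝ) ^ 2) := by
  have hexp (y : centralizerOf g) : χ y = ∑ θ, (mult (res _ χ) θ : ℂ) * θ y :=
    (χ.isChar.restrict _).apply_eq_sum_mult y
  simp only [hexp]
  rw [Irr.sum_norm_sum_sq, hg.sum_eq_sum_orbit_add_sum hd hψ hχψ (fun _ n => (n : ℝ) ^ 2) (by simp),
    sum_const, hg.card_filter_mem_orbit hψ]
  simp

open scoped Classical in
lemma mul_sum_norm_sq_mem_le (hg : IsSplitCentralizer p e g K) (hd : χ.deg + e < p - 1)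
    (hψ : ψ.centralChar (selfCentral g) ≠ 1) (hχψ : 0 < mult (res _ χ) ψ) :
    p * ∑ y with y ∈ K.subgroupOf (centralizerOf g), ‖χ y‖ ^ 2 ≤
      (e + 1) * ∑ y : centralizerOf g, ‖χ y‖ ^ 2 := by
  set O : Finset (Irr (centralizerOf g)) :=
    {θ | θ ∈ MulAction.orbit (Subgroup.normalizer (centralizerOf g : Set G)) ψ}
  set Φ : Finset (Irr (centralizerOf g)) := {θ | θ.centralChar (selfCentral g) = 1}
  set ξ : centralizerOf g → ℂ := fun y => ∑ θ ∈ Φ, (mult (res _ χ) θ : ℂ) * θ y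
  set R : centralizerOf g → ℝ := fun y => ∑ θ ∈ O, ‖θ y‖ ^ 2 + ‖ξ y‖ ^ 2
  have hO : #O = e := hg.card_filter_mem_orbit hψ
  have hχ (y : centralizerOf g) : ‖χ y‖ ^ 2 ≤ (e + 1) * R y := by
    have := (χ.isChar.restrict (centralizerOf g)).apply_eq_sum_mult y
    rw [hg.sum_eq_sum_orbit_add_sum hd hψ hχψ (fun θ n => (n : ℂ) * θ y) (by simp)] at this
    simp only [Nat.cast_one, one_mul] at this
    rw [← hO, show χ y = _ from this]
    exact norm_sum_add_sq_le O (fun θ => θ y) (ξ y)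
  have hR (y : centralizerOf g) : R (selfCentral g * y) = R y := by
    have hz := selfCentral_mem_center g
    have hξ : ξ (selfCentral g * y) = ξ y := sum_congr rfl fun θ hθ => by
      rw [θ.apply_mul_of_mem_center hz, (mem_filter_univ _).1 hθ, one_mul]
    simp only [R, hξ, Irr.apply_mul_of_mem_center _ hz, norm_mul, hg.norm_centralChar, one_mul]
  have hsum : ∑ y, R y = ∑ y : centralizerOf g, ‖χ y‖ ^ 2 := by
    rw [hg.sum_norm_sq_res hd hψ hχψ, sum_add_distrib, sum_comm,
      sum_congr rfl fun θ _ => θ.sum_norm_sq, sum_const, hO, Irr.sum_norm_sum_sq]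
    ring
  calc _ ≤ p * ∑ y with y ∈ K.subgroupOf (centralizerOf g), (e + 1) * R y := by
        gcongr with y
        exact hχ y
    _ = (e + 1) * (orderOf (selfCentral g) *
        ∑ y with y ∈ K.subgroupOf (centralizerOf g), R y) := by
        rw [← mul_sum, hg.orderOf_selfCentral]
        ring
    _ ≤ _ := by
        rw [← hsum]
        gcongr
        exact orderOf_mul_sum_mem_le hg.disjoint_zpowers_subgroupOf (fun y => by positivity) hR

lemma mult_eq_zero_of_centralChar_eq_one (hg : IsSplitCentralizer p e g K) (hχ : χ.IsFaithful)
    (hd : χ.deg + e < p - 1) (hpe : (e + 1) ^ 2 ≤ p) {φ : Irr (centralizerOf g)}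
    (hφ : φ.centralChar (selfCentral g) = 1) : mult (res _ χ) φ = 0 := by
  classical
  obtain ⟨ψ, hψ, hχψ⟩ := hg.exists_centralChar_ne_one hχ
  by_contra hne
  set x := ∑ θ : Irr (centralizerOf g) with θ.centralChar (selfCentral g) = 1,
    mult (res _ χ) θ ^ 2 with hx
  have hxpos : 1 ≤ x := (Nat.one_le_pow _ _ (Nat.pos_of_ne_zero hne)).trans
    (single_le_sum (f := fun θ => mult (res _ χ) θ ^ 2) (fun _ _ => Nat.zero_le _)
      ((mem_filter_univ φ).2 hφ))
  have hmem := hg.mul_sum_norm_sq_mem_le hd hψ hχψ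
  have hnotMem := hg.sum_norm_sq_notMem_lt χ
  have hadd := sum_filter_add_sum_filter_not univ
    (fun y => y ∈ K.subgroupOf (centralizerOf g)) fun y => ‖χ y‖ ^ 2
  have hxcast : ∑ θ with θ.centralChar (selfCentral g) = 1, (mult (res _ χ) θ : ℝ) ^ 2 = x := by
    rw [hx]
    push_cast
    rfl
  rw [hg.sum_norm_sq_res hd hψ hχψ, hxcast] at hmem hadd
  have hp : (0 : ℝ) < p := by exact_mod_cast hg.prime.pos
  have hlt : (Nat.card (centralizerOf g) * (p * x) : ℝ) <
      Nat.card (centralizerOf g) * ((e + 1) * (e + x)) := by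
    nlinarith
  have : p * x < (e + 1) * (e + x) := by
    exact_mod_cast lt_of_mul_lt_mul_left hlt (Nat.cast_nonneg _)
  nlinarith [Nat.mul_le_mul_right x hpe, Nat.mul_le_mul_left (e * (e + 1)) hxpos]

end IsSplitCentralizer

end TrivialCentralChar

section CountingInequalities

variable {p e b c t k q N D : ℤ}

lemma card_mul_three_mul_sq_sub_sq_le (hk : 3 * N ≤ p ^ 2 * k)
    (hc : b ^ 2 * k + 1 + t * D ≤ N + b ^ 2 * (1 + t)) :
    N * (3 * b ^ 2 - p ^ 2) ≤ p ^ 2 * (b ^ 2 - 1 + t * (b ^ 2 - D)) := by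
  linarith [mul_le_mul_of_nonneg_left hk (sq_nonneg b),
    mul_le_mul_of_nonneg_left hc (sq_nonneg p)]

lemma poly_lt_of_le_sq_add_two_mul (he : 2 ≤ e) (h2e : 2 * e ≤ p - 1) (hp8 : p ≠ 8)
    (hpe : p ≤ e ^ 2 + 2 * e) :
    e * p ^ 2 * (p - 2) + p * (p - 1) * (p - 3) * (p + 1) <
      e ^ 2 * (p + 1) * (2 * p ^ 2 - 6 * p + 3) := by
  rcases le_or_gt 4 e with h4 | h4
  · have hle : p * ((p - 1) * (p - 3) * (p + 1)) ≤
        (e ^ 2 + 2 * e) * ((p - 1) * (p - 3) * (p + 1)) :=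
      mul_le_mul_of_nonneg_right hpe <| mul_nonneg
        (mul_nonneg (by linarith) (by linarith)) (by linarith)
    have hlt : p ^ 2 * (p - 2) <
        (p + 1) * (e * (2 * p ^ 2 - 6 * p + 3) - (e + 2) * (p ^ 2 - 4 * p + 3)) := by
      obtain ⟨y, hy, rfl⟩ : ∃ y, 0 ≤ y ∧ e = 4 + y := ⟨e - 4, by linarith, by ring⟩
      obtain ⟨x, hx, rfl⟩ : ∃ x, 0 ≤ x ∧ p = 9 + x := ⟨p - 9, by linarith, by ring⟩
      rw [← sub_pos]
      ring_nf
      positivity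
    linarith [mul_lt_mul_of_pos_left hlt (by linarith : 0 < e)]
  · have hp5 : 5 ≤ p := by linarith
    have hp15 : p ≤ 15 := by nlinarith
    interval_cases e <;> interval_cases p <;> lia

lemma succ_sq_le_of_card_mul_le (he : 2 ≤ e) (h2e : 2 * e ≤ p - 1) (hp8 : p ≠ 8) (hpc : p ≤ c)
    (ht : t * e * p ≤ (p - 1) * c) (hN : (p + 1) * e * c ≤ N)
    (hc : N * (3 * (p - 1) ^ 2 - p ^ 2) ≤
      p ^ 2 * ((p - 1) ^ 2 - 1 + t * ((p - 1) ^ 2 - 4))) :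
    (e + 1) ^ 2 ≤ p := by
  by_contra! hlt
  have hpoly := poly_lt_of_le_sq_add_two_mul he h2e hp8 (by linarith)
  have hlower : e * ((p + 1) * e * c * (3 * (p - 1) ^ 2 - p ^ 2)) ≤
      e * (N * (3 * (p - 1) ^ 2 - p ^ 2)) :=
    mul_le_mul_of_nonneg_left (mul_le_mul_of_nonneg_right hN (by nlinarith)) (by linarith)
  have hcount := mul_le_mul_of_nonneg_left hc (by linarith : 0 ≤ e)
  have hte : t * e * p * (p * ((p - 1) ^ 2 - 4)) ≤ (p - 1) * c * (p * ((p - 1) ^ 2 - 4)) :=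
    mul_le_mul_of_nonneg_right ht (mul_nonneg (by linarith) (by nlinarith))
  have hconst : p * (e * p ^ 2 * (p - 2)) ≤ c * (e * p ^ 2 * (p - 2)) :=
    mul_le_mul_of_nonneg_right hpc
      (mul_nonneg (mul_nonneg (by linarith) (sq_nonneg p)) (by linarith))
  linarith [mul_lt_mul_of_pos_left hpoly (by linarith : 0 < c)]

lemma mul_le_of_card_mul_le (hp : 0 < p) (hpc : p ≤ c) (ht : 0 ≤ t) (hq : 0 ≤ q)
    (hqD : q ≤ D) (hqb : q ≤ b ^ 2) (hb : p ^ 2 ≤ 3 * b ^ 2) (hD : t * D ≤ e * c)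
    (hN : (p + 1) * e * c ≤ N)
    (hc : N * (3 * b ^ 2 - p ^ 2) ≤ p ^ 2 * (b ^ 2 - 1 + t * (b ^ 2 - D))) :
    (p + 1) * (3 * b ^ 2 - p ^ 2) * (e * q) ≤ p * b ^ 2 * q + p ^ 2 * e * (b ^ 2 - q) := by
  have htq : t * q ≤ t * D := mul_le_mul_of_nonneg_left hqD ht
  have hlower : (p + 1) * e * c * (3 * b ^ 2 - p ^ 2) * q ≤
      N * (3 * b ^ 2 - p ^ 2) * q :=
    mul_le_mul_of_nonneg_right (mul_le_mul_of_nonneg_right hN (by linarith)) hq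
  have hupper : N * (3 * b ^ 2 - p ^ 2) * q ≤ p ^ 2 * (b ^ 2 * q + t * q * (b ^ 2 - q)) := by
    have := mul_le_mul_of_nonneg_left
      (mul_le_mul_of_nonneg_left htq hq) (sq_nonneg p)
    linarith [mul_le_mul_of_nonneg_right hc hq, mul_nonneg (sq_nonneg p) hq]
  have htD : p ^ 2 * (t * q * (b ^ 2 - q)) ≤ p ^ 2 * (e * c * (b ^ 2 - q)) :=
    mul_le_mul_of_nonneg_left
      (mul_le_mul_of_nonneg_right (htq.trans hD) (sub_nonneg.2 hqb)) (sq_nonneg p)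
  have hconst : p * (p * b ^ 2 * q) ≤ c * (p * b ^ 2 * q) :=
    mul_le_mul_of_nonneg_right hpc (by positivity)
  refine le_of_mul_le_mul_left ?_ (hp.trans_le hpc)
  linarith

lemma two_mul_le_three_mul_of_succ_sq_le (he : 2 ≤ e) (hpe : (e + 1) ^ 2 ≤ p) :
    2 * p ≤ 3 * (p - 1 - e) := by
  nlinarith

lemma sq_le_three_mul_sq_of_succ_sq_le (he : 2 ≤ e) (hpe : (e + 1) ^ 2 ≤ p) :
    p ^ 2 ≤ 3 * (p - 1 - e) ^ 2 := by
  have := two_mul_le_three_mul_of_succ_sq_le he hpe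
  nlinarith

lemma not_card_mul_le (he : 2 ≤ e) (hpe : (e + 1) ^ 2 ≤ p) (hpc : p ≤ c)
    (hN : (p + 1) * e * c ≤ N) :
    ¬ N * (3 * (p - 1 - e) ^ 2 - p ^ 2) ≤ p ^ 2 * ((p - 1 - e) ^ 2 - 1) := by
  intro hc
  have hp : 0 < p := by nlinarith
  have hb := two_mul_le_three_mul_of_succ_sq_le he hpe
  have hle := mul_le_of_card_mul_le (t := 0) (D := (p - 1 - e) ^ 2) hp hpc le_rfl
    (sq_nonneg _) le_rfl le_rfl (sq_le_three_mul_sq_of_succ_sq_le he hpe)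
    (by rw [zero_mul]; nlinarith) hN (by simpa using hc)
  have hpos : 0 < (p - 1 - e) ^ 2 := by nlinarith
  have hcancel : (p + 1) * (3 * (p - 1 - e) ^ 2 - p ^ 2) * e ≤ p * (p - 1 - e) ^ 2 := by
    refine le_of_mul_le_mul_right ?_ hpos
    linarith
  have hsq : 3 * (p - 1 - e) ^ 2 ≤ 4 * (3 * (p - 1 - e) ^ 2 - p ^ 2) := by nlinarith
  have hge : (p + 1) * (3 * (p - 1 - e) ^ 2 - p ^ 2) * 2 ≤
      (p + 1) * (3 * (p - 1 - e) ^ 2 - p ^ 2) * e := by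
    gcongr
    nlinarith
  nlinarith

lemma poly_lt_of_four_le (he : 4 ≤ e) (hpe : (e + 1) ^ 2 ≤ p) (hb : b = p - 1 - e) :
    p * b ^ 2 * (b + 1) + p ^ 2 * e * (b ^ 2 - (b + 1)) <
      (p + 1) * (3 * b ^ 2 - p ^ 2) * (e * (b + 1)) := by
  subst hb
  obtain ⟨y, hy, rfl⟩ : ∃ y, 0 ≤ y ∧ e = 4 + y := ⟨e - 4, by linarith, by ring⟩
  obtain ⟨x, hx, rfl⟩ : ∃ x, 0 ≤ x ∧ p = (4 + y + 1) ^ 2 + x :=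
    ⟨p - (4 + y + 1) ^ 2, by linarith, by ring⟩
  rw [← sub_pos]
  ring_nf
  positivity

lemma poly_lt_of_nineteen_le (he : 2 ≤ e) (hpe : (e + 1) ^ 2 ≤ p) (hp : 19 ≤ p)
    (hb : b = p - 1 - e) :
    p * b ^ 2 * (b + 1) + p ^ 2 * e * (b ^ 2 - (b + 1)) <
      (p + 1) * (3 * b ^ 2 - p ^ 2) * (e * (b + 1)) := by
  rcases le_or_gt 4 e with h4 | h4
  · exact poly_lt_of_four_le h4 hpe hb
  subst hb
  obtain ⟨x, hx, rfl⟩ : ∃ x, 0 ≤ x ∧ p = 19 + x := ⟨p - 19, by linarith, by ring⟩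
  rw [← sub_pos]
  interval_cases e <;> ring_nf <;> positivity

lemma sq_le_of_card_mul_le {f : ℤ} (he : 2 ≤ e) (hpe : (e + 1) ^ 2 ≤ p) (hpc : p ≤ c)
    (hb : b = p - 1 - e) (ht : 0 ≤ t) (hf : 1 ≤ f) (hfb : e * f ≤ b)
    (hD : t * (e * f) ^ 2 ≤ e * c) (hN : (p + 1) * e * c ≤ N)
    (hc : N * (3 * b ^ 2 - p ^ 2) ≤ p ^ 2 * (b ^ 2 - 1 + t * (b ^ 2 - (e * f) ^ 2))) :
    (e * f) ^ 2 ≤ b := by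
  by_contra! hlt
  have hp : 0 < p := by nlinarith
  have hDb : (e * f) ^ 2 ≤ b ^ 2 := pow_le_pow_left₀ (by positivity) hfb 2
  have hbound {q : ℤ} (hq : 0 ≤ q) (hqD : q ≤ (e * f) ^ 2) :=
    mul_le_of_card_mul_le hp hpc ht hq hqD (hqD.trans hDb)
      (hb ▸ sq_le_three_mul_sq_of_succ_sq_le he hpe) hD hN hc
  rcases le_or_gt 19 p with h19 | h19
  · exact (poly_lt_of_nineteen_le he hpe h19 hb).not_ge (hbound (by nlinarith) hlt)
  have hf2 : 2 ≤ f := by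
    by_contra! hf2
    obtain rfl : f = 1 := by linarith
    nlinarith
  have hle := hbound (q := (2 * e) ^ 2) (by positivity)
    (pow_le_pow_left₀ (by positivity) (by nlinarith) 2)
  have he3 : e ≤ 3 := by nlinarith
  subst hb
  clear hbound hD hc hN
  interval_cases e <;> interval_cases p <;> norm_num at hle

end CountingInequalities

section CyclicSylow

variable {G : Type} [Group G] {p : ℕ} [Fact p.Prime]

lemma exists_eq_zpowers_of_card_eq_prime {P : Subgroup G} (hP : Nat.card P = p) :
    ∃ g : G, orderOf g = p ∧ P = Subgroup.zpowers g := by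
  have : IsCyclic P := isCyclic_of_prime_card hP
  obtain ⟨g, rfl⟩ := (Subgroup.isCyclic_iff_exists_zpowers_eq_top P).1 this
  exact ⟨g, (Nat.card_zpowers g).symm.trans hP, rfl⟩

variable [Finite G]

lemma isNormalSylow_zpowers {g : G} {P : Sylow p G} (hP : (P : Subgroup G) = Subgroup.zpowers g) :
    IsNormalSylow p (Subgroup.zpowers g) (centralizerOf g) where
  le := zpowers_le_centralizerOf g
  isPGroup := hP ▸ P.2
  le_normalizer := centralizerOf_le_normalizer_zpowers g
  coprime := .symm <| (Nat.Prime.coprime_iff_not_dvd Fact.out).2 fun hdvd =>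
    P.not_dvd_index (hP ▸ hdvd.trans (Subgroup.relIndex_dvd_index_of_le
      (zpowers_le_centralizerOf g)))

lemma IsNormalSylow.exists_isSplitCentralizer {g : G}
    (hg : orderOf g = p) (hO : IsNormalSylow p (Subgroup.zpowers g) (centralizerOf g)) :
    ∃ e K, IsSplitCentralizer p e g K := by
  have hcomm (z) (hz : z ∈ centralizerOf g) : Commute g z :=
    (Subgroup.mem_centralizer_singleton_iff.1 hz).symm
  obtain ⟨K, hKp, hK, hgen⟩ := hO.exists_complement Fact.out <| by
    rintro _ ⟨j, rfl⟩ z hz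
    exact (hcomm z hz).zpow_left j
  have hKle : K ≤ centralizerOf g := fun κ hκ => ((hK κ).1 hκ).1
  obtain ⟨e, he⟩ := Subgroup.card_dvd_of_le (Subgroup.le_normalizer (H := centralizerOf g))
  refine ⟨e, K, Fact.out, hg, hKle, hKp, fun c hc => ?_, he.trans (mul_comm _ _)⟩
  obtain ⟨o, ho, κ, hκ, rfl⟩ := hgen c hc
  obtain ⟨j, rfl⟩ := mem_powers_iff_mem_zpowers.2 ho
  exact ⟨κ, hκ, j, ((hcomm κ (hKle hκ)).pow_left j).eq⟩

lemma not_normalizer_sylow_le_centralizer [IsSimpleGroup G] (hG : ¬ IsMulCommutative G)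
    (hd : p ∣ Nat.card G) (P : Sylow p G) :
    ¬ Subgroup.normalizer ((P : Subgroup G) : Set G) ≤
      Subgroup.centralizer ((P : Subgroup G) : Set G) := by
  intro hle
  have hker := MonoidHom.ker_transferSylow_isComplement' P hle
  apply not_normal_sylow hG hd P
  rcases (inferInstance : (MonoidHom.transferSylow P hle).ker.Normal).eq_bot_or_eq_top with h | h
  · rw [h, Subgroup.isComplement'_bot_left] at hker
    rw [hker]
    infer_instance
  · rw [h, Subgroup.isComplement'_top_left] at hker
    rw [hker]
    infer_instance

lemma exists_isSplitCentralizer_two_le [IsSimpleGroup G]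
    (hG : ¬ IsMulCommutative G) {P : Sylow p G} (hP : Nat.card P = p) :
    ∃ (e : ℕ) (g : G) (K : Subgroup G), IsSplitCentralizer p e g K ∧ 2 ≤ e ∧
      (p + 1) * e * Nat.card (centralizerOf g) ≤ Nat.card G := by
  obtain ⟨g, hg, hPg⟩ := exists_eq_zpowers_of_card_eq_prime hP
  obtain ⟨e, K, hgK⟩ := (isNormalSylow_zpowers hPg).exists_isSplitCentralizer hg
  have hd : p ∣ Nat.card G := hP ▸ Subgroup.card_subgroup_dvd_card (P : Subgroup G)
  have hpos : 0 < Nat.card (Subgroup.normalizer (centralizerOf g : Set G)) := Nat.card_pos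
  refine ⟨e, g, K, hgK, ?_, ?_⟩
  · by_contra! he
    have he0 : e ≠ 0 := by
      rintro rfl
      exact hpos.ne' (by rw [hgK.card_normalizer, zero_mul])
    obtain rfl : e = 1 := by lia
    have heq : centralizerOf g = Subgroup.normalizer (centralizerOf g : Set G) :=
      Subgroup.eq_of_le_of_card_ge Subgroup.le_normalizer
        (by rw [hgK.card_normalizer, one_mul])
    apply not_normalizer_sylow_le_centralizer hG hd P
    rw [hPg, hgK.normalizer_zpowers, ← heq, Subgroup.zpowers_eq_closure,
      Subgroup.centralizer_closure]
  · have hlt : p < (Subgroup.normalizer (centralizerOf g : Set G)).index := by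
      rw [← hgK.normalizer_zpowers, ← hPg]
      exact (lt_card_sylow (not_normal_sylow hG hd P)).trans_eq P.card_eq_index_normalizer
    calc (p + 1) * e * Nat.card (centralizerOf g)
        = (p + 1) * Nat.card (Subgroup.normalizer (centralizerOf g : Set G)) := by
          rw [hgK.card_normalizer, mul_assoc]
      _ ≤ _ := Nat.mul_le_mul_right _ hlt
      _ = Nat.card G := Subgroup.index_mul_card _

end CyclicSylow

section LowDegree

variable {G : Type} [Group G] [Finite G] {p : ℕ}

namespace Irr

lemma mult_mul_conj_one (χ : Irr G) : mult (fun x => χ x * conj (χ x)) 1 = 1 := by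
  have h := (χ.isChar.mul χ.isChar.conj).charInner_eq_mult 1
  rw [show charInner (fun x => χ x * conj (χ x)) (1 : Irr G) = charInner χ χ by simp [charInner],
    charInner_eq, if_pos rfl] at h
  exact_mod_cast h.symm

lemma deg_lt_sq_of_mult_pos {χ χ' : Irr G} (hχ' : χ' ≠ 1)
    (h : 0 < mult (fun x => χ x * conj (χ x)) χ') : χ'.deg < χ.deg ^ 2 := by
  have hdeg := (χ.isChar.mul χ.isChar.conj).eq_sum_mult_mul_deg (n := χ.deg ^ 2)
    (by simp [χ.apply_one, sq])
  rw [hdeg]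
  calc χ'.deg < 1 + χ'.deg := by lia
    _ ≤ ∑ φ ∈ {1, χ'}, mult (fun x => χ x * conj (χ x)) φ * φ.deg := by
        rw [sum_pair hχ'.symm, χ.mult_mul_conj_one, deg_one]
        exact Nat.add_le_add_left (Nat.le_mul_of_pos_left _ h) 1
    _ ≤ _ := sum_le_univ_sum_of_nonneg fun _ => Nat.zero_le _

/-- A nontrivial constituent of `χ * conj χ` works: otherwise `|χ| ^ 2` would have mean value `1`
on `B`, whereas that mean value is at least `χ 1`. -/
lemma exists_deg_lt_sq_sum_ne_zero (χ : Irr G) (hχ : 2 ≤ χ.deg) (B : Subgroup G)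
    [IsMulCommutative B] : ∃ χ' : Irr G, χ' ≠ 1 ∧ χ'.deg < χ.deg ^ 2 ∧ ∑ b : B, χ' b ≠ 0 := by
  by_contra! hzero
  have hsum : ∑ b : B, χ b * conj (χ b) = Nat.card B := by
    have hexp := (χ.isChar.mul χ.isChar.conj).apply_eq_sum_mult
    rw [sum_congr rfl fun (b : B) _ => hexp b, sum_comm, sum_eq_single 1]
    · simp [χ.mult_mul_conj_one]
    · intro χ' _ hχ'
      rw [← mul_sum]
      rcases Nat.eq_zero_or_pos (mult (fun x => χ x * conj (χ x)) χ') with h | h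
      · rw [h, Nat.cast_zero, zero_mul]
      · rw [hzero χ' hχ' (deg_lt_sq_of_mult_pos hχ' h), mul_zero]
    · simp
  have hnorm : ∑ b : B, ‖χ b‖ ^ 2 = Nat.card B := by
    simp only [Complex.mul_conj'] at hsum
    exact_mod_cast hsum
  have hle : Nat.card B * χ.deg ≤ Nat.card B := by
    exact_mod_cast hnorm ▸ χ.card_mul_deg_le_sum_norm_sq B
  have hdeg : χ.deg ≤ 1 := Nat.le_of_mul_le_mul_left (by rwa [mul_one]) Nat.card_pos
  lia

lemma card_mul_le_of_le_deg_sq (hk : 3 * Nat.card G ≤ p ^ 2 * Nat.card (Irr G)) {m D : ℕ}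
    (hD : ∀ χ : Irr G, χ ≠ 1 → χ.deg < m → D ≤ χ.deg ^ 2) :
    (Nat.card G * (3 * m ^ 2 - p ^ 2) : ℤ) ≤
      p ^ 2 * (m ^ 2 - 1 + #{χ : Irr G | χ ≠ 1 ∧ χ.deg < m} * (m ^ 2 - D)) := by
  set T : Finset (Irr G) := {χ | χ ≠ 1 ∧ χ.deg < m}
  have h1 : (1 : Irr G) ∉ T := by simp [T]
  have hcount := sq_mul_card_add_sum_deg_sq_le (m := m) (F := insert 1 T) fun χ hχ => by
    simp only [T, mem_insert, mem_filter_univ, not_or, not_and, not_lt] at hχ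
    exact hχ.2 hχ.1
  rw [sum_insert h1, card_insert_of_notMem h1, deg_one] at hcount
  have hsum : #T * D ≤ ∑ χ ∈ T, χ.deg ^ 2 := by
    rw [← smul_eq_mul]
    refine card_nsmul_le_sum _ _ _ fun χ hχ => ?_
    obtain ⟨hχ1, hχm⟩ := (mem_filter_univ χ).1 hχ
    exact hD χ hχ1 hχm
  refine card_mul_three_mul_sq_sub_sq_le (k := Nat.card (Irr G)) (mod_cast hk) ?_
  norm_cast
  lia

end Irr

namespace IsSplitCentralizer

variable {e : ℕ} {g : G} {K : Subgroup G}

lemma sum_zpowers_eq_zero_of_centralChar_ne_one {ψ : Irr (centralizerOf g)}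
    (hψ : ψ.centralChar (selfCentral g) ≠ 1) :
    ∑ x, ψ (Subgroup.inclusion (zpowers_le_centralizerOf g) x) = 0 := by
  have hmul (x) : ψ (Subgroup.inclusion (zpowers_le_centralizerOf g)
      (⟨g, Subgroup.mem_zpowers g⟩ * x)) = ψ.centralChar (selfCentral g) *
        ψ (Subgroup.inclusion (zpowers_le_centralizerOf g) x) :=
    ψ.apply_mul_of_mem_center (selfCentral_mem_center g)
      (Subgroup.inclusion (zpowers_le_centralizerOf g) x)
  have hshift := Equiv.sum_comp (Equiv.mulLeft ⟨g, Subgroup.mem_zpowers g⟩) fun x =>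
    ψ (Subgroup.inclusion (zpowers_le_centralizerOf g) x)
  simp only [Equiv.coe_mulLeft, hmul, ← mul_sum] at hshift
  exact (mul_left_eq_self₀.1 hshift).resolve_left hψ

variable {χ : Irr G}

lemma sum_zpowers_eq_zero (hg : IsSplitCentralizer p e g K) (hpe : (e + 1) ^ 2 ≤ p)
    (hχ : χ.IsFaithful) (hd : χ.deg + e < p - 1) : ∑ x : Subgroup.zpowers g, χ x = 0 := by
  have hexp (x : Subgroup.zpowers g) := (χ.isChar.restrict (centralizerOf g)).apply_eq_sum_mult
    (Subgroup.inclusion (zpowers_le_centralizerOf g) x)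
  change ∀ x : Subgroup.zpowers g, χ x = _ at hexp
  simp only [hexp]
  rw [sum_comm]
  refine sum_eq_zero fun ψ _ => ?_
  rw [← mul_sum]
  by_cases hψ : ψ.centralChar (selfCentral g) = 1
  · rw [hg.mult_eq_zero_of_centralChar_eq_one hχ hd hpe hψ, Nat.cast_zero, zero_mul]
  · rw [sum_zpowers_eq_zero_of_centralChar_ne_one hψ, mul_zero]

lemma exists_deg_eq_mul (hg : IsSplitCentralizer p e g K) (hpe : (e + 1) ^ 2 ≤ p)
    (hχ : χ.IsFaithful) (hd : χ.deg + e < p - 1) : ∃ ψ : Irr (centralizerOf g),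
      ψ.centralChar (selfCentral g) ≠ 1 ∧ 0 < mult (res _ χ) ψ ∧ χ.deg = e * ψ.deg := by
  classical
  obtain ⟨ψ, hψ, hχψ⟩ := hg.exists_centralChar_ne_one hχ
  have hzero : ∑ θ : Irr (centralizerOf g) with θ.centralChar (selfCentral g) = 1,
      mult (res _ χ) θ * θ.deg = 0 := sum_eq_zero fun θ hθ => by
    rw [hg.mult_eq_zero_of_centralChar_eq_one hχ hd hpe ((mem_filter_univ θ).1 hθ), zero_mul]
  refine ⟨ψ, hψ, hχψ, ?_⟩
  rw [(χ.isChar.restrict (centralizerOf g)).eq_sum_mult_mul_deg (n := χ.deg) χ.apply_one,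
    hg.sum_eq_sum_orbit_add_sum hd hψ hχψ (fun θ n => n * θ.deg) fun _ => zero_mul _,
    hzero, add_zero, ← hg.card_filter_mem_orbit hψ, ← smul_eq_mul]
  refine sum_eq_card_nsmul fun θ hθ => ?_
  obtain ⟨n, rfl⟩ := (mem_filter_univ θ).1 hθ
  exact (one_mul _).trans (ψ.deg_smul n)

open scoped Classical in
lemma sq_deg_eq (hg : IsSplitCentralizer p e g K) (hpe : (e + 1) ^ 2 ≤ p)
    (hχ : χ.IsFaithful) (hd : χ.deg + e < p - 1) :
    χ.deg ^ 2 = e * ∑ θ : Irr (centralizerOf g) with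
      θ.centralChar (selfCentral g) ≠ 1 ∧ 0 < mult (res _ χ) θ, θ.deg ^ 2 := by
  obtain ⟨ψ, hψ, hχψ, hdeg⟩ := hg.exists_deg_eq_mul hpe hχ hd
  have hiff (θ : Irr (centralizerOf g)) :
      θ.centralChar (selfCentral g) ≠ 1 ∧ 0 < mult (res _ χ) θ ↔
        θ ∈ MulAction.orbit (Subgroup.normalizer (centralizerOf g : Set G)) ψ := by
    refine ⟨fun h => hg.mem_orbit_of_deg_lt hd hψ h.1 hχψ h.2, fun h => ⟨?_, ?_⟩⟩
    · exact hg.centralChar_ne_one_of_mem_orbit hψ h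
    · obtain ⟨n, rfl⟩ := h
      exact (Irr.mult_res_smul n ψ χ).symm ▸ hχψ
  rw [filter_congr fun θ _ => hiff θ, sum_eq_card_nsmul (b := ψ.deg ^ 2) fun θ hθ => by
    obtain ⟨n, rfl⟩ := (mem_filter_univ θ).1 hθ
    exact congrArg (· ^ 2) (ψ.deg_smul n), hg.card_filter_mem_orbit hψ, hdeg, smul_eq_mul]
  ring

lemma sum_sq_deg_le (hg : IsSplitCentralizer p e g K) (hpe : (e + 1) ^ 2 ≤ p) {T : Finset (Irr G)}
    (hT : ∀ χ ∈ T, χ.IsFaithful ∧ χ.deg + e < p - 1) :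
    ∑ χ ∈ T, χ.deg ^ 2 ≤ e * Nat.card (centralizerOf g) := by
  rw [sum_congr rfl fun χ hχ => hg.sq_deg_eq hpe (hT χ hχ).1 (hT χ hχ).2, ← mul_sum,
    ← sum_biUnion, ← Irr.sum_deg_sq]
  · exact Nat.mul_le_mul_left _ (sum_le_sum_of_subset (subset_univ _))
  · intro χ hχ χ' hχ' hne
    refine disjoint_left.2 fun θ hθ hθ' => hne ?_
    rw [mem_filter_univ] at hθ hθ'
    exact hg.eq_of_mult_pos (hT χ hχ).2 (hT χ' hχ').2 hθ.1 hθ.2 hθ'.2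

end IsSplitCentralizer

end LowDegree

section SimpleGroups

variable {G : Type} [Group G] [Finite G] {p : ℕ}

namespace IsSplitCentralizer

variable {e : ℕ} {g : G} {K : Subgroup G}

lemma prime_le_card (hg : IsSplitCentralizer p e g K) : p ≤ Nat.card (centralizerOf g) :=
  Nat.le_of_dvd Nat.card_pos
    (hg.orderOf_eq ▸ Subgroup.orderOf_dvd_natCard _ (selfCentral g).2)

lemma succ_sq_le [IsSimpleGroup G] (hg : IsSplitCentralizer p e g K)
    (hG : ¬ IsMulCommutative G) (hd : p ∣ Nat.card G)
    (hk : 3 * Nat.card G ≤ p ^ 2 * Nat.card (Irr G)) (he : 2 ≤ e)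
    (hN : (p + 1) * e * Nat.card (centralizerOf g) ≤ Nat.card G) : (e + 1) ^ 2 ≤ p := by
  obtain ⟨χ, hχ, hχd⟩ := Irr.exists_isFaithful_deg_lt hG hg.prime hd hk
  have h2e := hg.two_mul_le hχ hχd
  have hcard := hg.card_mul_le (T := {χ : Irr G | χ ≠ 1 ∧ χ.deg < p - 1}) fun χ hχ => by
    rw [mem_filter_univ] at hχ
    exact ⟨Irr.isFaithful_of_ne_one hχ.1, hχ.2⟩
  have hcount := Irr.card_mul_le_of_le_deg_sq hk (m := p - 1) (D := 4) fun χ hχ _ =>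
    Nat.pow_le_pow_left ((Irr.isFaithful_of_ne_one hχ).two_le_deg hG) 2
  have hp8 : p ≠ 8 := by
    rintro rfl
    exact absurd hg.prime (by norm_num)
  have hp1 := hg.prime.one_le
  zify [hp1] at he h2e hcard hcount hp8 hN ⊢
  exact succ_sq_le_of_card_mul_le he h2e hp8 (mod_cast hg.prime_le_card) hcard hN hcount

lemma exists_ne_one_deg_lt (hg : IsSplitCentralizer p e g K)
    (hk : 3 * Nat.card G ≤ p ^ 2 * Nat.card (Irr G)) (he : 2 ≤ e) (hpe : (e + 1) ^ 2 ≤ p)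
    (hN : (p + 1) * e * Nat.card (centralizerOf g) ≤ Nat.card G) :
    ∃ χ : Irr G, χ ≠ 1 ∧ χ.deg < p - 1 - e := by
  by_contra! hlarge
  have hempty : ({χ : Irr G | χ ≠ 1 ∧ χ.deg < p - 1 - e} : Finset _) = ∅ :=
    filter_eq_empty_iff.2 fun χ _ hχ => (hlarge χ hχ.1).not_gt hχ.2
  have hcount := Irr.card_mul_le_of_le_deg_sq hk (m := p - 1 - e) (D := 0) fun _ _ _ =>
    Nat.zero_le _
  rw [hempty, card_empty, Nat.cast_zero, zero_mul, add_zero] at hcount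
  have hp1 := hg.prime.one_le
  have hep : e ≤ p - 1 := Nat.le_sub_of_add_le (by nlinarith)
  zify [hp1, hep] at he hpe hN hcount
  exact not_card_mul_le he hpe (mod_cast hg.prime_le_card) hN hcount

lemma exists_ne_one_sq_deg_le [IsSimpleGroup G] (hg : IsSplitCentralizer p e g K)
    (hk : 3 * Nat.card G ≤ p ^ 2 * Nat.card (Irr G)) (he : 2 ≤ e) (hpe : (e + 1) ^ 2 ≤ p)
    (hN : (p + 1) * e * Nat.card (centralizerOf g) ≤ Nat.card G) :
    ∃ χ : Irr G, χ ≠ 1 ∧ χ.deg ^ 2 ≤ p - 1 - e := by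
  set T : Finset (Irr G) := {χ | χ ≠ 1 ∧ χ.deg < p - 1 - e}
  have hmem {χ : Irr G} : χ ∈ T ↔ χ ≠ 1 ∧ χ.deg < p - 1 - e := mem_filter_univ χ
  have hT (χ : Irr G) (hχ : χ ∈ T) : χ.IsFaithful ∧ χ.deg + e < p - 1 :=
    ⟨Irr.isFaithful_of_ne_one (hmem.1 hχ).1, Nat.add_lt_of_lt_sub (hmem.1 hχ).2⟩
  obtain ⟨φ, hφ⟩ := hg.exists_ne_one_deg_lt hk he hpe hN
  obtain ⟨χ, hχT, hmin⟩ := T.exists_min_image Irr.deg ⟨φ, hmem.2 hφ⟩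
  obtain ⟨ψ, -, -, hdeg⟩ := hg.exists_deg_eq_mul hpe (hT χ hχT).1 (hT χ hχT).2
  have hsq (θ : Irr G) (hθ : θ ∈ T) : χ.deg ^ 2 ≤ θ.deg ^ 2 :=
    Nat.pow_le_pow_left (hmin θ hθ) 2
  have hD : #T * χ.deg ^ 2 ≤ e * Nat.card (centralizerOf g) :=
    (card_nsmul_le_sum T _ _ hsq).trans (hg.sum_sq_deg_le hpe hT)
  have hcount : (Nat.card G * (3 * (p - 1 - e : ℕ) ^ 2 - p ^ 2) : ℤ) ≤
      p ^ 2 * ((p - 1 - e : ℕ) ^ 2 - 1 + #T * ((p - 1 - e : ℕ) ^ 2 - (χ.deg ^ 2 : ℕ))) :=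
    Irr.card_mul_le_of_le_deg_sq hk fun θ h1 hlt => hsq θ (hmem.2 ⟨h1, hlt⟩)
  have hlt := (hmem.1 hχT).2.le
  have hp1 := hg.prime.one_le
  have hep : e ≤ p - 1 := Nat.le_sub_of_add_le (by nlinarith)
  refine ⟨χ, (hmem.1 hχT).1, ?_⟩
  rw [hdeg] at hD hcount hlt ⊢
  zify [hp1, hep] at he hpe hN hD hcount hlt ⊢
  exact sq_le_of_card_mul_le he hpe (mod_cast hg.prime_le_card) rfl (Nat.cast_nonneg _)
    (mod_cast ψ.deg_pos) hlt hD hN hcount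

/-- The square of the least degree is at most `p - 1 - e`, so some constituent of `χ * conj χ`
has nonzero sum over `⟨g⟩`, although its degree is too small for that. -/
lemma lt_two [IsSimpleGroup G] (hg : IsSplitCentralizer p e g K)
    (hG : ¬ IsMulCommutative G) (hd : p ∣ Nat.card G)
    (hk : 3 * Nat.card G ≤ p ^ 2 * Nat.card (Irr G))
    (hN : (p + 1) * e * Nat.card (centralizerOf g) ≤ Nat.card G) : e < 2 := by
  by_contra! he
  have hpe := hg.succ_sq_le hG hd hk he hN
  obtain ⟨χ, hχ, hdeg⟩ := hg.exists_ne_one_sq_deg_le hk he hpe hN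
  obtain ⟨χ', hχ', hlt, hsum⟩ :=
    χ.exists_deg_lt_sq_sum_ne_zero ((Irr.isFaithful_of_ne_one hχ).two_le_deg hG)
      (Subgroup.zpowers g)
  exact hsum (hg.sum_zpowers_eq_zero hpe (Irr.isFaithful_of_ne_one hχ') (by lia))

end IsSplitCentralizer

lemma exists_ne_top_not_isPSolvableSubgroup [IsSimpleGroup G] (hG : ¬ IsMulCommutative G)
    (hp : p.Prime) (hd : p ∣ Nat.card G) (hk : 3 * Nat.card G ≤ p ^ 2 * Nat.card (Irr G)) :
    ∃ H : Subgroup G, H ≠ ⊤ ∧ ¬ IsPSolvableSubgroup p H := by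
  by_contra! hH
  have : Fact p.Prime := ⟨hp⟩
  have hC (h : G) (hh : h ≠ 1) : IsPSolvableSubgroup p (centralizerOf h) := by
    refine hH _ fun htop => hh (Subgroup.mem_bot.1 ?_)
    rw [← center_eq_bot hG]
    exact Subgroup.centralizer_eq_top_iff_subset.1 htop rfl
  obtain ⟨P⟩ : Nonempty (Sylow p G) := inferInstance
  obtain ⟨χ, hχ, hdeg⟩ := Irr.exists_isFaithful_deg_lt hG hp hd hk
  have hP : Nat.card P = p := hχ.card_sylow_eq_prime hp hdeg hd hk hC (not_normal_sylow hG hd P)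
  obtain ⟨e, g, K, hg, he, hN⟩ := exists_isSplitCentralizer_two_le hG hP
  exact he.not_gt (hg.lt_two hG hd hk hN)

end SimpleGroups

section CommutingProbability

variable {G H : Type*} [Group G] [Finite G] [Group H]

lemma commProb_le_of_card_le [Finite H] {n : ℕ} (hcard : Nat.card G = n * Nat.card H)
    (hle : Nat.card {z : G × G // Commute z.1 z.2} ≤
      n ^ 2 * Nat.card {z : H × H // Commute z.1 z.2}) : commProb G ≤ commProb H := by
  have hG : 0 < Nat.card G := Nat.card_pos
  have hH : 0 < Nat.card H := Nat.card_pos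
  rw [commProb_def, commProb_def, div_le_div_iff₀ (by positivity) (by positivity), hcard]
  norm_cast
  calc _ ≤ _ := Nat.mul_le_mul_right _ hle
    _ = _ := by ring

lemma card_commute_le (H : Subgroup G) (x : G) :
    Nat.card {y : G // Commute x y} ≤ H.index * Nat.card {y : H // Commute x y} := by
  have hmem (y : G) : Commute x y ↔ y ∈ centralizerOf x :=
    Commute.symm_iff.trans Subgroup.mem_centralizer_singleton_iff.symm
  have hG : Nat.card {y : G // Commute x y} = Nat.card (centralizerOf x) :=
    Nat.card_congr (Equiv.subtypeEquivRight hmem)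
  have hH : Nat.card {y : H // Commute x y} = Nat.card (H ⊓ centralizerOf x : Subgroup G) :=
    Nat.card_congr ((Equiv.subtypeEquivRight fun y : H => hmem y).trans
      (Equiv.subtypeSubtypeEquivSubtypeInter _ _))
  have hmul := Subgroup.relIndex_mul_relIndex ⊥ (H ⊓ centralizerOf x) _ bot_le inf_le_right
  rw [Subgroup.relIndex_bot_left, Subgroup.relIndex_bot_left, Subgroup.inf_relIndex_right] at hmul
  rw [hG, hH, ← hmul, mul_comm]
  refine Nat.mul_le_mul_right _ ?_
  rw [← H.relIndex_top_right]
  exact Subgroup.relIndex_le_of_le_right le_top Subgroup.index_ne_zero_of_finite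

lemma card_prod_commute_le {ι : Type*} [Finite ι] (f : ι → G) (H : Subgroup G) :
    Nat.card {z : ι × G // Commute (f z.1) z.2} ≤
      H.index * Nat.card {z : ι × H // Commute (f z.1) z.2} := by
  have hG := Nat.card_congr (Equiv.subtypeProdEquivSigmaSubtype fun i (y : G) => Commute (f i) y)
  have hH := Nat.card_congr (Equiv.subtypeProdEquivSigmaSubtype fun i (y : H) => Commute (f i) y)
  rw [hG, hH, Nat.card_sigma, Nat.card_sigma, mul_sum]
  exact sum_le_sum fun i _ => card_commute_le H (f i)

lemma commProb_le_commProb_subgroup (H : Subgroup G) : commProb G ≤ commProb H := by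
  have hswap : Nat.card {z : G × H // Commute z.1 (z.2 : G)} =
      Nat.card {z : H × G // Commute (z.1 : G) z.2} :=
    Nat.card_congr ((Equiv.prodComm G H).subtypeEquiv fun _ => Commute.symm_iff)
  have hcoe : Nat.card {z : H × H // Commute (z.1 : G) z.2} =
      Nat.card {z : H × H // Commute z.1 z.2} :=
    Nat.card_congr (Equiv.subtypeEquivRight fun _ => by simp [commute_iff_eq, Subtype.ext_iff])
  have hle : Nat.card {z : G × G // Commute z.1 z.2} ≤
      H.index * (H.index * Nat.card {z : H × H // Commute z.1 z.2}) := by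
    calc _ ≤ H.index * Nat.card {z : G × H // Commute z.1 (z.2 : G)} := card_prod_commute_le id H
      _ ≤ _ := Nat.mul_le_mul_left _ (by
        rw [hswap, ← hcoe]
        exact card_prod_commute_le ((↑) : H → G) H)
  exact commProb_le_of_card_le (H.card_mul_index.symm.trans (mul_comm _ _)) (by
    rwa [sq, mul_assoc])

lemma commProb_le_of_surjective {f : G →* H} (hf : Function.Surjective f) :
    commProb G ≤ commProb H := by
  have : Finite H := .of_surjective f hf
  choose s hs using hf
  have hcard : Nat.card G = Nat.card f.ker * Nat.card H := by
    rw [← f.ker.card_mul_index, Subgroup.index_ker, MonoidHom.range_eq_top.2 fun y => ⟨s y, hs y⟩,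
      Subgroup.card_top]
  have hker (x : G) : x * (s (f x))⁻¹ ∈ f.ker := by simp [hs, MonoidHom.mem_ker]
  have hle : Nat.card {z : G × G // Commute z.1 z.2} ≤
      Nat.card ((f.ker × f.ker) × {z : H × H // Commute z.1 z.2}) := by
    refine Nat.card_le_card_of_injective (fun z =>
      ((⟨_, hker z.1.1⟩, ⟨_, hker z.1.2⟩), ⟨(f z.1.1, f z.1.2), z.2.map f⟩)) ?_
    rintro ⟨⟨x, y⟩, _⟩ ⟨⟨x', y'⟩, _⟩ h
    simp only [Prod.mk.injEq, Subtype.mk.injEq] at h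
    obtain ⟨⟨hx, hy⟩, hfx, hfy⟩ := h
    rw [hfx] at hx
    rw [hfy] at hy
    exact Subtype.ext (Prod.ext (mul_right_cancel hx) (mul_right_cancel hy))
  rw [Nat.card_prod, Nat.card_prod, ← sq] at hle
  exact commProb_le_of_card_le hcard hle

lemma charDegSum_div_card_sq_le {G : Type} [Group G] [Finite G] :
    (charDegSum G / Nat.card G) ^ 2 ≤ (commProb G : ℝ) := by
  have hpos : (0 : ℝ) < Nat.card G := by exact_mod_cast Nat.card_pos
  rw [commProb_def', div_pow, Rat.cast_div, Rat.cast_natCast, Rat.cast_natCast,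
    div_le_div_iff₀ (by positivity) hpos, sq (Nat.card G : ℝ), ← mul_assoc]
  exact mul_le_mul_of_nonneg_right charDegSum_sq_le hpos.le

end CommutingProbability

section PSolvable

variable {p : ℕ}

namespace IsPSolvableSubgroup

variable {G H : Type*} [Group G] [Group H]

lemma map {f : G →* H} (hf : Function.Injective f) {L : Subgroup G}
    (hL : IsPSolvableSubgroup p L) : IsPSolvableSubgroup p (L.map f) := by
  induction hL with
  | bot => exact Subgroup.map_bot f ▸ bot
  | step K L le le_normalizer index _ ih =>
    refine step (K.map f) (L.map f) (Subgroup.map_mono le)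
      ((Subgroup.map_mono le_normalizer).trans (Subgroup.le_normalizer_map f)) ?_ ih
    rwa [Subgroup.relIndex_map_map_of_injective _ _ hf]

lemma comap {f : G →* H} (hf : Function.Surjective f) (hker : IsPSolvableSubgroup p f.ker)
    {L : Subgroup H} (hL : IsPSolvableSubgroup p L) : IsPSolvableSubgroup p (L.comap f) := by
  induction hL with
  | bot => exact hker
  | step K L le le_normalizer index _ ih =>
    refine step (K.comap f) (L.comap f) (Subgroup.comap_mono le)
      ((Subgroup.comap_mono le_normalizer).trans (Subgroup.le_normalizer_comap f)) ?_ ih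
    rwa [Subgroup.relIndex_comap, Subgroup.map_comap_eq_self_of_surjective hf]

lemma top_of_quotient {N : Subgroup G} [N.Normal] (hN : IsPSolvableSubgroup p N)
    (hquot : IsPSolvableSubgroup p (⊤ : Subgroup (G ⧸ N))) :
    IsPSolvableSubgroup p (⊤ : Subgroup G) := by
  rw [← QuotientGroup.ker_mk' N] at hN
  exact hN.comap (QuotientGroup.mk'_surjective N) hquot

lemma top_of_card (h : (∃ m, Nat.card G = p ^ m) ∨ (Nat.card G).Coprime p) :
    IsPSolvableSubgroup p (⊤ : Subgroup G) :=
  step ⊥ ⊤ bot_le (Subgroup.normalizer_eq_top (H := (⊥ : Subgroup G))).ge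
    (by rwa [Subgroup.relIndex_bot_left, Subgroup.card_top]) bot

end IsPSolvableSubgroup

lemma isPSolvableSubgroup_top_of_isSimpleGroup {G : Type} [Group G] [Finite G] [IsSimpleGroup G]
    (hp : p.Prime) (h : 3 / (p : ℚ) ^ 2 ≤ commProb G)
    (hsub : ∀ H : Subgroup G, H ≠ ⊤ → IsPSolvableSubgroup p H) :
    IsPSolvableSubgroup p (⊤ : Subgroup G) := by
  by_cases hd : p ∣ Nat.card G
  · suffices hcomm : IsMulCommutative G by
      let _ : CommGroup G := { mul_comm := hcomm.is_comm.comm }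
      have hcard : p = Nat.card G :=
        (Nat.prime_dvd_prime_iff_eq hp IsSimpleGroup.prime_card).1 hd
      exact .top_of_card (.inl ⟨1, hcard ▸ (pow_one p).symm⟩)
    by_contra hG
    have hk : 3 * Nat.card G ≤ p ^ 2 * Nat.card (Irr G) := by
      have hppos := hp.pos
      have hpos : 0 < Nat.card G := Nat.card_pos
      rw [commProb_def', ← Irr.card_eq_card_conjClasses,
        div_le_div_iff₀ (by positivity) (by positivity)] at h
      rw [mul_comm (p ^ 2)]
      exact_mod_cast h
    obtain ⟨H, hH, hHp⟩ := exists_ne_top_not_isPSolvableSubgroup hG hp hd hk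
    exact hHp (hsub H hH)
  · exact .top_of_card (.inr ((hp.coprime_iff_not_dvd.2 hd).symm))

lemma isPSolvableSubgroup_top {G : Type} [Group G] [Finite G] (hp : p.Prime)
    (h : 3 / (p : ℚ) ^ 2 ≤ commProb G) : IsPSolvableSubgroup p (⊤ : Subgroup G) := by
  induction hn : Nat.card G using Nat.strong_induction_on generalizing G with
  | _ n ih =>
    subst hn
    have hsub (H : Subgroup G) (hH : H ≠ ⊤) : IsPSolvableSubgroup p H := by
      have hlt : Nat.card H < Nat.card G := H.card_le_card_group.lt_of_ne
        fun hcard => hH (H.eq_top_of_card_eq hcard)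
      have htop := ih _ hlt (h.trans (commProb_le_commProb_subgroup H)) rfl
      simpa [← MonoidHom.range_eq_map] using htop.map H.subtype_injective
    rcases subsingleton_or_nontrivial G with _ | _
    · exact .top_of_card (.inl ⟨0, Nat.card_unique.trans (pow_zero p).symm⟩)
    by_cases hG : IsSimpleGroup G
    · exact isPSolvableSubgroup_top_of_isSimpleGroup hp h hsub
    obtain ⟨N, hN, hbot, htop⟩ : ∃ N : Subgroup G, N.Normal ∧ N ≠ ⊥ ∧ N ≠ ⊤ := by
      by_contra! hcon
      exact hG ⟨fun N hN => or_iff_not_imp_left.2 (hcon N hN)⟩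
    have hlt : Nat.card (G ⧸ N) < Nat.card G := by
      rw [N.card_eq_card_quotient_mul_card_subgroup]
      exact lt_mul_of_one_lt_right Nat.card_pos (N.one_lt_card_iff_ne_bot.2 hbot)
    exact (hsub N htop).top_of_quotient
      (ih _ hlt (h.trans (commProb_le_of_surjective (QuotientGroup.mk'_surjective N))) rfl)

/-- The relation between consecutive terms of the series in the definition of `IsPSolvable`. -/
def pFactorRel (p : ℕ) (G : Type*) [Group G] : SetRel (Subgroup G) (Subgroup G) :=
  {x | x.1 ≤ x.2 ∧ ∃ _ : (x.1.subgroupOf x.2).Normal,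
    IsPGroup p (x.2 ⧸ x.1.subgroupOf x.2) ∨ (Nat.card (x.2 ⧸ x.1.subgroupOf x.2)).Coprime p}

namespace IsPSolvableSubgroup

variable {G : Type*} [Group G]

lemma exists_relSeries {L : Subgroup G} (hL : IsPSolvableSubgroup p L) :
    ∃ s : RelSeries (pFactorRel p G), s.head = ⊥ ∧ s.last = L := by
  induction hL with
  | bot => exact ⟨RelSeries.singleton _ ⊥, rfl, rfl⟩
  | step K L le le_normalizer index _ ih =>
    obtain ⟨s, hhead, rfl⟩ := ih
    have hnormal := (Subgroup.normal_subgroupOf_iff_le_normalizer le).2 le_normalizer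
    have hrel : (s.last, L) ∈ pFactorRel p G :=
      ⟨le, hnormal, index.imp_left fun ⟨_, hm⟩ => IsPGroup.of_card hm⟩
    exact ⟨s.snoc L hrel, by rw [RelSeries.head_snoc, hhead], s.last_snoc L hrel⟩

lemma isPSolvable (h : IsPSolvableSubgroup p (⊤ : Subgroup G)) : IsPSolvable p G := by
  obtain ⟨s, hhead, hlast⟩ := h.exists_relSeries
  exact ⟨s.length, s, hhead, hlast, fun i => (s.step i).1, fun i => (s.step i).2⟩

end IsPSolvableSubgroup

end PSolvable

end CharacterDegrees

theorem degree_sum_p_solvable_general {G : Type*} [Group G] [Finite G] {p : ℕ} (hp : p.Prime)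
    (h : 3 / (p : ℚ) ^ 2 ≤ commProb G) : IsPSolvable p G := by
  obtain ⟨G', _, _, ⟨f⟩⟩ := Finite.exists_type_univ_nonempty_mulEquiv G
  have htop := isPSolvableSubgroup_top hp
    (h.trans (commProb_le_of_surjective (f := f.toMonoidHom) f.surjective))
  have hmap := htop.map (f := f.symm.toMonoidHom) f.symm.injective
  rw [Subgroup.map_top_of_surjective _ f.symm.surjective] at hmap
  exact hmap.isPSolvable

/-- If `T(G) ≥ (√3/p)·|G|`, then the finite group `G` is `p`-solvable. -/
theorem degree_sum_p_solvable (G : Type) [Group G] [Fintype G] (p : ℕ) (hp : p.Prime)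
    (h : charDegSum G ≥ Real.sqrt 3 / (p : ℝ) * Nat.card G) :
    IsPSolvable p G := by
  refine degree_sum_p_solvable_general hp (Rat.cast_le (K := ℝ).1 ?_)
  have hpos : (0 : ℝ) < Nat.card G := by exact_mod_cast Nat.card_pos
  have hsq := pow_le_pow_left₀ (by positivity) ((le_div_iff₀ hpos).2 h) 2
  rw [div_pow, Real.sq_sqrt zero_le_three] at hsq
  push_cast
  exact hsq.trans charDegSum_div_card_sq_le
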